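/- arXiv:1706.06036 — 2 statements merged into one kernel-verified Lean document; each statement's English description precedes it below -/
import Mathlib

section
/- Let Γ be a distance-regular graph with diameter D ≥ 3 and valency k satisfying 3 ≤ k < 3(a_1+1), and suppose Γ contains a 3-claw but no 4-claws. Then b_2 ≤ a_1 + 1, b_2 ≤ a_3 + 1, and b_2 ≤ k/(−θ_D), where θ_D denotes the smallest eigenvalue of the adjacency matrix of Γ. -/
/-!
All three bounds follow from one fact: for some `x, y` at distance `2`, the set
`B = Γ(y) ∩ Γ₃(x)`, which has `b₂` elements, is a clique (`exists_clique_sphere`). Indeed, for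
`w ∈ B` the rest of `B` lies in `Γ(w) ∩ Γ(y)`, of size `a₁`, and in `Γ(w) ∩ Γ₃(x)`, of size `a₃`;
and `B ∪ {y}` is a clique of size `b₂ + 1`, to which the Delsarte bound `|S| ≤ 1 + k/(-θ)` applies
(`IsDRG.delsarte`).

If no such `B` is a clique, then every set `Γ(x) ∩ Γ(y)` with `dist x y = 2` is a clique: two
nonadjacent vertices of it and two nonadjacent vertices of `B` would form a 4-claw at `y`. Let `y`
be the centre of a 3-claw and let `H` be the complement of the graph induced on `Γ(y)`. Then `H` is
regular of degree `d = b₁`, any two `H`-adjacent vertices have the same number `e` of common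
neighbours, `H` has a triangle, `H` contains no `K₄` (no 4-claws), and any two disjoint edges of
`H` are joined by an edge (`Γ(u) ∩ Γ(v)` is a clique). These are the hypotheses `LocalCond`, and
`LocalCond.two_mul_card_le` derives `2k ≤ 3b₁`, which contradicts `k < 3(a₁ + 1)`.

That inequality is the heart of the matter. For a triangle `z, u, v` of `H`, exactly `d - 2e`
neighbours of `z` are adjacent to neither `u` nor `v`.

If `d = 2e`, then every vertex adjacent to one vertex of a triangle is adjacent to a second one;
hence every vertex is adjacent to an end of each edge, and `|H| = 3e`.

If `d > 2e`, there is a vertex `z` off an edge `uv`. Neighbourhoods contain pentagons, and counting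
around a pentagon shows that a neighbour `w` of `z, u, v` has exactly `e/2` common neighbours with
`z` and `v`, and with `z` and `u` (`common_half`). If the non-neighbours of `u` and those of `v`
in `N(z)` are both independent, there are `α, β ∈ N(z) ∩ N(u) ∩ N(v)` with
`N(α) ∩ N(z) ∩ N(v) ⊊ N(β) ∩ N(z) ∩ N(v)`, contradicting these counts (`no_tripartition`). In the
remaining case some vertex is off a triangle, and then the independence holds for that vertex and
any edge of that triangle (`no_triangle_off`).
-/

open SimpleGraph Finset

/-- `G` is a distance-regular graph with diameter `D` and intersection numbers
`b i` (number of neighbours of `y` at distance `i+1` from `x` when `dist x y = i`) and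
`c i` (number of neighbours of `y` at distance `i-1` from `x` when `dist x y = i`). -/
def IsDRG {V : Type*} [Fintype V] (G : SimpleGraph V) (D : ℕ) (b c : ℕ → ℕ) : Prop :=
  G.Connected ∧
  (∃ x y : V, G.dist x y = D) ∧
  (∀ x y : V, G.dist x y ≤ D) ∧
  c 0 = 0 ∧ c 1 = 1 ∧ b D = 0 ∧
  (∀ i ≤ D, ∀ x y : V, G.dist x y = i →
    {z : V | G.Adj y z ∧ G.dist x z = i - 1}.ncard = c i ∧
    {z : V | G.Adj y z ∧ G.dist x z = i + 1}.ncard = b i)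

/-- `G` contains a `t`-claw: a vertex together with `t` pairwise nonadjacent neighbours
(an induced `K_{1,t}`). -/
def HasClaw {V : Type*} (G : SimpleGraph V) (t : ℕ) : Prop :=
  ∃ (x : V) (s : Finset V), s.card = t ∧ (∀ y ∈ s, G.Adj x y) ∧
    (s : Set V).Pairwise fun y z => ¬ G.Adj y z

/-- `θ` is an eigenvalue of the (real) adjacency matrix of `G`. -/
def IsAdjEigenvalue {V : Type*} [Fintype V] (G : SimpleGraph V) [DecidableRel G.Adj]
    (θ : ℝ) : Prop :=
  ∃ v : V → ℝ, v ≠ 0 ∧ (G.adjMatrix ℝ).mulVec v = θ • v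

/-- `G` contains an induced quadrangle: vertices `x, z₁, y, z₂` with
`dist x y = dist z₁ z₂ = 2` inducing a 4-cycle. -/
def HasQuadrangle {V : Type*} (G : SimpleGraph V) : Prop :=
  ∃ x z₁ y z₂ : V, G.dist x y = 2 ∧ G.dist z₁ z₂ = 2 ∧
    G.Adj x z₁ ∧ G.Adj z₁ y ∧ G.Adj y z₂ ∧ G.Adj z₂ x

/-- The diameter-3 intersection array `{β₀,β₁,β₂; γ₁,γ₂,γ₃}`. -/
def arr3 (b c : ℕ → ℕ) (β₀ β₁ β₂ γ₁ γ₂ γ₃ : ℕ) : Prop :=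
  b 0 = β₀ ∧ b 1 = β₁ ∧ b 2 = β₂ ∧ c 1 = γ₁ ∧ c 2 = γ₂ ∧ c 3 = γ₃

/-! ### Graphs without `K₄` and `2K₂` that are regular and edge-regular -/

/-- The properties of the complement `H` of a local graph that are used: `H` is `d`-regular, the
ends of every edge have exactly `e > 0` common neighbours, there is no `K₄`, and there is no induced
`2K₂`. In `no2K2` the edges `pq` and `rs` need not be disjoint, since for edges sharing a vertex the
conclusion is automatic. -/
structure LocalCond {W : Type*} [Fintype W] [DecidableEq W] (H : SimpleGraph W)
    [DecidableRel H.Adj] (d e : ℕ) : Prop where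
  deg : ∀ v, (H.neighborFinset v).card = d
  edge : ∀ u v, H.Adj u v → (H.neighborFinset u ∩ H.neighborFinset v).card = e
  e_pos : 0 < e
  noK4 : ∀ p q r s, H.Adj p q → H.Adj p r → H.Adj p s → H.Adj q r → H.Adj q s → ¬ H.Adj r s
  no2K2 : ∀ p q r s, H.Adj p q → H.Adj r s →
    H.Adj p r ∨ H.Adj p s ∨ H.Adj q r ∨ H.Adj q s

namespace LocalCond

variable {W : Type*} [Fintype W] [DecidableEq W] {H : SimpleGraph W} [DecidableRel H.Adj] {d e : ℕ}

/-- The two sets `N(z) ∩ N(u)` and `N(z) ∩ N(v)` are disjoint as there is no `K₄`. -/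
theorem card_off_add (h : LocalCond H d e) {z u v : W} (hzu : H.Adj z u) (hzv : H.Adj z v)
    (huv : H.Adj u v) :
    (H.neighborFinset z \ (H.neighborFinset u ∪ H.neighborFinset v)).card + 2 * e = d := by
  have h1 := card_sdiff_add_card_inter (H.neighborFinset z)
    (H.neighborFinset u ∪ H.neighborFinset v)
  rw [inter_union_distrib_left, card_union_of_disjoint, h.edge z u hzu, h.edge z v hzv,
    h.deg] at h1
  · omega
  · rw [Finset.disjoint_left]
    intro x hx hx'
    simp only [mem_inter, mem_neighborFinset] at hx hx'
    exact h.noK4 z u v x hzu hzv hx.1 huv hx.2 hx'.2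

theorem dominated_of_eq (h : LocalCond H d e) (hde : d = 2 * e) {z u v s : W} (hzu : H.Adj z u)
    (hzv : H.Adj z v) (huv : H.Adj u v) (hs : H.Adj s z) : H.Adj s u ∨ H.Adj s v := by
  have h1 := h.card_off_add hzu hzv huv
  have h2 : (H.neighborFinset z \ (H.neighborFinset u ∪ H.neighborFinset v)).card = 0 := by omega
  rw [card_eq_zero] at h2
  by_contra hc
  have : s ∈ H.neighborFinset z \ (H.neighborFinset u ∪ H.neighborFinset v) := by
    simp only [mem_sdiff, mem_union, mem_neighborFinset, H.adj_comm u, H.adj_comm v]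
    exact ⟨hs.symm, hc⟩
  simp [h2] at this

/-- When `d = 2e`, every vertex is adjacent to `u` or to `v`, which leaves `2d - e = 3e` vertices. -/
theorem card_of_eq (h : LocalCond H d e) (hde : d = 2 * e) {z u v : W} (hzu : H.Adj z u)
    (hzv : H.Adj z v) (huv : H.Adj u v) : Fintype.card W ≤ 3 * e := by
  -- A neighbour `r` of a vertex `s` off the edge `uv` cannot be adjacent to `u`: it would form a
  -- triangle with `u` and one of `v`, `z`, and `s` misses that triangle apart from `r`.
  have key : ∀ {u v : W}, H.Adj z u → H.Adj z v → H.Adj u v → ∀ s r, ¬ H.Adj s u →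
      ¬ H.Adj s v → H.Adj s r → ¬ H.Adj r u := by
    intro u v hzu hzv huv s r hsu hsv hsr hru
    have hsz : ¬ H.Adj s z := fun hsz => by
      rcases h.dominated_of_eq hde hzu hzv huv hsz with h1 | h1 <;> contradiction
    rcases h.dominated_of_eq hde huv hzu.symm hzv.symm hru with hrv | hrz
    · rcases h.dominated_of_eq hde hru hrv huv hsr with h1 | h1 <;> contradiction
    · rcases h.dominated_of_eq hde hru hrz hzu.symm hsr with h1 | h1 <;> contradiction
  have hcov : (univ : Finset W) ⊆ H.neighborFinset u ∪ H.neighborFinset v := by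
    intro s _
    by_contra hs
    simp only [mem_union, mem_neighborFinset, H.adj_comm u, H.adj_comm v, not_or] at hs
    have hne : (H.neighborFinset s).Nonempty := by
      rw [← card_pos, h.deg]; have := h.e_pos; omega
    obtain ⟨r, hr⟩ := hne
    rw [mem_neighborFinset] at hr
    have n1 := key hzu hzv huv s r hs.1 hs.2 hr
    have n2 := key hzv hzu huv.symm s r hs.2 hs.1 hr
    rcases h.no2K2 s r u v hr huv with h1 | h1 | h1 | h1 <;> tauto
  have h1 := card_le_card hcov
  have h2 := card_union_add_card_inter (H.neighborFinset u) (H.neighborFinset v)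
  rw [h.edge u v huv, h.deg, h.deg] at h2
  rw [card_univ] at h1
  omega

theorem exists_off (h : LocalCond H d e) (hde : d ≠ 2 * e) {z u v : W} (hzu : H.Adj z u)
    (hzv : H.Adj z v) (huv : H.Adj u v) : ∃ s, H.Adj s z ∧ ¬ H.Adj s u ∧ ¬ H.Adj s v := by
  have h1 := h.card_off_add hzu hzv huv
  have h2 : (H.neighborFinset z \ (H.neighborFinset u ∪ H.neighborFinset v)).Nonempty := by
    rw [← card_pos]; omega
  obtain ⟨s, hs⟩ := h2
  simp only [mem_sdiff, mem_union, mem_neighborFinset, H.adj_comm u, H.adj_comm v, not_or] at hs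
  exact ⟨s, hs.1.symm, hs.2⟩

/-- In the graph induced on `N(w)`, a vertex `z` off the edge `uv` has a common neighbour with `u`
(and by symmetry one with `v`): otherwise its `e` neighbours are neighbours of `v` other than `u`.
Thus `z` and `uv` lie on a pentagon inside `N(w)`. -/
theorem exists_link (h : LocalCond H d e) {w u v z : W} (hwu : H.Adj w u) (hwv : H.Adj w v)
    (huv : H.Adj u v) (hzw : H.Adj z w) (hzu : ¬ H.Adj z u) (hzv : ¬ H.Adj z v) :
    ∃ a, H.Adj a w ∧ H.Adj a z ∧ H.Adj a u := by
  by_contra! hc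
  have hsub : H.neighborFinset w ∩ H.neighborFinset z ⊆
      (H.neighborFinset w ∩ H.neighborFinset v).erase u := by
    intro r hr
    simp only [mem_inter, mem_neighborFinset, mem_erase] at hr ⊢
    have hru := hc r hr.1.symm hr.2.symm
    refine ⟨?_, hr.1, ?_⟩
    · rintro rfl; exact hzu hr.2
    · rcases h.no2K2 z r u v hr.2 huv with h1 | h1 | h1 | h1
      · contradiction
      · contradiction
      · contradiction
      · exact h1.symm
  have h1 := card_le_card hsub
  rw [card_erase_of_mem (by simp [hwu, huv.symm]), h.edge w v hwv, h.edge w z hzw.symm] at h1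
  have := h.e_pos
  omega

/-- The number of common neighbours of `w`, `p` and `r`. -/
def common (H : SimpleGraph W) [DecidableRel H.Adj] (w p r : W) : ℕ :=
  (H.neighborFinset w ∩ H.neighborFinset p ∩ H.neighborFinset r).card

theorem common_comm (w p r : W) : common H w p r = common H w r p := by
  unfold common; rw [inter_right_comm]

theorem common_add (h : LocalCond H d e) {w u v z : W} (hwu : H.Adj w u) (hwv : H.Adj w v)
    (huv : H.Adj u v) (hzw : H.Adj z w) (hzu : ¬ H.Adj z u) (hzv : ¬ H.Adj z v) :
    common H w z u + common H w z v = e := by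
  unfold common
  rw [← card_union_of_disjoint, ← inter_union_distrib_left, inter_eq_left.2,
    h.edge w z hzw.symm]
  · intro r hr
    simp only [mem_inter, mem_union, mem_neighborFinset] at hr ⊢
    rcases h.no2K2 z r u v hr.2 huv with h1 | h1 | h1 | h1
    · contradiction
    · contradiction
    · exact Or.inl h1.symm
    · exact Or.inr h1.symm
  · rw [Finset.disjoint_left]
    intro x hx hx'
    simp only [mem_inter, mem_neighborFinset] at hx hx'
    exact h.noK4 w u v x hwu hwv hx.1.1 huv hx.2 hx'.2

/-- Five instances of `common_add`, one for each vertex of the pentagon `u, v, b, z, a` in `N(w)`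
and its opposite edge, force all five summands to be `e/2`, because the pentagon is an odd cycle. -/
theorem common_half (h : LocalCond H d e) {w u v z : W} (hwu : H.Adj w u) (hwv : H.Adj w v)
    (huv : H.Adj u v) (hzw : H.Adj z w) (hzu : ¬ H.Adj z u) (hzv : ¬ H.Adj z v) :
    2 * common H w z u = e := by
  obtain ⟨a, haw, haz, hau⟩ := h.exists_link hwu hwv huv hzw hzu hzv
  obtain ⟨b, hbw, hbz, hbv⟩ := h.exists_link hwv hwu huv.symm hzw hzv hzu
  have hav : ¬ H.Adj a v := fun hx => h.noK4 w u v a hwu hwv haw.symm huv hau.symm hx.symm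
  have hbu : ¬ H.Adj b u := fun hx => h.noK4 w u v b hwu hwv hbw.symm huv hx.symm hbv.symm
  have hab : ¬ H.Adj a b := fun hx =>
    h.noK4 w z a b hzw.symm haw.symm hbw.symm haz.symm hbz.symm hx
  have e1 := h.common_add hwu hwv huv hzw hzu hzv
  have e2 := h.common_add hwv hbw.symm hbv.symm haw hav hab
  have e3 := h.common_add hbw.symm hzw.symm hbz hwu.symm (fun hx => hbu hx.symm)
    (fun hx => hzu hx.symm)
  have e4 := h.common_add hzw.symm haw.symm haz.symm hwv.symm (fun hx => hzv hx.symm)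
    (fun hx => hav hx.symm)
  have e5 := h.common_add haw.symm hwu hau hbw (fun hx => hab hx.symm) hbu
  rw [common_comm w u b, common_comm w u z] at e3
  rw [common_comm w v z, common_comm w v a] at e4
  rw [common_comm w b a] at e5
  omega

/-- If `z` and `u` had no common neighbour inside `N(a)`, a neighbour `g` of `z` in `N(a)` would be
adjacent to `z` and to all `e` neighbours of `u` in `N(a)`. -/
theorem exists_common (h : LocalCond H d e) {a z u : W} (haz : H.Adj a z) (hau : H.Adj a u)
    (hzu : ¬ H.Adj z u) : ∃ s, H.Adj s a ∧ H.Adj s z ∧ H.Adj s u := by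
  by_contra! hc
  have hne : (H.neighborFinset a ∩ H.neighborFinset z).Nonempty := by
    rw [← card_pos, h.edge a z haz]; exact h.e_pos
  obtain ⟨g, hg⟩ := hne
  simp only [mem_inter, mem_neighborFinset] at hg
  have hsub : insert z (H.neighborFinset a ∩ H.neighborFinset u) ⊆
      H.neighborFinset a ∩ H.neighborFinset g := by
    intro t ht
    simp only [mem_insert, mem_inter, mem_neighborFinset] at ht ⊢
    rcases ht with rfl | ht
    · exact ⟨haz, hg.2.symm⟩
    · refine ⟨ht.1, ?_⟩
      rcases h.no2K2 z g u t hg.2 ht.2 with h1 | h1 | h1 | h1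
      · contradiction
      · exact absurd ht.2.symm (hc t ht.1.symm h1.symm)
      · exact absurd h1 (hc g hg.1.symm hg.2.symm)
      · exact h1
  have h1 := card_le_card hsub
  rw [card_insert_of_notMem (by simp [H.adj_comm u, hzu]), h.edge a u hau, h.edge a g hg.1] at h1
  omega

/-- Let `z` be off the edge `uv`. Then `N(z)` is the disjoint union of the common neighbours of `u`
and `v` (independent as there is no `K₄`), the non-neighbours of `v` and the non-neighbours of `u`.
The last two sets cannot both be independent. -/
theorem no_tripartition (h : LocalCond H d e) (hde : d ≠ 2 * e) {z u v : W} (huv : H.Adj u v)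
    (hzu : ¬ H.Adj z u) (hzv : ¬ H.Adj z v)
    (hP2 : ∀ p q, H.Adj p z → H.Adj q z → ¬ H.Adj p v → ¬ H.Adj q v → ¬ H.Adj p q)
    (hP3 : ∀ p q, H.Adj p z → H.Adj q z → ¬ H.Adj p u → ¬ H.Adj q u → ¬ H.Adj p q) : False := by
  have hcov : ∀ w, H.Adj w z → H.Adj w u ∨ H.Adj w v := by
    intro w hw
    rcases h.no2K2 z w u v hw.symm huv with h1 | h1 | h1 | h1 <;> tauto
  have hP1 : ∀ p q, H.Adj p u → H.Adj p v → H.Adj q u → H.Adj q v → ¬ H.Adj p q :=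
    fun p q h1 h2 h3 h4 => h.noK4 u v p q huv h1.symm h3.symm h2.symm h4.symm
  -- Otherwise `N(z)` would be bipartite, with the common neighbours of `u` and `v` as one part, but
  -- it contains a pentagon.
  have hedge : ∃ a b, H.Adj a z ∧ H.Adj b z ∧ H.Adj a b ∧ ¬ H.Adj a v ∧ ¬ H.Adj b u := by
    by_contra! hc
    have halt : ∀ p q, H.Adj p z → H.Adj q z → H.Adj p q →
        ((H.Adj p u ∧ H.Adj p v) ↔ ¬ (H.Adj q u ∧ H.Adj q v)) := by
      intro p q hp hq hpq
      constructor
      · rintro ⟨h1, h2⟩ ⟨h3, h4⟩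
        exact hP1 p q h1 h2 h3 h4 hpq
      · intro hq'
        by_contra hp'
        rw [not_and_or] at hp' hq'
        rcases hp' with h1 | h1 <;> rcases hq' with h2 | h2
        · exact hP3 p q hp hq h1 h2 hpq
        · exact h1 (hc q p hq hp hpq.symm h2)
        · exact h2 (hc p q hp hq hpq h1)
        · exact hP2 p q hp hq h1 h2 hpq
    have hne : (H.neighborFinset z).Nonempty := by
      rw [← card_pos, h.deg]
      by_contra h0
      have h1 := h.edge u v huv
      have h2 := card_le_card (inter_subset_left :
        H.neighborFinset u ∩ H.neighborFinset v ⊆ H.neighborFinset u)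
      rw [h.deg] at h2
      have := h.e_pos
      omega
    obtain ⟨w, hw⟩ := hne
    rw [mem_neighborFinset] at hw
    have hne2 : (H.neighborFinset z ∩ H.neighborFinset w).Nonempty := by
      rw [← card_pos, h.edge z w hw]; exact h.e_pos
    obtain ⟨x, hx⟩ := hne2
    simp only [mem_inter, mem_neighborFinset] at hx
    obtain ⟨s, hsz, hsw, hsx⟩ := h.exists_off hde hw hx.1 hx.2
    obtain ⟨a, haz, has, haw⟩ := h.exists_link hw hx.1 hx.2 hsz hsw hsx
    obtain ⟨b, hbz, hbs, hbx⟩ := h.exists_link hx.1 hw hx.2.symm hsz hsx hsw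
    have a1 := halt w x hw.symm hx.1.symm hx.2
    have a2 := halt b x hbz hx.1.symm hbx
    have a3 := halt b s hbz hsz hbs
    have a4 := halt a s haz hsz has
    have a5 := halt a w haz hw.symm haw
    generalize (H.Adj w u ∧ H.Adj w v) = A1 at *
    generalize (H.Adj x u ∧ H.Adj x v) = A2 at *
    generalize (H.Adj b u ∧ H.Adj b v) = A3 at *
    generalize (H.Adj s u ∧ H.Adj s v) = A4 at *
    generalize (H.Adj a u ∧ H.Adj a v) = A5 at *
    tauto
  obtain ⟨a, b, haz, hbz, hab, hav, hbu⟩ := hedge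
  have hau : H.Adj a u := (hcov a haz).resolve_right hav
  have hbv : H.Adj b v := (hcov b hbz).resolve_left hbu
  obtain ⟨α, hαa, hαz, hαu⟩ := h.exists_common haz hau hzu
  obtain ⟨β, hβb, hβz, hβv⟩ := h.exists_common hbz hbv hzv
  have hαv : H.Adj α v := by
    by_contra hx; exact hP2 α a hαz haz hx hav hαa
  have hβu : H.Adj β u := by
    by_contra hx; exact hP3 β b hβz hbz hx hbu hβb
  have hαb : ¬ H.Adj α b := fun hx =>
    h.noK4 z α a b hαz.symm haz.symm hbz.symm hαa hx hab
  have hαβ : ¬ H.Adj α β := hP1 α β hαu hαv hβu hβv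
  have c1 := h.common_half hαv hαu huv.symm hαz.symm hzv hzu
  have c2 := h.common_half hβv hβu huv.symm hβz.symm hzv hzu
  -- The vertex `b` is the one that makes the inclusion of common neighbours strict.
  have hlt : common H α z v < common H β z v := by
    unfold common
    apply card_lt_card
    rw [ssubset_iff_of_subset]
    · refine ⟨b, ?_, ?_⟩
      · simp [hβb, hbz.symm, hbv.symm]
      · simp [hαb]
    · intro γ hγ
      simp only [mem_inter, mem_neighborFinset] at hγ ⊢
      refine ⟨⟨?_, hγ.1.2⟩, hγ.2⟩
      have hγu : ¬ H.Adj γ u := fun hx => hP1 α γ hαu hαv hx hγ.2.symm hγ.1.1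
      have hγb : ¬ H.Adj γ b := hP3 γ b hγ.1.2.symm hbz hγu hbu
      rcases h.no2K2 α γ b β hγ.1.1 hβb.symm with h1 | h1 | h1 | h1
      · contradiction
      · contradiction
      · contradiction
      · exact h1.symm
  omega

/-- If `z` is off the triangle `u, v, w`, every neighbour of `z` not adjacent to one of these is
adjacent to the other two, so two such neighbours are nonadjacent as there is no `K₄`. -/
theorem no_triangle_off (h : LocalCond H d e) (hde : d ≠ 2 * e) {z u v w : W} (huv : H.Adj u v)
    (huw : H.Adj u w) (hvw : H.Adj v w) (hzu : ¬ H.Adj z u) (hzv : ¬ H.Adj z v)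
    (hzw : ¬ H.Adj z w) : False := by
  have cov : ∀ {p q : W}, H.Adj p q → ¬ H.Adj z p → ¬ H.Adj z q → ∀ r, H.Adj r z → ¬ H.Adj r p →
      H.Adj r q := by
    intro p q hpq hzp hzq r hr hrp
    rcases h.no2K2 z r p q hr.symm hpq with h1 | h1 | h1 | h1 <;> tauto
  refine h.no_tripartition hde huv hzu hzv ?_ ?_
  · intro p q hp hq hpv hqv
    exact h.noK4 u w p q huw (cov huv.symm hzv hzu p hp hpv).symm
      (cov huv.symm hzv hzu q hq hqv).symm (cov hvw hzv hzw p hp hpv).symm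
      (cov hvw hzv hzw q hq hqv).symm
  · intro p q hp hq hpu hqu
    exact h.noK4 v w p q hvw (cov huv hzu hzv p hp hpu).symm
      (cov huv hzu hzv q hq hqu).symm (cov huw hzu hzw p hp hpu).symm
      (cov huw hzu hzw q hq hqu).symm

theorem two_mul_card_le (h : LocalCond H d e) {z u v : W} (hzu : H.Adj z u)
    (hzv : H.Adj z v) (huv : H.Adj u v) : 2 * Fintype.card W ≤ 3 * d := by
  by_cases hde : d = 2 * e
  · have := h.card_of_eq hde hzu hzv huv
    omega
  · exfalso
    obtain ⟨s, hsz, hsu, hsv⟩ := h.exists_off hde hzu hzv huv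
    refine h.no_tripartition hde huv hsu hsv ?_ ?_
    · intro p q hp hq hpv hqv hpq
      exact h.no_triangle_off hde hp.symm hq.symm hpq (fun hx => hsv hx.symm)
        (fun hx => hpv hx.symm) (fun hx => hqv hx.symm)
    · intro p q hp hq hpu hqu hpq
      exact h.no_triangle_off hde hp.symm hq.symm hpq (fun hx => hsu hx.symm)
        (fun hx => hpu hx.symm) (fun hx => hqu hx.symm)

end LocalCond

/-! ### The combinatorial part for distance-regular graphs -/

theorem IsDRG.valency {V : Type*} [Fintype V] {G : SimpleGraph V} {D : ℕ} {b c : ℕ → ℕ}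
    (h : IsDRG G D b c) (y : V) : {z : V | G.Adj y z}.ncard = b 0 := by
  obtain ⟨-, -, -, -, -, -, h⟩ := h
  rw [← (h 0 (Nat.zero_le _) y y SimpleGraph.dist_self).2]
  congr 1
  ext z
  simp [SimpleGraph.dist_eq_one_iff_adj]

theorem IsDRG.ncard_same {V : Type*} [Fintype V] {G : SimpleGraph V} {D : ℕ} {b c : ℕ → ℕ}
    (h : IsDRG G D b c) {i : ℕ} (hi : 1 ≤ i) (hiD : i ≤ D) {x y : V} (hxy : G.dist x y = i) :
    ({z : V | G.Adj y z ∧ G.dist x z = i}.ncard : ℤ) = b 0 - b i - c i := by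
  have hv := h.valency y
  obtain ⟨-, -, -, -, -, -, h⟩ := h
  obtain ⟨h1, h2⟩ := h i hiD x y hxy
  have hU : {z : V | G.Adj y z} = {z : V | G.Adj y z ∧ G.dist x z = i} ∪
      ({z : V | G.Adj y z ∧ G.dist x z = i - 1} ∪ {z : V | G.Adj y z ∧ G.dist x z = i + 1}) := by
    ext z
    simp only [Set.mem_union, Set.mem_ofPred_eq]
    constructor
    · intro hz
      have := hz.diff_dist_adj (u := x)
      rw [hxy] at this
      tauto
    · tauto
  rw [hU, Set.ncard_union_eq, Set.ncard_union_eq, h1, h2] at hv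
  · omega
  · rw [Set.disjoint_left]; rintro z ⟨-, hz⟩ ⟨-, hz'⟩; omega
  · rw [Set.disjoint_left]; rintro z ⟨-, hz⟩ (⟨-, hz'⟩ | ⟨-, hz'⟩) <;> omega

theorem IsDRG.dist_eq_two {V : Type*} [Fintype V] {G : SimpleGraph V} {D : ℕ} {b c : ℕ → ℕ}
    (h : IsDRG G D b c) {y u v : V} (hu : G.Adj y u) (hv : G.Adj y v) (hne : u ≠ v)
    (hn : ¬ G.Adj u v) : G.dist u v = 2 := by
  have h1 := h.1.one_lt_dist_of_ne_of_not_adj hne hn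
  have h2 : G.dist u v ≤ G.dist u y + G.dist y v := h.1.dist_triangle
  rw [SimpleGraph.dist_eq_one_iff_adj.2 hu.symm, SimpleGraph.dist_eq_one_iff_adj.2 hv] at h2
  omega

/-- The complement of the graph induced by `G` on the neighbourhood of `y`. -/
def localCompl {V : Type*} (G : SimpleGraph V) (y : V) : SimpleGraph {v : V // G.Adj y v} where
  Adj u v := u ≠ v ∧ ¬ G.Adj u v
  symm := ⟨fun _ _ h => ⟨h.1.symm, fun h' => h.2 h'.symm⟩⟩
  loopless := ⟨fun _ h => h.1 rfl⟩

/-- Under the hypotheses on claws and valency, the sets `Γ(x) ∩ Γ(y)` with `dist x y = 2` are not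
all cliques. -/
theorem not_mu_cliques {V : Type*} [Fintype V] {G : SimpleGraph V} {D : ℕ} {b c : ℕ → ℕ}
    (h : IsDRG G D b c) (hD : 3 ≤ D)
    (hk' : (b 0 : ℤ) < 3 * (((b 0 : ℤ) - b 1 - c 1) + 1))
    (hclaw3 : HasClaw G 3) (hclaw4 : ¬ HasClaw G 4)
    (hC : ∀ x y, G.dist x y = 2 → ∀ p q, G.Adj x p → G.Adj y p → G.Adj x q → G.Adj y q →
      p ≠ q → G.Adj p q) : False := by
  classical
  obtain ⟨y, s, hs, hys, hpw⟩ := hclaw3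
  obtain ⟨p, q, r, hpq, hpr, hqr, rfl⟩ := Finset.card_eq_three.1 hs
  set H := localCompl G y with hH
  have hadj : ∀ u v : {v : V // G.Adj y v}, H.Adj u v ↔ u ≠ v ∧ ¬ G.Adj u v := fun u v => Iff.rfl
  have hp : G.Adj y p := hys p (by simp)
  have hq : G.Adj y q := hys q (by simp)
  have hr : G.Adj y r := hys r (by simp)
  have apq : H.Adj ⟨p, hp⟩ ⟨q, hq⟩ :=
    ⟨by simpa using hpq, hpw (by simp) (by simp) hpq⟩
  have apr : H.Adj ⟨p, hp⟩ ⟨r, hr⟩ :=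
    ⟨by simpa using hpr, hpw (by simp) (by simp) hpr⟩
  have aqr : H.Adj ⟨q, hq⟩ ⟨r, hr⟩ :=
    ⟨by simpa using hqr, hpw (by simp) (by simp) hqr⟩
  have hdist : ∀ u v, H.Adj u v → G.dist u.1 v.1 = 2 := fun u v huv =>
    h.dist_eq_two u.2 v.2 (fun h' => huv.1 (Subtype.ext h')) huv.2
  have hcardW : Fintype.card {v : V // G.Adj y v} = b 0 := by
    rw [← h.valency y, ← Nat.card_coe_set_eq, Nat.card_eq_fintype_card]
    rfl
  have hdeg : ∀ v, (H.neighborFinset v).card = b 1 := by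
    intro v
    rw [← (h.2.2.2.2.2.2 1 (by omega) v.1 y
      (SimpleGraph.dist_eq_one_iff_adj.2 v.2.symm)).2,
      ← Finset.card_map (Function.Embedding.subtype _), ← Set.ncard_coe_finset]
    congr 1
    ext z
    simp only [coe_map, Function.Embedding.subtype_apply, Set.mem_image, mem_coe,
      mem_neighborFinset, Subtype.exists, exists_and_right, exists_eq_right, Set.mem_ofPred_eq]
    constructor
    · rintro ⟨hz, hvz⟩
      exact ⟨hz, hdist _ _ hvz⟩
    · rintro ⟨hz, hvz⟩
      refine ⟨hz, ?_, ?_⟩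
      · rintro rfl
        simp at hvz
      · intro hx
        rw [SimpleGraph.dist_eq_one_iff_adj.2 hx] at hvz
        omega
  -- The common non-neighbours of `u`, `v` in `H`, together with `y`, are `Γ(u) ∩ Γ(v)`: all of
  -- that set except `y` lies in `Γ(y)` because it is a clique.
  have hmu : ∀ u v, H.Adj u v →
      (univ \ (H.neighborFinset u ∪ H.neighborFinset v)).card + 1 = c 2 := by
    intro u v huv
    rw [← (h.2.2.2.2.2.2 2 (by omega) u.1 v.1 (hdist u v huv)).1]
    have hset : {z : V | G.Adj v z ∧ G.dist u z = 2 - 1} = insert y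
        (((univ \ (H.neighborFinset u ∪ H.neighborFinset v)).map
          (Function.Embedding.subtype _) : Finset V) : Set V) := by
      ext z
      simp only [Nat.add_one_sub_one, SimpleGraph.dist_eq_one_iff_adj, Set.mem_ofPred_eq, coe_map,
        Function.Embedding.subtype_apply, Set.mem_insert_iff, Set.mem_image, mem_coe, mem_sdiff,
        mem_univ, true_and, mem_union, mem_neighborFinset, not_or, Subtype.exists,
        exists_and_right, exists_eq_right]
      constructor
      · rintro ⟨hvz, huz⟩
        by_cases hzy : z = y
        · exact Or.inl hzy
        · right
          have hyz : G.Adj y z := by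
            by_contra hn
            exact hn (hC u v (hdist u v huv) y z u.2.symm v.2.symm huz hvz (Ne.symm hzy))
          exact ⟨hyz, fun hx => hx.2 huz, fun hx => hx.2 hvz⟩
      · rintro (rfl | ⟨hz, hzu, hzv⟩)
        · exact ⟨v.2.symm, u.2.symm⟩
        · rw [hadj] at hzu hzv
          constructor
          · by_contra hn
            apply hzv ⟨?_, hn⟩
            rintro rfl
            exact hzu huv
          · by_contra hn
            apply hzu ⟨?_, hn⟩
            rintro rfl
            exact hzv huv.symm
    rw [hset, Set.ncard_insert_of_notMem, Set.ncard_coe_finset, card_map]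
    simp
  have hcount : ∀ u v, H.Adj u v →
      (H.neighborFinset u ∩ H.neighborFinset v).card + b 0 + 1 = 2 * b 1 + c 2 := by
    intro u v huv
    have h1 := hmu u v huv
    have h2 := card_union_add_card_inter (H.neighborFinset u) (H.neighborFinset v)
    have h3 := card_sdiff_add_card_inter univ (H.neighborFinset u ∪ H.neighborFinset v)
    rw [univ_inter, card_univ, hcardW] at h3
    rw [hdeg, hdeg] at h2
    omega
  have hL : LocalCond H (b 1)
      (H.neighborFinset ⟨p, hp⟩ ∩ H.neighborFinset ⟨q, hq⟩).card := by
    refine ⟨hdeg, ?_, ?_, ?_, ?_⟩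
    · intro u v huv
      have h1 := hcount u v huv
      have h2 := hcount _ _ apq
      omega
    · rw [card_pos]
      exact ⟨⟨r, hr⟩, by simp [apr, aqr]⟩
    · intro t u v w htu htv htw huv huw hvw
      apply hclaw4
      refine ⟨y, ({t, u, v, w} : Finset {v : V // G.Adj y v}).map
        (Function.Embedding.subtype _), ?_, ?_, ?_⟩
      · rw [card_map, card_eq_four.2]
        exact ⟨t, u, v, w, htu.1, htv.1, htw.1, huv.1, huw.1, hvw.1, rfl⟩
      · intro x hx
        simp only [mem_map, Function.Embedding.subtype_apply] at hx
        obtain ⟨a, -, rfl⟩ := hx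
        exact a.2
      · intro x hx x' hx' hne
        simp only [coe_map, Set.mem_image, mem_coe, mem_insert, mem_singleton,
          Function.Embedding.subtype_apply] at hx hx'
        obtain ⟨a, ha, rfl⟩ := hx
        obtain ⟨a', ha', rfl⟩ := hx'
        have : H.Adj a a' := by
          rcases ha with rfl | rfl | rfl | rfl <;> rcases ha' with rfl | rfl | rfl | rfl <;>
            first
            | assumption
            | (apply SimpleGraph.Adj.symm; assumption)
            | exact absurd rfl hne
        exact this.2
    · intro t u v w htu hvw
      by_contra! hn
      obtain ⟨n1, n2, n3, n4⟩ := hn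
      have adj_of : ∀ a a', ¬ H.Adj a a' → a ≠ a' → G.Adj a a' := by
        intro a a' hna hne
        by_contra hx
        exact hna ⟨hne, hx⟩
      have e1 : t ≠ v := by rintro rfl; exact n2 hvw
      have e2 : t ≠ w := by rintro rfl; exact n1 hvw.symm
      have e3 : u ≠ v := by rintro rfl; exact n4 hvw
      have e4 : u ≠ w := by rintro rfl; exact n3 hvw.symm
      exact hvw.2 (hC t u (hdist t u htu) v w (adj_of _ _ n1 e1) (adj_of _ _ n3 e3)
        (adj_of _ _ n2 e2) (adj_of _ _ n4 e4) (fun hx => hvw.1 (Subtype.ext hx)))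
  have hfin := hL.two_mul_card_le apq apr aqr
  rw [hcardW] at hfin
  have hc1 : c 1 = 1 := h.2.2.2.2.1
  omega

/-- For some `x, y` at distance `2`, the `b₂` neighbours of `y` at distance `3` from `x` form a
clique. -/
theorem exists_clique_sphere {V : Type*} [Fintype V] {G : SimpleGraph V} {D : ℕ} {b c : ℕ → ℕ}
    (h : IsDRG G D b c) (hD : 3 ≤ D)
    (hk' : (b 0 : ℤ) < 3 * (((b 0 : ℤ) - b 1 - c 1) + 1))
    (hclaw3 : HasClaw G 3) (hclaw4 : ¬ HasClaw G 4) :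
    ∃ x y, G.dist x y = 2 ∧ ∀ v w, G.Adj y v → G.dist x v = 3 → G.Adj y w → G.dist x w = 3 →
      v ≠ w → G.Adj v w := by
  classical
  by_contra! hB
  refine not_mu_cliques h hD hk' hclaw3 hclaw4 ?_
  intro x y hxy p q hxp hyp hxq hyq hpq
  by_contra hnpq
  obtain ⟨v, w, hyv, hxv, hyw, hxw, hvw, hnvw⟩ := hB x y hxy
  apply hclaw4
  have far : ∀ s t, G.Adj x s → G.dist x t = 3 → s ≠ t ∧ ¬ G.Adj s t := by
    intro s t hs ht
    have hs1 := SimpleGraph.dist_eq_one_iff_adj.2 hs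
    refine ⟨by rintro rfl; omega, fun hst => ?_⟩
    have h1 := SimpleGraph.dist_eq_one_iff_adj.2 hst
    have h2 : G.dist x t ≤ G.dist x s + G.dist s t := h.1.dist_triangle
    omega
  have pv := far p v hxp hxv
  have pw := far p w hxp hxw
  have qv := far q v hxq hxv
  have qw := far q w hxq hxw
  refine ⟨y, {p, q, v, w}, card_eq_four.2
    ⟨p, q, v, w, hpq, pv.1, pw.1, qv.1, qw.1, hvw, rfl⟩, ?_, ?_⟩
  · intro s hs
    simp only [mem_insert, mem_singleton] at hs
    rcases hs with rfl | rfl | rfl | rfl <;> assumption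
  · intro s hs t ht hne
    simp only [coe_insert, coe_singleton, Set.mem_insert_iff, Set.mem_singleton_iff] at hs ht
    rcases hs with rfl | rfl | rfl | rfl <;> rcases ht with rfl | rfl | rfl | rfl <;>
      first
      | exact absurd rfl hne
      | assumption
      | (rw [G.adj_comm]; assumption)
      | exact pv.2
      | exact pw.2
      | exact qv.2
      | exact qw.2
      | (rw [G.adj_comm]; exact pv.2)
      | (rw [G.adj_comm]; exact pw.2)
      | (rw [G.adj_comm]; exact qv.2)
      | (rw [G.adj_comm]; exact qw.2)

/-! ### The Delsarte bound -/

/-- The entry of `M` at `(x, y)` depends only on the distance of `x` and `y`. -/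
def DistConst {V : Type*} (G : SimpleGraph V) (M : Matrix V V ℝ) : Prop :=
  ∃ f : ℕ → ℝ, ∀ x y, M x y = f (G.dist x y)

theorem IsDRG.distConst_mul {V : Type*} [Fintype V] {G : SimpleGraph V} [DecidableRel G.Adj]
    {D : ℕ} {b c : ℕ → ℕ} (h : IsDRG G D b c) {M : Matrix V V ℝ} (hM : DistConst G M) :
    DistConst G (M * G.adjMatrix ℝ) := by
  classical
  obtain ⟨f, hf⟩ := hM
  -- This is `c_i f(i-1) + a_i f(i) + b_i f(i+1)` with `a_i = k - b_i - c_i`; for `i = 0`, where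
  -- `i - 1 = 0`, the middle term vanishes.
  refine ⟨fun i => b 0 * f i + c i * (f (i - 1) - f i) + b i * (f (i + 1) - f i), ?_⟩
  intro x y
  have hv := h.valency y
  obtain ⟨-, -, hD, -, -, -, h⟩ := h
  obtain ⟨h1, h2⟩ := h _ (hD x y) x y rfl
  rw [Set.ncard_eq_toFinset_card'] at hv h1 h2
  have hsum : (M * G.adjMatrix ℝ) x y = ∑ z with G.Adj y z, f (G.dist x z) := by
    rw [Matrix.mul_apply, sum_filter]
    refine sum_congr rfl fun z _ => ?_
    simp [hf, SimpleGraph.adjMatrix_apply, G.adj_comm]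
  have hpt : ∀ z ∈ ({z | G.Adj y z} : Finset V), f (G.dist x z) = f (G.dist x y) +
      (if G.dist x z = G.dist x y - 1 then f (G.dist x y - 1) - f (G.dist x y) else 0) +
      (if G.dist x z = G.dist x y + 1 then f (G.dist x y + 1) - f (G.dist x y) else 0) := by
    intro z hz
    rw [mem_filter] at hz
    rcases hz.2.diff_dist_adj (u := x) with h3 | h3 | h3
    · rw [h3]
      rcases Nat.eq_zero_or_pos (G.dist x y) with h0 | h0
      · simp [h0]
      · rw [if_neg (by omega), if_neg (by omega)]; ring
    · rw [h3, if_neg (by omega), if_pos rfl]; ring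
    · rw [h3, if_pos rfl, if_neg (by omega)]; ring
  rw [hsum, sum_congr rfl hpt, sum_add_distrib, sum_add_distrib, ← sum_filter, ← sum_filter,
    sum_const, sum_const, sum_const, filter_filter, filter_filter]
  beta_reduce
  rw [← hv, ← h1, ← h2]
  simp only [nsmul_eq_mul, Set.toFinset_ofPred]

theorem IsDRG.distConst_aeval {V : Type*} [Fintype V] [DecidableEq V] {G : SimpleGraph V}
    [DecidableRel G.Adj] {D : ℕ} {b c : ℕ → ℕ} (h : IsDRG G D b c) (p : Polynomial ℝ) :
    DistConst G (Polynomial.aeval (G.adjMatrix ℝ) p) := by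
  induction p using Polynomial.induction_on with
  | C a =>
    refine ⟨fun i => if i = 0 then a else 0, fun x y => ?_⟩
    simp [Matrix.algebraMap_matrix_apply, h.1.dist_eq_zero_iff]
  | add p q hp hq =>
    obtain ⟨f, hf⟩ := hp
    obtain ⟨g, hg⟩ := hq
    exact ⟨fun i => f i + g i, fun x y => by rw [map_add, Matrix.add_apply, hf, hg]⟩
  | monomial n a hn =>
    rw [pow_succ, ← mul_assoc, map_mul, Polynomial.aeval_X]
    exact h.distConst_mul hn

/-- The Delsarte clique bound, cleared of denominators. If `P` is the minimal polynomial of the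
adjacency matrix `A` divided by `X - θ`, then `E = P(A)²` is a nonzero positive semidefinite matrix
with `E A = θ E` whose entries are a function `f` of the distance. The diagonal of `E A` gives
`k f(1) = θ f(0)`, and the sum of the entries of `E` over `S × S` is nonnegative. -/
theorem IsDRG.delsarte {V : Type*} [Fintype V] {G : SimpleGraph V} [DecidableRel G.Adj]
    {D : ℕ} {b c : ℕ → ℕ} (h : IsDRG G D b c) {θ : ℝ} (hθ : IsAdjEigenvalue G θ)
    {S : Finset V} (hS : (S : Set V).Pairwise G.Adj) (hne : S.Nonempty) :
    0 ≤ (b 0 : ℝ) + ((S.card : ℝ) - 1) * θ := by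
  classical
  obtain ⟨v, hv0, hv⟩ := hθ
  set A := G.adjMatrix ℝ with hA
  have hroot : (minpoly ℝ A).IsRoot θ := by
    rw [← Matrix.minpoly_toLin']
    apply Module.End.isRoot_of_hasEigenvalue
    exact Module.End.hasEigenvalue_of_hasEigenvector
      (Module.End.hasEigenvector_iff.2 ⟨Module.End.mem_eigenspace_iff.2 (by simpa using hv), hv0⟩)
  obtain ⟨P, hP⟩ := Polynomial.dvd_iff_isRoot.2 hroot
  have hint : IsIntegral ℝ A := Matrix.isIntegral A
  have hmin0 := minpoly.ne_zero hint
  have hP0 : P ≠ 0 := by rintro rfl; exact hmin0 (by simpa using hP)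
  have hB0 : Polynomial.aeval A P ≠ 0 := by
    intro h0
    have h1 := Polynomial.natDegree_le_of_dvd (minpoly.dvd ℝ A h0) hP0
    rw [hP, Polynomial.natDegree_mul (Polynomial.X_sub_C_ne_zero θ) hP0,
      Polynomial.natDegree_X_sub_C] at h1
    omega
  set B := Polynomial.aeval A P with hB
  have hsymm : ∀ x y, B x y = B y x := by
    obtain ⟨f, hf⟩ := h.distConst_aeval P
    intro x y
    rw [hB, hf, hf, SimpleGraph.dist_comm]
  obtain ⟨f, hf⟩ : DistConst G (B * B) := by
    have := h.distConst_aeval (P * P)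
    rwa [map_mul] at this
  have hEA : (B * B) * A = θ • (B * B) := by
    have h1 : B * (A - algebraMap ℝ _ θ) = 0 := by
      have h2 := minpoly.aeval ℝ A
      rw [hP, mul_comm, map_mul, map_sub, Polynomial.aeval_X, Polynomial.aeval_C] at h2
      exact h2
    have h3 : B * A = θ • B := by
      rw [mul_sub, sub_eq_zero] at h1
      rw [h1, Algebra.smul_def, Algebra.commutes]
    rw [mul_assoc, h3, mul_smul_comm]
  obtain ⟨x, y, hxy⟩ : ∃ x y, B x y ≠ 0 := by
    by_contra! hc
    exact hB0 (Matrix.ext hc)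
  have hf0 : 0 < f 0 := by
    have h1 := hf x x
    rw [SimpleGraph.dist_self, Matrix.mul_apply] at h1
    rw [← h1]
    refine sum_pos' (fun z _ => ?_) ⟨y, mem_univ _, ?_⟩
    · rw [hsymm z x]; exact mul_self_nonneg _
    · rw [hsymm y x]; exact mul_self_pos.2 hxy
  have hf1 : b 0 * f 1 = θ * f 0 := by
    have h1 := congrFun (congrFun hEA x) x
    rw [Matrix.smul_apply, hf, SimpleGraph.dist_self, smul_eq_mul] at h1
    rw [← h1, Matrix.mul_apply]
    have h2 : ∀ z, (B * B) x z * A z x = if G.Adj x z then f 1 else 0 := by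
      intro z
      rw [hf, hA, SimpleGraph.adjMatrix_apply]
      simp only [G.adj_comm z x]
      split_ifs with hz
      · rw [SimpleGraph.dist_eq_one_iff_adj.2 hz, mul_one]
      · simp
    rw [sum_congr rfl fun z _ => h2 z, ← sum_filter, sum_const, nsmul_eq_mul, ← h.valency x,
      Set.ncard_eq_toFinset_card', Set.toFinset_ofPred]
  have hquad : ∑ x ∈ S, ∑ y ∈ S, (B * B) x y = S.card * (f 0 + (S.card - 1) * f 1) := by
    have h1 : ∀ x ∈ S, ∑ y ∈ S, (B * B) x y = f 0 + (S.card - 1) * f 1 := by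
      intro x hx
      rw [← add_sum_erase _ _ hx, hf, SimpleGraph.dist_self]
      congr 1
      rw [sum_congr rfl (g := fun _ => f 1), sum_const, card_erase_of_mem hx, nsmul_eq_mul,
        Nat.cast_sub (card_pos.2 hne), Nat.cast_one]
      intro y hy
      rw [mem_erase] at hy
      rw [hf, SimpleGraph.dist_eq_one_iff_adj.2 (hS hx hy.2 hy.1.symm)]
    rw [sum_congr rfl h1, sum_const, nsmul_eq_mul]
  have hpos : 0 ≤ ∑ x ∈ S, ∑ y ∈ S, (B * B) x y := by
    have h1 : ∑ x ∈ S, ∑ y ∈ S, (B * B) x y = ∑ w, (∑ x ∈ S, B x w) ^ 2 := by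
      simp only [Matrix.mul_apply]
      rw [sum_congr rfl fun x _ => sum_comm, sum_comm]
      refine sum_congr rfl fun w _ => ?_
      rw [sq, sum_mul_sum]
      exact sum_congr rfl fun x _ => sum_congr rfl fun y _ => by rw [hsymm w y]
    rw [h1]
    exact sum_nonneg fun w _ => sq_nonneg _
  rw [hquad] at hpos
  have hs : (0 : ℝ) < S.card := by exact_mod_cast card_pos.2 hne
  have h3 : 0 ≤ f 0 + (S.card - 1) * f 1 := nonneg_of_mul_nonneg_right hpos hs
  have h4 : 0 ≤ (b 0 : ℝ) * (f 0 + (S.card - 1) * f 1) := mul_nonneg (Nat.cast_nonneg _) h3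
  have h5 : (b 0 : ℝ) * (f 0 + (S.card - 1) * f 1) = (b 0 + (S.card - 1) * θ) * f 0 := by
    linear_combination ((S.card : ℝ) - 1) * hf1
  rw [h5] at h4
  exact nonneg_of_mul_nonneg_left h4 hf0

/-- Otherwise the adjacency matrix would be positive semidefinite with trace zero, hence zero. -/
theorem least_eigenvalue_neg {V : Type*} [Fintype V] {G : SimpleGraph V} [DecidableRel G.Adj]
    {u v : V} (huv : G.Adj u v) {θ : ℝ} (hmin : ∀ η, IsAdjEigenvalue G η → θ ≤ η) : θ < 0 := by
  classical
  by_contra! h0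
  have hH : (G.adjMatrix ℝ).IsHermitian := by
    rw [Matrix.IsHermitian, Matrix.conjTranspose_eq_transpose_of_trivial]
    exact G.transpose_adjMatrix
  have hpsd : (G.adjMatrix ℝ).PosSemidef := by
    rw [hH.posSemidef_iff_eigenvalues_nonneg]
    intro i
    refine h0.trans (hmin _ ⟨hH.eigenvectorBasis i, ?_, ?_⟩)
    · intro hz
      apply hH.eigenvectorBasis.orthonormal.ne_zero i
      ext j
      exact congrFun hz j
    · exact hH.mulVec_eigenvectorBasis i
  have hz := hpsd.trace_eq_zero_iff.1 (G.trace_adjMatrix ℝ)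
  have := congrFun (congrFun hz u) v
  simp [SimpleGraph.adjMatrix_apply, huv] at this

/-- a DRG with `D ≥ 3`, `3 ≤ k < 3(a₁+1)`, with a 3-claw but no 4-claws,
satisfies `b₂ ≤ a₁ + 1`, `b₂ ≤ a₃ + 1` and `b₂ ≤ k/(-θ_D)`, where `θ_D` is the smallest
adjacency eigenvalue (here `a_i = k - b_i - c_i`). -/
theorem statement7 {V : Type*} [Fintype V] (G : SimpleGraph V) [DecidableRel G.Adj]
    (D : ℕ) (b c : ℕ → ℕ) (θD : ℝ)
    (hdrg : IsDRG G D b c) (hD : 3 ≤ D) (hk : 3 ≤ b 0)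
    (hk' : (b 0 : ℤ) < 3 * (((b 0 : ℤ) - b 1 - c 1) + 1))
    (hclaw3 : HasClaw G 3) (hclaw4 : ¬ HasClaw G 4)
    (hθ : IsAdjEigenvalue G θD) (hθmin : ∀ θ, IsAdjEigenvalue G θ → θD ≤ θ) :
    (b 2 : ℤ) ≤ ((b 0 : ℤ) - b 1 - c 1) + 1 ∧
    (b 2 : ℤ) ≤ ((b 0 : ℤ) - b 3 - c 3) + 1 ∧
    (b 2 : ℝ) ≤ (b 0 : ℝ) / (-θD) := by
  classical
  obtain ⟨x, y, hxy, hcl⟩ := exists_clique_sphere hdrg hD hk' hclaw3 hclaw4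
  set B : Set V := {z | G.Adj y z ∧ G.dist x z = 2 + 1} with hBdef
  have hB : B.ncard = b 2 := (hdrg.2.2.2.2.2.2 2 (by omega) x y hxy).2
  have hBadj : ∀ v ∈ B, ∀ w ∈ B, v ≠ w → G.Adj v w := fun v hv w hw hvw =>
    hcl v w hv.1 hv.2 hw.1 hw.2 hvw
  have hc1 : c 1 = 1 := hdrg.2.2.2.2.1
  have hb2 : 0 < b 2 := by
    obtain ⟨hconn, ⟨x', y', hx'y'⟩, -⟩ := id hdrg
    obtain ⟨w, hw⟩ := hconn.exists_walk_length_eq_dist x' y'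
    have hd : ∀ i ≤ 3, G.dist x' (w.getVert i) = i := by
      intro i hi
      have h1 := SimpleGraph.dist_le (w.take i)
      have h2 := SimpleGraph.dist_le (w.drop i)
      have h3 : G.dist x' y' ≤ G.dist x' (w.getVert i) + G.dist (w.getVert i) y' :=
        hconn.dist_triangle
      rw [SimpleGraph.Walk.take_length] at h1
      rw [SimpleGraph.Walk.drop_length] at h2
      omega
    have hd2 := hd 2 (by omega)
    have hd3 := hd 3 le_rfl
    rw [← (hdrg.2.2.2.2.2.2 2 (by omega) x' _ hd2).2, Set.ncard_pos]
    exact ⟨w.getVert 3, w.adj_getVert_succ (by omega), hd3⟩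
  obtain ⟨w, hw⟩ : B.Nonempty := by
    rw [← Set.ncard_pos, hB]; exact hb2
  have hBw : (B \ {w}).ncard + 1 = b 2 := by
    rw [← hB, Set.ncard_sdiff_singleton_add_one hw]
  refine ⟨?_, ?_, ?_⟩
  · have h1 := hdrg.ncard_same le_rfl (by omega) (SimpleGraph.dist_eq_one_iff_adj.2 hw.1)
    have h2 : (B \ {w}).ncard ≤ {z : V | G.Adj w z ∧ G.dist y z = 1}.ncard := by
      refine Set.ncard_le_ncard fun z hz => ⟨hBadj w hw z hz.1 (Ne.symm hz.2), ?_⟩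
      exact SimpleGraph.dist_eq_one_iff_adj.2 hz.1.1
    omega
  · have h1 := hdrg.ncard_same (i := 3) (by omega) hD hw.2
    have h2 : (B \ {w}).ncard ≤ {z : V | G.Adj w z ∧ G.dist x z = 3}.ncard :=
      Set.ncard_le_ncard fun z hz => ⟨hBadj w hw z hz.1 (Ne.symm hz.2), hz.1.2⟩
    omega
  · have hneg := least_eigenvalue_neg hw.1 hθmin
    have hcard : (insert y B.toFinset).card = b 2 + 1 := by
      rw [card_insert_of_notMem (by simp [hBdef]), ← Set.ncard_eq_toFinset_card', hB]
    have hdel := hdrg.delsarte hθ (S := insert y B.toFinset) (by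
      rw [coe_insert, Set.coe_toFinset]
      exact Set.Pairwise.insert (fun v hv w hw => hBadj v hv w hw)
        fun v hv _ => ⟨hv.1, hv.1.symm⟩) (insert_nonempty _ _)
    rw [hcard] at hdel
    push_cast at hdel
    rw [le_div_iff₀ (by linarith)]
    linarith
end

section
/- Let Γ be a distance-regular graph with diameter D ≥ 3 and valency k satisfying 3 ≤ k < 3(a_1+1), and suppose Γ contains a 3-claw but no 4-claws. Then D ≤ 4. -/
/-!
The proof distinguishes whether or not the graph contains a quadrangle (an induced 4-cycle).

Suppose there is no quadrangle, and consider the local graph `Γ` at the centre of a 3-claw. Common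
neighbourhoods of nonadjacent vertices of `Γ` are cliques of constant size, which is positive
because `k < 3 (a₁ + 1)`, and `Γ` has no 4-coclique. For a vertex `r` of `Γ` in a 3-coclique, the
graph induced on the non-neighbours of `r` then either has no paths of length two between
nonadjacent vertices, or is a pentagon with its vertices blown up to cliques (`exists_isPent`).
Both alternatives are contradictory (`IsLocal.no3coclique`), so a 3-claw forces a quadrangle
(`false_of_no_quadrangle`).

Suppose there is a quadrangle and `D ≥ 5`. Terwilliger's inequality (`IsDRG.terwilliger`), summed
up, gives `5 (a₁ + 2) ≤ 2 k` and `c₂ + 3 (a₁ + 2) ≤ b₂ + k`. For nonadjacent neighbours `p`, `q` of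
a vertex `y`, the neighbours of `y` adjacent to neither `p` nor `q` form a clique, as there are no
4-claws; the two bounds make it so large that the maximal cliques obtained from it (the lines) meet
pairwise in at most one vertex. They cover every edge, and there are exactly three of them through
each vertex (`IsDRG.exists_lineSystem`). Hence there are fewer lines than vertices, which makes
`-3` an eigenvalue, and an eigenfunction depending only on the distance from a base vertex sums to
zero over every line. Applied to a line along a geodesic of length five, from both ends, this gives
two independent linear equations for the values `τ 2` and `τ 3` of that eigenfunction, so it
vanishes, a contradiction (`IsDRG.false_of_quadrangle`).
-/

open SimpleGraph Finset

/-! ### Blown-up pentagons -/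

section Pentagon
open scoped Classical
variable {W : Type*}

/-- `f` exhibits the subgraph induced on `H` as a pentagon with every vertex replaced by a clique
of size `ρ`: the five classes are the fibres of `f` in `H`, and distinct vertices of `H` are
adjacent exactly if their labels in `ZMod 5` are equal or consecutive. -/
def IsPent (Γ : SimpleGraph W) (H : Finset W) (ρ : ℕ) (f : W → ZMod 5) : Prop :=
  (∀ h ∈ H, ∀ h' ∈ H, h ≠ h' →
    (Γ.Adj h h' ↔ f h = f h' ∨ f h = f h' + 1 ∨ f h' = f h + 1)) ∧
  ∀ i, (H.filter fun h => f h = i).card = ρ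

theorem IsPent.shift {Γ : SimpleGraph W} {H : Finset W} {ρ : ℕ} {f : W → ZMod 5}
    (hf : IsPent Γ H ρ f) (j : ZMod 5) : IsPent Γ H ρ (fun h => f h - j) := by
  refine ⟨fun h hh h' hh' hne => ?_, fun i => ?_⟩
  · rw [hf.1 h hh h' hh' hne]
    have : ∀ a b j : ZMod 5, (a = b ∨ a = b + 1 ∨ b = a + 1) ↔
      (a - j = b - j ∨ a - j = b - j + 1 ∨ b - j = a - j + 1) := by decide
    exact this _ _ _
  · rw [← hf.2 (i + j)]
    simp only [sub_eq_iff_eq_add]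

theorem IsPent.refl' {Γ : SimpleGraph W} {H : Finset W} {ρ : ℕ} {f : W → ZMod 5}
    (hf : IsPent Γ H ρ f) (j : ZMod 5) : IsPent Γ H ρ (fun h => j - f h) := by
  refine ⟨fun h hh h' hh' hne => ?_, fun i => ?_⟩
  · rw [hf.1 h hh h' hh' hne]
    have : ∀ a b j : ZMod 5, (a = b ∨ a = b + 1 ∨ b = a + 1) ↔
      (j - a = j - b ∨ j - a = j - b + 1 ∨ j - b = j - a + 1) := by decide
    exact this _ _ _
  · rw [← hf.2 (j - i)]
    congr 1
    apply Finset.filter_congr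
    intro x _
    constructor
    · rintro rfl; ring
    · intro h; simp only [h]; ring

set_option maxHeartbeats 1000000 in
/-- A regular graph on `H` without 3-cocliques, in which any two nonadjacent vertices have exactly
`ρ ≥ 1` common neighbours and these form a clique, is a blown-up pentagon as soon as it is not
complete. For nonadjacent `p`, `q` and a common neighbour `t` the five classes are the common
neighbours `T` of `p` and `q`, and the two cliques of non-neighbours of `q` and of `p`, each split
according to adjacency to `t`. -/
theorem exists_isPent (Γ : SimpleGraph W) (H : Finset W) (e ρ : ℕ)
    (hcl : ∀ p q, p ≠ q → ¬ Γ.Adj p q → ∀ z z', Γ.Adj p z → Γ.Adj q z → Γ.Adj p z' →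
      Γ.Adj q z' → z ≠ z' → Γ.Adj z z')
    (hdeg : ∀ h ∈ H, (H.filter fun z => Γ.Adj h z).card = e)
    (hcom : ∀ p ∈ H, ∀ q ∈ H, p ≠ q → ¬ Γ.Adj p q →
      (H.filter fun z => Γ.Adj p z ∧ Γ.Adj q z).card = ρ)
    (h3 : ∀ p ∈ H, ∀ q ∈ H, ∀ t ∈ H, p ≠ q → p ≠ t → q ≠ t → ¬ Γ.Adj p q → ¬ Γ.Adj p t →
      Γ.Adj q t)
    (hρ : 1 ≤ ρ) (p q : W) (hp : p ∈ H) (hq : q ∈ H) (hpq : p ≠ q) (npq : ¬ Γ.Adj p q) :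
    e + 1 = 3 * ρ ∧ H.card = 5 * ρ ∧ ∃ f, IsPent Γ H ρ f := by
  -- `S t` is the set of non-neighbours of `t` in `H`
  set S : W → Finset W := fun t => H.filter fun z => z ≠ t ∧ ¬ Γ.Adj t z with hS
  have memS : ∀ t z, z ∈ S t ↔ z ∈ H ∧ z ≠ t ∧ ¬ Γ.Adj t z := by intro t z; simp [hS]
  have Scl : ∀ t ∈ H, ∀ z ∈ S t, ∀ z' ∈ S t, z ≠ z' → Γ.Adj z z' := by
    intro t ht z hz z' hz' hne
    rw [memS] at hz hz'
    exact h3 t ht z hz.1 z' hz'.1 hz.2.1.symm hz'.2.1.symm hne hz.2.2 hz'.2.2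
  have Scard1 : ∀ t ∈ H, (S t).card + 1 + e = H.card := by
    intro t ht
    rw [← hdeg t ht, ← Finset.card_filter_add_card_filter_not (s := H) (fun z => Γ.Adj t z)]
    have : (H.filter fun z => ¬ Γ.Adj t z) = insert t (S t) := by
      ext z; simp only [mem_filter, mem_insert, memS]
      by_cases hz : z = t
      · subst hz; simp [ht]
      · simp [hz]
    rw [this, Finset.card_insert_of_notMem (by simp [memS])]
    omega
  set T := H.filter fun z => Γ.Adj p z ∧ Γ.Adj q z with hT
  have memT : ∀ z, z ∈ T ↔ z ∈ H ∧ Γ.Adj p z ∧ Γ.Adj q z := by intro z; simp [hT]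
  have nqp : ¬ Γ.Adj q p := fun h => npq h.symm
  have Tcard : T.card = ρ := hcom p hp q hq hpq npq
  have pS : p ∈ S q := by rw [memS]; exact ⟨hp, hpq, nqp⟩
  have qS : q ∈ S p := by rw [memS]; exact ⟨hq, hpq.symm, npq⟩
  have cover : ∀ z ∈ H, z ∈ S q ∨ z ∈ T ∨ z ∈ S p := by
    intro z hz
    by_cases h1 : z ∈ S q
    · exact Or.inl h1
    by_cases h2 : z ∈ S p
    · exact Or.inr (Or.inr h2)
    have zp : z ≠ p := by rintro rfl; exact h1 pS
    have zq : z ≠ q := by rintro rfl; exact h2 qS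
    right; left
    rw [memT]; rw [memS] at h1 h2
    refine ⟨hz, ?_, ?_⟩ <;> tauto
  have dSS : ∀ z, z ∈ S q → z ∈ S p → False := by
    intro z h1 h2
    rw [memS] at h1 h2
    exact h1.2.2 (h3 p hp q hq z h1.1 hpq h2.2.1.symm h1.2.1.symm npq h2.2.2)
  have dqT : ∀ z, z ∈ S q → z ∈ T → False := by
    intro z h1 h2; rw [memS] at h1; rw [memT] at h2; exact h1.2.2 h2.2.2
  have dpT : ∀ z, z ∈ S p → z ∈ T → False := by
    intro z h1 h2; rw [memS] at h1; rw [memT] at h2; exact h1.2.2 h2.2.1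
  have Hcard : H.card = (S q).card + T.card + (S p).card := by
    have : H = (S q ∪ T) ∪ S p := by
      ext z; simp only [mem_union]
      constructor
      · intro hz; have := cover z hz; tauto
      · rintro ((h | h) | h)
        · exact ((memS _ _).1 h).1
        · exact ((memT _).1 h).1
        · exact ((memS _ _).1 h).1
    rw [this, Finset.card_union_of_disjoint, Finset.card_union_of_disjoint]
    · rw [Finset.disjoint_left]; exact fun z h1 h2 => dqT z h1 h2
    · rw [Finset.disjoint_left]; intro z h1 h2
      rcases mem_union.1 h1 with h | h
      · exact dSS z h h2
      · exact dpT z h2 h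
  have Sqc := Scard1 q hq
  have Spc := Scard1 p hp
  -- every vertex of `H` has `m` non-neighbours in `H`
  obtain ⟨m, hm⟩ : ∃ m, (S q).card = m := ⟨_, rfl⟩
  have Scard : ∀ t ∈ H, (S t).card = m := by
    intro t ht; have := Scard1 t ht; omega
  have hme : m + ρ = e + 1 := by omega
  obtain ⟨t, ht⟩ : T.Nonempty := by rw [← Finset.card_pos]; omega
  have htH := ((memT _).1 ht).1
  have tp := ((memT _).1 ht).2.1
  have tq := ((memT _).1 ht).2.2
  have Tcl : ∀ z ∈ T, ∀ z' ∈ T, z ≠ z' → Γ.Adj z z' := by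
    intro z hz z' hz' hne
    rw [memT] at hz hz'
    exact hcl p q hpq npq z z' hz.2.1 hz.2.2 hz'.2.1 hz'.2.2 hne
  -- `A` and `B` are the two parts of the set of non-neighbours of `t`; both have size `ρ`, and no
  -- vertex of `A ∪ B` is adjacent to a vertex of `T`
  set A := S q ∩ S t with hA
  set B := S p ∩ S t with hB
  have memA : ∀ z, z ∈ A ↔ z ∈ S q ∧ z ∈ S t := by intro z; simp [hA]
  have memB : ∀ z, z ∈ B ↔ z ∈ S p ∧ z ∈ S t := by intro z; simp [hB]
  have StAB : S t = A ∪ B := by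
    ext z; rw [mem_union, memA, memB]
    constructor
    · intro hz
      rcases cover z ((memS _ _).1 hz).1 with h | h | h
      · exact Or.inl ⟨h, hz⟩
      · exact absurd (Tcl t ht z h ((memS _ _).1 hz).2.1.symm) ((memS _ _).1 hz).2.2
      · exact Or.inr ⟨h, hz⟩
    · tauto
  have dAB : Disjoint A B := by
    rw [Finset.disjoint_left]; intro z h1 h2
    exact dSS z ((memA _).1 h1).1 ((memB _).1 h2).1
  have ABcard : A.card + B.card = m := by
    rw [← Finset.card_union_of_disjoint dAB, ← StAB]; exact Scard t htH
  have pnA : p ∉ S t := fun h => ((memS _ _).1 h).2.2 tp.symm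
  have qnB : q ∉ S t := fun h => ((memS _ _).1 h).2.2 tq.symm
  have Ane : A.Nonempty := by
    rw [Finset.nonempty_iff_ne_empty]
    intro h0
    rw [h0, card_empty, zero_add] at ABcard
    have : B = S p := Finset.eq_of_subset_of_card_le (fun z hz => ((memB _).1 hz).1)
      (by rw [Scard p hp]; omega)
    exact qnB ((memB _).1 (this ▸ qS)).2
  have Bne : B.Nonempty := by
    rw [Finset.nonempty_iff_ne_empty]
    intro h0
    rw [h0, card_empty, add_zero] at ABcard
    have : A = S q := Finset.eq_of_subset_of_card_le (fun z hz => ((memA _).1 hz).1)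
      (by rw [Scard q hq]; omega)
    exact pnA ((memA _).1 (this ▸ pS)).2
  have AB : ∀ a ∈ A, ∀ b ∈ B, Γ.Adj a b := by
    intro a ha b hb
    refine Scl t htH a ((memA _).1 ha).2 b ((memB _).1 hb).2 ?_
    rintro rfl; exact Finset.disjoint_left.1 dAB ha hb
  have ASp : ∀ a ∈ A, ∀ h ∈ S p, Γ.Adj a h → h ∈ B := by
    intro a ha h hh hah
    rw [memB]; refine ⟨hh, ?_⟩
    by_contra hcon
    have ha' := (memA _).1 ha
    have hat := (memS _ _).1 ha'.2
    have hhp := (memS _ _).1 hh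
    have hne : h ≠ t := by rintro rfl; exact dpT _ hh ht
    have hht : Γ.Adj t h := by
      by_contra hc; exact hcon ((memS _ _).2 ⟨hhp.1, hne, hc⟩)
    have hpa : a ≠ p := by rintro rfl; exact pnA ha'.2
    exact hhp.2.2 (hcl a t hat.2.1 (fun h => hat.2.2 h.symm) p h
      (Scl q hq a ha'.1 p pS hpa) tp.symm hah hht hhp.2.1.symm)
  have BSq : ∀ b ∈ B, ∀ h ∈ S q, Γ.Adj b h → h ∈ A := by
    intro a ha h hh hah
    rw [memA]; refine ⟨hh, ?_⟩
    by_contra hcon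
    have ha' := (memB _).1 ha
    have hat := (memS _ _).1 ha'.2
    have hhp := (memS _ _).1 hh
    have hne : h ≠ t := by rintro rfl; exact dqT _ hh ht
    have hht : Γ.Adj t h := by
      by_contra hc; exact hcon ((memS _ _).2 ⟨hhp.1, hne, hc⟩)
    have hpa : a ≠ q := by rintro rfl; exact qnB ha'.2
    exact hhp.2.2 (hcl a t hat.2.1 (fun h => hat.2.2 h.symm) q h
      (Scl p hp a ha'.1 q qS hpa) tq.symm hah hht hhp.2.1.symm)
  have Aq : ∀ a ∈ A, a ≠ q ∧ ¬ Γ.Adj a q ∧ a ∈ H := by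
    intro a ha
    have := (memS _ _).1 ((memA _).1 ha).1
    exact ⟨this.2.1, fun h => this.2.2 h.symm, this.1⟩
  have Bp : ∀ a ∈ B, a ≠ p ∧ ¬ Γ.Adj a p ∧ a ∈ H := by
    intro a ha
    have := (memS _ _).1 ((memB _).1 ha).1
    exact ⟨this.2.1, fun h => this.2.2 h.symm, this.1⟩
  have Ap : ∀ a ∈ A, Γ.Adj p a := by
    intro a ha
    exact Scl q hq p pS a ((memA _).1 ha).1 (by rintro rfl; exact pnA ((memA _).1 ha).2)
  have Bq : ∀ a ∈ B, Γ.Adj q a := by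
    intro a ha
    exact Scl p hp q qS a ((memB _).1 ha).1 (by rintro rfl; exact qnB ((memB _).1 ha).2)
  have AT : ∀ a ∈ A, ∀ t' ∈ T, ¬ Γ.Adj a t' := by
    intro a ha t' ht' hadj
    have htt := (memT _).1 ht'
    have hb : ∀ b ∈ B, Γ.Adj t' b := by
      intro b hb
      exact hcl a q (Aq a ha).1 (Aq a ha).2.1 t' b hadj htt.2.2 (AB a ha b hb) (Bq b hb)
        (by rintro rfl; exact dpT _ ((memB _).1 hb).1 ht')
    have ha : ∀ a ∈ A, Γ.Adj t' a := by
      intro a ha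
      obtain ⟨b, hb'⟩ := Bne
      exact hcl b p (Bp b hb').1 (Bp b hb').2.1 t' a (hb b hb').symm htt.2.1 (AB a ha b hb').symm
        (Ap a ha) (by rintro rfl; exact dqT _ ((memA _).1 ha).1 ht')
    have hsub : S t' ⊆ ((S q \ A).erase p) ∪ (S p \ B) := by
      intro z hz
      have hz' := (memS _ _).1 hz
      have hzA : z ∉ A := fun h => hz'.2.2 (ha z h)
      have hzB : z ∉ B := fun h => hz'.2.2 (hb z h)
      have hzp : z ≠ p := by rintro rfl; exact hz'.2.2 htt.2.1.symm
      rw [mem_union, mem_erase, mem_sdiff, mem_sdiff]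
      rcases cover z hz'.1 with h | h | h
      · tauto
      · exact absurd (Tcl t' ht' z h hz'.2.1.symm) hz'.2.2
      · tauto
    have h1 := Finset.card_le_card hsub
    have h2 := Finset.card_union_le ((S q \ A).erase p) (S p \ B)
    have hAq : A ⊆ S q := fun z hz => ((memA _).1 hz).1
    have hBp : B ⊆ S p := fun z hz => ((memB _).1 hz).1
    have pin : p ∈ S q \ A := by
      rw [mem_sdiff]; exact ⟨pS, fun h => pnA ((memA _).1 h).2⟩
    rw [Finset.card_erase_of_mem pin] at h2
    have h3 := Finset.card_sdiff_add_card_eq_card hAq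
    have h4 := Finset.card_sdiff_add_card_eq_card hBp
    have h5 := Finset.card_pos.2 ⟨p, pin⟩
    rw [Scard q hq] at h3
    rw [Scard p hp] at h4
    rw [Scard t' htt.1] at h1
    omega
  have BT : ∀ b ∈ B, ∀ t' ∈ T, ¬ Γ.Adj b t' := by
    intro b hb t' ht' hadj
    have htt := (memT _).1 ht'
    obtain ⟨a, ha⟩ := Ane
    refine AT a ha t' ht' ?_
    exact hcl b p (Bp b hb).1 (Bp b hb).2.1 a t' (AB a ha b hb).symm (Ap a ha) hadj htt.2.1
      (by rintro rfl; exact dqT _ ((memA _).1 ha).1 ht')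
  have Bcard : B.card = ρ := by
    obtain ⟨a, ha⟩ := Ane
    rw [← hcom a (Aq a ha).2.2 q hq (Aq a ha).1 (Aq a ha).2.1]
    congr 1
    ext z; rw [mem_filter]
    constructor
    · intro hz; exact ⟨(Bp z hz).2.2, AB a ha z hz, Bq z hz⟩
    · rintro ⟨h1, h2, h3⟩
      rcases cover z h1 with h | h | h
      · exact absurd h3 ((memS _ _).1 h).2.2
      · exact absurd h2 (AT a ha z h)
      · exact ASp a ha z h h2
  have Acard : A.card = ρ := by
    obtain ⟨a, ha⟩ := Bne
    rw [← hcom a (Bp a ha).2.2 p hp (Bp a ha).1 (Bp a ha).2.1]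
    congr 1
    ext z; rw [mem_filter]
    constructor
    · intro hz; exact ⟨(Aq z hz).2.2, (AB z hz a ha).symm, Ap z hz⟩
    · rintro ⟨h1, h2, h3⟩
      rcases cover z h1 with h | h | h
      · exact BSq a ha z h h2
      · exact absurd h2 (BT a ha z h)
      · exact absurd h3 ((memS _ _).1 h).2.2
  have ST : ∀ t' ∈ T, S t' = A ∪ B := by
    intro t' ht'
    have htt := (memT _).1 ht'
    refine (Finset.eq_of_subset_of_card_le ?_ ?_).symm
    · intro z hz
      rw [memS]
      rcases mem_union.1 hz with h | h
      · exact ⟨(Aq z h).2.2, by rintro rfl; exact dqT _ ((memA _).1 h).1 ht',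
          fun h' => AT z h t' ht' h'.symm⟩
      · exact ⟨(Bp z h).2.2, by rintro rfl; exact dpT _ ((memB _).1 h).1 ht',
          fun h' => BT z h t' ht' h'.symm⟩
    · rw [Scard t' htt.1, Finset.card_union_of_disjoint dAB, ABcard]
  have Tadj : ∀ t' ∈ T, ∀ z ∈ H, z ≠ t' → z ∉ A → z ∉ B → Γ.Adj t' z := by
    intro t' ht' z hz hne h1 h2
    by_contra hc
    have : z ∈ S t' := (memS _ _).2 ⟨hz, hne, hc⟩
    rw [ST t' ht', mem_union] at this
    tauto
  have P0 : ∀ h ∈ S q, h ∉ A → ∀ z ∈ S p, ¬ Γ.Adj h z := by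
    intro h hh hA' z hz hadj
    have h1 := (memS _ _).1 hh
    have h2 := (memS _ _).1 hz
    have hB' : h ∉ B := fun h' => dSS h hh ((memB _).1 h').1
    have : T = H.filter fun z => Γ.Adj h z ∧ Γ.Adj q z := by
      apply Finset.eq_of_subset_of_card_le
      · intro x hx
        rw [mem_filter]
        exact ⟨((memT _).1 hx).1, (Tadj x hx h h1.1 (by rintro rfl; exact dqT _ hh hx)
          hA' hB').symm, ((memT _).1 hx).2.2⟩
      · rw [Tcard, hcom h h1.1 q hq h1.2.1 (fun h' => h1.2.2 h'.symm)]
    by_cases hzq : z = q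
    · subst hzq; exact h1.2.2 hadj.symm
    · refine dpT z hz ?_
      rw [this, mem_filter]
      exact ⟨h2.1, hadj, Scl p hp q qS z hz (Ne.symm hzq)⟩
  have P2 : ∀ h ∈ S p, h ∉ B → ∀ z ∈ S q, ¬ Γ.Adj h z := by
    intro h hh hB' z hz hadj
    have h1 := (memS _ _).1 hh
    have h2 := (memS _ _).1 hz
    have hA' : h ∉ A := fun h' => dSS h ((memA _).1 h').1 hh
    have : T = H.filter fun z => Γ.Adj h z ∧ Γ.Adj p z := by
      apply Finset.eq_of_subset_of_card_le
      · intro x hx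
        rw [mem_filter]
        exact ⟨((memT _).1 hx).1, (Tadj x hx h h1.1 (by rintro rfl; exact dpT _ hh hx)
          hA' hB').symm, ((memT _).1 hx).2.1⟩
      · rw [Tcard, hcom h h1.1 p hp h1.2.1 (fun h' => h1.2.2 h'.symm)]
    by_cases hzq : z = p
    · subst hzq; exact h1.2.2 hadj.symm
    · refine dqT z hz ?_
      rw [this, mem_filter]
      exact ⟨h2.1, hadj, Scl q hq p pS z hz (Ne.symm hzq)⟩
  refine ⟨by omega, by have := Scard p hp; omega, ?_⟩
  -- around the pentagon the classes are `S q \ A`, `T`, `S p \ B`, `B`, `A`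
  let f : W → ZMod 5 := fun h => if h ∈ A then 4 else if h ∈ B then 3 else if h ∈ S q then 0
    else if h ∈ T then 1 else 2
  have key : ∀ z ∈ H, (f z = 4 ∧ z ∈ A) ∨ (f z = 3 ∧ z ∈ B) ∨ (f z = 0 ∧ z ∈ S q ∧ z ∉ A) ∨
      (f z = 1 ∧ z ∈ T) ∨ (f z = 2 ∧ z ∈ S p ∧ z ∉ B) := by
    intro z hz
    simp only [f]
    by_cases h1 : z ∈ A
    · simp [h1]
    by_cases h2 : z ∈ B
    · simp [h1, h2]
    by_cases h3 : z ∈ S q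
    · simp [h1, h2, h3]
    by_cases h4 : z ∈ T
    · simp [h1, h2, h3, h4]
    have h5 : z ∈ S p := by have := cover z hz; tauto
    simp [h1, h2, h3, h4, h5]
  have AH : ∀ z ∈ A, z ∈ H := fun z hz => (Aq z hz).2.2
  have BH : ∀ z ∈ B, z ∈ H := fun z hz => (Bp z hz).2.2
  have SH : ∀ t, ∀ z ∈ S t, z ∈ H := fun t z hz => ((memS _ _).1 hz).1
  have TH : ∀ z ∈ T, z ∈ H := fun z hz => ((memT _).1 hz).1
  have ASq : ∀ z ∈ A, z ∈ S q := fun z hz => ((memA _).1 hz).1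
  have BSp : ∀ z ∈ B, z ∈ S p := fun z hz => ((memB _).1 hz).1
  refine ⟨f, ?_, ?_⟩
  · have SqSq : ∀ z ∈ S q, ∀ z' ∈ S q, z ≠ z' → Γ.Adj z z' := Scl q hq
    have SpSp : ∀ z ∈ S p, ∀ z' ∈ S p, z ≠ z' → Γ.Adj z z' := Scl p hp
    have T0 : ∀ z ∈ T, ∀ z' ∈ S q, z' ∉ A → Γ.Adj z z' := fun z hz z' hz' hA' =>
      Tadj z hz z' (SH _ _ hz') (by rintro rfl; exact dqT _ hz' hz) hA'
        (fun h => dSS _ hz' (BSp _ h))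
    have T2 : ∀ z ∈ T, ∀ z' ∈ S p, z' ∉ B → Γ.Adj z z' := fun z hz z' hz' hB' =>
      Tadj z hz z' (SH _ _ hz') (by rintro rfl; exact dpT _ hz' hz)
        (fun h => dSS _ (ASq _ h) hz') hB'
    intro h hh h' hh' hne
    rcases key h hh with ⟨e1, m1⟩ | ⟨e1, m1⟩ | ⟨e1, m1, m1'⟩ | ⟨e1, m1⟩ | ⟨e1, m1, m1'⟩ <;>
    rcases key h' hh' with ⟨e2, m2⟩ | ⟨e2, m2⟩ | ⟨e2, m2, m2'⟩ | ⟨e2, m2⟩ | ⟨e2, m2, m2'⟩ <;>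
    rw [e1, e2]
    · exact iff_of_true (SqSq _ (ASq _ m1) _ (ASq _ m2) hne) (by decide)
    · exact iff_of_true (AB _ m1 _ m2) (by decide)
    · exact iff_of_true (SqSq _ (ASq _ m1) _ m2 hne) (by decide)
    · exact iff_of_false (AT _ m1 _ m2) (by decide)
    · exact iff_of_false (fun h => P2 _ m2 m2' _ (ASq _ m1) h.symm) (by decide)
    · exact iff_of_true ((AB _ m2 _ m1).symm) (by decide)
    · exact iff_of_true (SpSp _ (BSp _ m1) _ (BSp _ m2) hne) (by decide)
    · exact iff_of_false (fun h => P0 _ m2 m2' _ (BSp _ m1) h.symm) (by decide)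
    · exact iff_of_false (BT _ m1 _ m2) (by decide)
    · exact iff_of_true (SpSp _ (BSp _ m1) _ m2 hne) (by decide)
    · exact iff_of_true (SqSq _ m1 _ (ASq _ m2) hne) (by decide)
    · exact iff_of_false (P0 _ m1 m1' _ (BSp _ m2)) (by decide)
    · exact iff_of_true (SqSq _ m1 _ m2 hne) (by decide)
    · exact iff_of_true ((T0 _ m2 _ m1 m1').symm) (by decide)
    · exact iff_of_false (P0 _ m1 m1' _ m2) (by decide)
    · exact iff_of_false (fun h => AT _ m2 _ m1 h.symm) (by decide)
    · exact iff_of_false (fun h => BT _ m2 _ m1 h.symm) (by decide)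
    · exact iff_of_true (T0 _ m1 _ m2 m2') (by decide)
    · exact iff_of_true (Tcl _ m1 _ m2 hne) (by decide)
    · exact iff_of_true (T2 _ m1 _ m2 m2') (by decide)
    · exact iff_of_false (P2 _ m1 m1' _ (ASq _ m2)) (by decide)
    · exact iff_of_true (SpSp _ m1 _ (BSp _ m2) hne) (by decide)
    · exact iff_of_false (P2 _ m1 m1' _ m2) (by decide)
    · exact iff_of_true ((T2 _ m2 _ m1 m1').symm) (by decide)
    · exact iff_of_true (SpSp _ m1 _ m2 hne) (by decide)
  · have fA : H.filter (fun h => f h = 4) = A := by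
      ext z; rw [mem_filter]
      constructor
      · rintro ⟨h1, h2⟩
        rcases key z h1 with h | h | h | h | h
        · exact h.2
        all_goals exact absurd (h.1.symm.trans h2) (by decide)
      · intro h; exact ⟨AH z h, by simp [f, h]⟩
    have fB : H.filter (fun h => f h = 3) = B := by
      ext z; rw [mem_filter]
      constructor
      · rintro ⟨h1, h2⟩
        rcases key z h1 with h | h | h | h | h
        rotate_left
        · exact h.2
        all_goals exact absurd (h.1.symm.trans h2) (by decide)
      · intro h
        have : z ∉ A := fun h' => Finset.disjoint_left.1 dAB h' h
        exact ⟨BH z h, by simp [f, h, this]⟩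
    have fT : H.filter (fun h => f h = 1) = T := by
      ext z; rw [mem_filter]
      constructor
      · rintro ⟨h1, h2⟩
        rcases key z h1 with h | h | h | h | h
        rotate_left 3
        · exact h.2
        all_goals exact absurd (h.1.symm.trans h2) (by decide)
      · intro h
        have h1 : z ∉ A := fun h' => dqT _ (ASq _ h') h
        have h2 : z ∉ B := fun h' => dpT _ (BSp _ h') h
        have h3 : z ∉ S q := fun h' => dqT _ h' h
        exact ⟨TH z h, by simp [f, h, h1, h2, h3]⟩
    have f0 : H.filter (fun h => f h = 0) = S q \ A := by
      ext z; rw [mem_filter, mem_sdiff]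
      constructor
      · rintro ⟨h1, h2⟩
        rcases key z h1 with h | h | h | h | h
        rotate_left 2
        · exact h.2
        all_goals exact absurd (h.1.symm.trans h2) (by decide)
      · rintro ⟨h, h1⟩
        have h2 : z ∉ B := fun h' => dSS _ h (BSp _ h')
        exact ⟨SH _ z h, by simp [f, h, h1, h2]⟩
    have f2 : H.filter (fun h => f h = 2) = S p \ B := by
      ext z; rw [mem_filter, mem_sdiff]
      constructor
      · rintro ⟨h1, h2⟩
        rcases key z h1 with h | h | h | h | h
        rotate_left 4
        · exact h.2
        all_goals exact absurd (h.1.symm.trans h2) (by decide)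
      · rintro ⟨h, h1⟩
        have h2 : z ∉ A := fun h' => dSS _ (ASq _ h') h
        have h3 : z ∉ S q := fun h' => dSS _ h' h
        have h4 : z ∉ T := fun h' => dpT _ h h'
        exact ⟨SH _ z h, by simp [f, h1, h2, h3, h4]⟩
    have c0 := Finset.card_sdiff_add_card_eq_card (s := A) (t := S q) (fun z hz => ASq z hz)
    have c2 := Finset.card_sdiff_add_card_eq_card (s := B) (t := S p) (fun z hz => BSp z hz)
    have := Scard p hp
    have all5 : ∀ i : ZMod 5, i = 0 ∨ i = 1 ∨ i = 2 ∨ i = 3 ∨ i = 4 := by decide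
    intro i
    rcases all5 i with rfl | rfl | rfl | rfl | rfl
    · rw [f0]; omega
    · rw [fT]; omega
    · rw [f2]; omega
    · rw [fB]; omega
    · rw [fA]; omega

theorem IsPent.exists_mem {Γ : SimpleGraph W} {H : Finset W} {ρ : ℕ} {f : W → ZMod 5}
    (hf : IsPent Γ H ρ f) (hρ : 1 ≤ ρ) (i : ZMod 5) : ∃ h ∈ H, f h = i := by
  have : (H.filter fun h => f h = i).Nonempty := by rw [← card_pos, hf.2]; omega
  obtain ⟨h, hh⟩ := this
  rw [mem_filter] at hh
  exact ⟨h, hh⟩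

theorem IsPent.adj {Γ : SimpleGraph W} {H : Finset W} {ρ : ℕ} {f : W → ZMod 5}
    (hf : IsPent Γ H ρ f) {h h' : W} {i j : ZMod 5} (hh : h ∈ H) (hh' : h' ∈ H)
    (hi : f h = i) (hj : f h' = j) (hij : (i = j + 1 ∨ j = i + 1) ∧ i ≠ j) : Γ.Adj h h' := by
  rw [hf.1 h hh h' hh' (by rintro rfl; exact hij.2 (hi.symm.trans hj)), hi, hj]
  exact Or.inr hij.1

theorem IsPent.nonadj {Γ : SimpleGraph W} {H : Finset W} {ρ : ℕ} {f : W → ZMod 5}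
    (hf : IsPent Γ H ρ f) {h h' : W} {i j : ZMod 5} (hh : h ∈ H) (hh' : h' ∈ H)
    (hi : f h = i) (hj : f h' = j) (hij : ¬ (i = j ∨ i = j + 1 ∨ j = i + 1)) :
    h ≠ h' ∧ ¬ Γ.Adj h h' := by
  have hne : h ≠ h' := by rintro rfl; exact hij (Or.inl (hi.symm.trans hj))
  rw [hf.1 h hh h' hh' hne, hi, hj]
  exact ⟨hne, hij⟩

end Pentagon

/-! ### Graphs without 4-cocliques whose μ-graphs are cliques -/

section LocalGraph
open scoped Classical
variable {W : Type*} [Fintype W]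

/-- The properties of the local graph of a vertex (the graph induced on its neighbours) of a
distance-regular graph with neither quadrangles nor 4-claws, when `c₂ = μ + 1 ≥ 2`: it is
regular, any two nonadjacent vertices have `μ` common neighbours, these form a clique, and there
is no 4-coclique. -/
structure IsLocal (Γ : SimpleGraph W) (d μ : ℕ) : Prop where
  reg : ∀ x, (univ.filter fun z => Γ.Adj x z).card = d
  mu : ∀ p q, p ≠ q → ¬ Γ.Adj p q → (univ.filter fun z => Γ.Adj p z ∧ Γ.Adj q z).card = μ
  cl : ∀ p q, p ≠ q → ¬ Γ.Adj p q → ∀ z z', Γ.Adj p z → Γ.Adj q z → Γ.Adj p z' →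
      Γ.Adj q z' → z ≠ z' → Γ.Adj z z'
  no4 : ∀ p q r t, p ≠ q → p ≠ r → p ≠ t → q ≠ r → q ≠ t → r ≠ t → ¬ Γ.Adj p q → ¬ Γ.Adj p r →
    ¬ Γ.Adj p t → ¬ Γ.Adj q r → ¬ Γ.Adj q t → Γ.Adj r t
  mu_pos : 1 ≤ μ

/-- The vertices different from `r` and not adjacent to `r`. -/
noncomputable def nonNbr (Γ : SimpleGraph W) (r : W) : Finset W :=
  univ.filter fun h => h ≠ r ∧ ¬ Γ.Adj r h

variable {Γ : SimpleGraph W} {d μ : ℕ}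

theorem mem_nonNbr {r h : W} : h ∈ nonNbr Γ r ↔ h ≠ r ∧ ¬ Γ.Adj r h := by simp [nonNbr]

theorem IsLocal.card_nonNbr (hL : IsLocal Γ d μ) (r : W) :
    (nonNbr Γ r).card + 1 + d = Fintype.card W := by
  rw [← hL.reg r, ← Finset.card_univ,
    ← Finset.card_filter_add_card_filter_not (s := univ) (fun z => Γ.Adj r z)]
  have : (univ.filter fun z => ¬ Γ.Adj r z) = insert r (nonNbr Γ r) := by
    ext z; simp only [mem_filter, mem_insert, mem_nonNbr, mem_univ, true_and]
    by_cases hz : z = r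
    · subst hz; simp
    · simp [hz]
  rw [this, Finset.card_insert_of_notMem (by simp [mem_nonNbr])]
  omega

theorem IsLocal.deg_nonNbr (hL : IsLocal Γ d μ) {r h : W} (hh : h ∈ nonNbr Γ r) :
    ((nonNbr Γ r).filter fun z => Γ.Adj h z).card + μ = d := by
  rw [mem_nonNbr] at hh
  rw [← hL.reg h, ← hL.mu r h hh.1.symm hh.2,
    ← Finset.card_filter_add_card_filter_not (s := univ.filter fun z => Γ.Adj h z)
      (fun z => Γ.Adj r z), add_comm]
  congr 2
  · ext z; simp; tauto
  · ext z; simp only [mem_filter, mem_nonNbr, mem_univ, true_and]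
    constructor
    · tauto
    · rintro ⟨h1, h2⟩
      refine ⟨⟨?_, h2⟩, h1⟩
      rintro rfl; exact hh.2 h1.symm

theorem IsLocal.no3 (hL : IsLocal Γ d μ) (r : W) : ∀ p ∈ nonNbr Γ r, ∀ q ∈ nonNbr Γ r,
    ∀ t ∈ nonNbr Γ r, p ≠ q → p ≠ t → q ≠ t → ¬ Γ.Adj p q → ¬ Γ.Adj p t → Γ.Adj q t := by
  intro p hp q hq t ht h1 h2 h3 h4 h5
  rw [mem_nonNbr] at hp hq ht
  exact hL.no4 r p q t hp.1.symm hq.1.symm ht.1.symm h1 h2 h3 hp.2 hq.2 ht.2 h4 h5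

/-- Inclusion–exclusion in `nonNbr Γ r`, which is covered by the closed neighbourhoods of `p` and `q`
because there are no 4-cocliques. The number of common neighbours of `p` and `q` inside
`nonNbr Γ r` is thereby the same for all choices of `r`, `p`, `q`. -/
theorem IsLocal.com_nonNbr (hL : IsLocal Γ d μ) {r p q : W} (hp : p ∈ nonNbr Γ r)
    (hq : q ∈ nonNbr Γ r) (hpq : p ≠ q) (npq : ¬ Γ.Adj p q) :
    (nonNbr Γ r).card + ((nonNbr Γ r).filter fun z => Γ.Adj p z ∧ Γ.Adj q z).card + 2 * μ
      = 2 * d + 2 := by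
  have h1 := hL.deg_nonNbr hp
  have h2 := hL.deg_nonNbr hq
  set H := nonNbr Γ r
  have hc : H.card = (insert p (insert q (H.filter fun z => Γ.Adj p z ∨ Γ.Adj q z))).card := by
    congr 1; ext z; simp only [mem_insert, mem_filter]
    constructor
    · intro hz
      by_cases h1 : z = p
      · exact Or.inl h1
      by_cases h2 : z = q
      · exact Or.inr (Or.inl h2)
      by_cases h3 : Γ.Adj p z
      · exact Or.inr (Or.inr ⟨hz, Or.inl h3⟩)
      · exact Or.inr (Or.inr ⟨hz, Or.inr
          (hL.no3 r p hp q hq z hz hpq (Ne.symm h1) (Ne.symm h2) npq h3)⟩)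
    · rintro (rfl | rfl | h)
      · exact hp
      · exact hq
      · exact h.1
  rw [Finset.card_insert_of_notMem, Finset.card_insert_of_notMem] at hc
  · have h3 := Finset.card_union_add_card_inter (H.filter fun z => Γ.Adj p z)
      (H.filter fun z => Γ.Adj q z)
    have h4 : (H.filter fun z => Γ.Adj p z) ∪ (H.filter fun z => Γ.Adj q z) =
        H.filter fun z => Γ.Adj p z ∨ Γ.Adj q z := by ext z; simp; tauto
    have h5 : (H.filter fun z => Γ.Adj p z) ∩ (H.filter fun z => Γ.Adj q z) =
        H.filter fun z => Γ.Adj p z ∧ Γ.Adj q z := by ext z; simp; tauto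
    rw [h4, h5] at h3
    omega
  · simp only [mem_filter]
    rintro ⟨_, h | h⟩
    · exact npq h
    · exact Γ.irrefl h
  · simp only [mem_insert, mem_filter]
    rintro (h | ⟨_, h | h⟩)
    · exact hpq h
    · exact Γ.irrefl h
    · exact npq h.symm

/-- For every vertex `t` the graph induced on `nonNbr Γ t` satisfies the hypotheses of
`exists_isPent`, with the cardinality `5 * ρ` and the valency `e = 3 * ρ - 1` of a blown-up
pentagon; the numbers `e` and `ρ` do not depend on `t`. -/
structure IsLocalPent (Γ : SimpleGraph W) (e ρ : ℕ) : Prop where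
  card : ∀ t, (nonNbr Γ t).card = 5 * ρ
  deg : ∀ t, ∀ h ∈ nonNbr Γ t, ((nonNbr Γ t).filter fun z => Γ.Adj h z).card = e
  com : ∀ t, ∀ p ∈ nonNbr Γ t, ∀ q ∈ nonNbr Γ t, p ≠ q → ¬ Γ.Adj p q →
    ((nonNbr Γ t).filter fun z => Γ.Adj p z ∧ Γ.Adj q z).card = ρ
  no3 : ∀ t, ∀ p ∈ nonNbr Γ t, ∀ q ∈ nonNbr Γ t,
    ∀ s ∈ nonNbr Γ t, p ≠ q → p ≠ s → q ≠ s → ¬ Γ.Adj p q → ¬ Γ.Adj p s → Γ.Adj q s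
  cl : ∀ p q, p ≠ q → ¬ Γ.Adj p q → ∀ z z', Γ.Adj p z → Γ.Adj q z → Γ.Adj p z' →
      Γ.Adj q z' → z ≠ z' → Γ.Adj z z'
  e_eq : e + 1 = 3 * ρ
  pos : 1 ≤ ρ

variable {e ρ : ℕ}

/-- Two nonadjacent neighbours `t`, `u` of `r` have no common neighbour `h` in `nonNbr Γ r`, since
the common neighbours of `r` and `h` form a clique. -/
theorem IsLocalPent.not_common (hP : IsLocalPent Γ e ρ) {r t u h : W} (ht : Γ.Adj r t) (hu : Γ.Adj r u)
    (hut : u ∈ nonNbr Γ t) (hh : h ∈ nonNbr Γ r) (hth : Γ.Adj t h) : ¬ Γ.Adj u h := by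
  intro huh
  rw [mem_nonNbr] at hut hh
  exact hut.2 (hP.cl r h hh.1.symm hh.2 t u ht hth.symm hu huh.symm hut.1.symm)

/-- The two sets arise from `nonNbr Γ t` and `nonNbr Γ r`, which have equal size, by removing their
intersection. -/
theorem IsLocalPent.card_U (hP : IsLocalPent Γ e ρ) {r t : W} (ht : Γ.Adj r t) :
    ((nonNbr Γ t).filter fun u => Γ.Adj r u).card =
      ((nonNbr Γ r).filter fun h => Γ.Adj t h).card := by
  have h1 := hP.card t
  have h2 := hP.card r
  rw [← Finset.card_filter_add_card_filter_not (fun u => Γ.Adj r u)] at h1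
  rw [← Finset.card_filter_add_card_filter_not (fun u => Γ.Adj t u)] at h2
  have : ((nonNbr Γ t).filter fun u => ¬ Γ.Adj r u) = ((nonNbr Γ r).filter fun u => ¬ Γ.Adj t u) := by
    ext z; simp only [mem_filter, mem_nonNbr]
    constructor
    · rintro ⟨⟨h4, h5⟩, h6⟩
      exact ⟨⟨by rintro rfl; exact h5 ht.symm, h6⟩, h5⟩
    · rintro ⟨⟨h4, h5⟩, h6⟩
      exact ⟨⟨by rintro rfl; exact h5 ht, h6⟩, h5⟩
  rw [this] at h1
  omega

/-- A neighbour `u` of `r` which is nonadjacent to some other neighbour `t` of `r` has a neighbour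
in `nonNbr Γ r`: otherwise `card_U` would make `u` adjacent to all other neighbours of `r`. -/
theorem IsLocalPent.exists_adj (hP : IsLocalPent Γ e ρ) {r t u : W} (ht : Γ.Adj r t) (hu : Γ.Adj r u)
    (hut : u ∈ nonNbr Γ t) : ∃ h ∈ nonNbr Γ r, Γ.Adj u h := by
  by_contra hcon
  push Not at hcon
  have h1 := hP.card_U hu
  rw [Finset.filter_false_of_mem hcon, card_empty, Finset.card_eq_zero] at h1
  have : t ∈ (nonNbr Γ u).filter fun u => Γ.Adj r u := by
    rw [mem_nonNbr] at hut
    rw [mem_filter, mem_nonNbr]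
    exact ⟨⟨hut.1.symm, fun h => hut.2 h.symm⟩, ht⟩
  rw [h1] at this
  simp at this

/-- If `h` and all its neighbours in `nonNbr Γ r` are nonadjacent to `t`, then these neighbours
already give `h` its full degree `e` inside `nonNbr Γ t`, so `h` is not adjacent to any further
vertex `u` of `nonNbr Γ t`. -/
theorem IsLocalPent.sat (hP : IsLocalPent Γ e ρ) {r t u h : W} (ht : Γ.Adj r t) (hu : Γ.Adj r u)
    (hut : u ∈ nonNbr Γ t) (hh : h ∈ nonNbr Γ r) (hth : ¬ Γ.Adj t h)
    (hs : ∀ z ∈ nonNbr Γ r, Γ.Adj h z → ¬ Γ.Adj t z) : ¬ Γ.Adj u h := by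
  intro huh
  have key : ∀ z ∈ nonNbr Γ r, ¬ Γ.Adj t z → z ∈ nonNbr Γ t := by
    intro z hz hz'
    rw [mem_nonNbr] at hz ⊢
    exact ⟨by rintro rfl; exact hz.2 ht, hz'⟩
  have hh' := key h hh hth
  have heq : ((nonNbr Γ r).filter fun z => Γ.Adj h z) = ((nonNbr Γ t).filter fun z => Γ.Adj h z) := by
    apply Finset.eq_of_subset_of_card_le
    · intro z hz
      rw [mem_filter] at hz ⊢
      exact ⟨key z hz.1 (hs z hz.1 hz.2), hz.2⟩
    · rw [hP.deg r h hh, hP.deg t h hh']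
  have : u ∈ ((nonNbr Γ t).filter fun z => Γ.Adj h z) := by
    rw [mem_filter]; exact ⟨hut, huh.symm⟩
  rw [← heq, mem_filter, mem_nonNbr] at this
  exact this.1.2 hu

theorem IsLocalPent.mem_of {r t : W} (ht : Γ.Adj r t) {z : W} (hz : z ∈ nonNbr Γ r)
    (hz' : ¬ Γ.Adj t z) : z ∈ nonNbr Γ t := by
  rw [mem_nonNbr] at hz ⊢
  exact ⟨by rintro rfl; exact hz.2 ht, hz'⟩

/-- The neighbours of `t` in the pentagon `nonNbr Γ r` do not all lie in one class. If they lie in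
class `0`, then a vertex `u` adjacent to `r` but not to `t` misses the classes `2` and `3` by
saturation, hence meets the classes `1` and `4` in view of the missing 3-cocliques, and so is
adjacent to every vertex of class `0`, contradicting `not_common`. -/
theorem IsLocalPent.single (hP : IsLocalPent Γ e ρ) {r t : W} {f : W → ZMod 5}
    (hf : IsPent Γ (nonNbr Γ r) ρ f) (ht : Γ.Adj r t)
    (hA : ∃ h ∈ nonNbr Γ r, Γ.Adj t h) (hA0 : ∀ h ∈ nonNbr Γ r, Γ.Adj t h → f h = 0) : False := by
  obtain ⟨q, hq, htq⟩ := hA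
  have hq0 := hA0 q hq htq
  have hU : ((nonNbr Γ t).filter fun u => Γ.Adj r u).Nonempty := by
    rw [← card_pos, hP.card_U ht, card_pos]; exact ⟨q, by simp [hq, htq]⟩
  obtain ⟨u, hu⟩ := hU
  rw [mem_filter] at hu
  obtain ⟨hut, hru⟩ := hu
  have huH : ∀ z ∈ nonNbr Γ r, z ≠ u := by
    intro z hz; rw [mem_nonNbr] at hz; rintro rfl; exact hz.2 hru
  obtain ⟨h1, m1, e1⟩ := hf.exists_mem hP.pos 1
  obtain ⟨h2, m2, e2⟩ := hf.exists_mem hP.pos 2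
  obtain ⟨h3, m3, e3⟩ := hf.exists_mem hP.pos 3
  obtain ⟨h4, m4, e4⟩ := hf.exists_mem hP.pos 4
  have nt : ∀ h ∈ nonNbr Γ r, ∀ i, f h = i → i ≠ 0 → ¬ Γ.Adj t h := by
    intro h hh i hi hne hadj; exact hne (hi.symm.trans (hA0 h hh hadj))
  have nu : ∀ h ∈ nonNbr Γ r, f h = 2 ∨ f h = 3 → ¬ Γ.Adj u h := by
    intro h hh hi
    refine hP.sat ht hru hut hh (fun hadj => ?_) (fun z hz hhz htz => ?_)
    · rw [hA0 h hh hadj] at hi; revert hi; decide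
    · have hz0 := hA0 z hz htz
      rcases hi with hi | hi
      · exact (hf.nonadj hh hz hi hz0 (by decide)).2 hhz
      · exact (hf.nonadj hh hz hi hz0 (by decide)).2 hhz
  have u1 : Γ.Adj u h1 := by
    have n13 := hf.nonadj m3 m1 e3 e1 (by decide)
    exact hP.no3 t h3 (IsLocalPent.mem_of ht m3 (nt _ m3 _ e3 (by decide))) u hut h1
      (IsLocalPent.mem_of ht m1 (nt _ m1 _ e1 (by decide))) (huH _ m3) n13.1 (huH _ m1).symm
      (fun h => nu h3 m3 (Or.inr e3) h.symm) n13.2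
  have u4 : Γ.Adj u h4 := by
    have n24 := hf.nonadj m2 m4 e2 e4 (by decide)
    exact hP.no3 t h2 (IsLocalPent.mem_of ht m2 (nt _ m2 _ e2 (by decide))) u hut h4
      (IsLocalPent.mem_of ht m4 (nt _ m4 _ e4 (by decide))) (huH _ m2) n24.1 (huH _ m4).symm
      (fun h => nu h2 m2 (Or.inl e2) h.symm) n24.2
  have n14 := hf.nonadj m1 m4 e1 e4 (by decide)
  refine hP.not_common ht hru hut hq htq (hP.cl h1 h4 n14.1 n14.2 u q u1.symm u4.symm
    (hf.adj m1 hq e1 hq0 (by decide)) (hf.adj m4 hq e4 hq0 (by decide)) (huH _ hq).symm)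

/-- If the neighbours of `t` in `nonNbr Γ r` lie in the classes `0` and `1` and at least one is in
class `1`, then `t` is adjacent to all of class `0`, and some `u` adjacent to `r` but not to `t`
has a neighbour in `nonNbr Γ r` but none in the classes `3` and `4`. -/
theorem IsLocalPent.two_aux (hP : IsLocalPent Γ e ρ) {r t : W} {f : W → ZMod 5}
    (hf : IsPent Γ (nonNbr Γ r) ρ f) (ht : Γ.Adj r t)
    (hA1 : ∃ h ∈ nonNbr Γ r, Γ.Adj t h ∧ f h = 1)
    (hA01 : ∀ h ∈ nonNbr Γ r, Γ.Adj t h → f h = 0 ∨ f h = 1) :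
    (∀ h ∈ nonNbr Γ r, f h = 0 → Γ.Adj t h) ∧
    ∃ u ∈ nonNbr Γ t, Γ.Adj r u ∧ (∃ h ∈ nonNbr Γ r, Γ.Adj u h) ∧
      ∀ h ∈ nonNbr Γ r, Γ.Adj u h → f h ≠ 3 ∧ f h ≠ 4 := by
  obtain ⟨q1, mq1, tq1, eq1⟩ := hA1
  obtain ⟨q2, m2, e2⟩ := hf.exists_mem hP.pos 2
  obtain ⟨q3, m3, e3⟩ := hf.exists_mem hP.pos 3
  obtain ⟨q4, m4, e4⟩ := hf.exists_mem hP.pos 4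
  have nt : ∀ h ∈ nonNbr Γ r, ∀ i, f h = i → (i ≠ 0 ∧ i ≠ 1) → ¬ Γ.Adj t h := by
    intro h hh i hi hne hadj
    rcases hA01 h hh hadj with h | h
    · exact hne.1 (hi.symm.trans h)
    · exact hne.2 (hi.symm.trans h)
  have mt : ∀ h ∈ nonNbr Γ r, ∀ i, f h = i → (i ≠ 0 ∧ i ≠ 1) → h ∈ nonNbr Γ t :=
    fun h hh i hi hne => IsLocalPent.mem_of ht hh (nt h hh i hi hne)
  have huH : ∀ u, Γ.Adj r u → ∀ z ∈ nonNbr Γ r, z ≠ u := by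
    intro u hru z hz; rw [mem_nonNbr] at hz; rintro rfl; exact hz.2 hru
  -- every vertex of `nonNbr t` is in `nonNbr r` or adjacent to `r`
  have dich : ∀ w ∈ nonNbr Γ t, w ∈ nonNbr Γ r ∨ Γ.Adj r w := by
    intro w hw
    by_cases h : Γ.Adj r w
    · exact Or.inr h
    · left; rw [mem_nonNbr] at hw ⊢
      exact ⟨by rintro rfl; exact hw.2 ht.symm, h⟩
  have n3 : ∀ u ∈ nonNbr Γ t, Γ.Adj r u → ∀ h ∈ nonNbr Γ r, f h = 3 → ¬ Γ.Adj u h := by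
    intro u hut hru h hh hi
    refine hP.sat ht hru hut hh (nt h hh _ hi (by decide)) (fun z hz hhz htz => ?_)
    rcases hA01 z hz htz with h0 | h0
    · exact (hf.nonadj hh hz hi h0 (by decide)).2 hhz
    · exact (hf.nonadj hh hz hi h0 (by decide)).2 hhz
  -- a neighbour `u` of `r` in `nonNbr t` is adjacent to exactly one of any two vertices of class
  -- `2` and class `4`
  have one : ∀ u ∈ nonNbr Γ t, Γ.Adj r u → ∀ h ∈ nonNbr Γ r, f h = 2 → ∀ h' ∈ nonNbr Γ r,
      f h' = 4 → ¬ Γ.Adj u h → Γ.Adj u h' := by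
    intro u hut hru h hh hi h' hh' hi' hadj
    have n := hf.nonadj hh hh' hi hi' (by decide)
    exact hP.no3 t h (mt h hh _ hi (by decide)) u hut h' (mt h' hh' _ hi' (by decide))
      (huH u hru _ hh) n.1 (huH u hru _ hh').symm (fun h => hadj h.symm) n.2
  have excl : ∀ u ∈ nonNbr Γ t, Γ.Adj r u → ∀ h ∈ nonNbr Γ r, f h = 2 → ∀ h' ∈ nonNbr Γ r,
      f h' = 4 → Γ.Adj u h → ¬ Γ.Adj u h' := by
    intro u hut hru h hh hi h' hh' hi' hadj hadj'
    have n := hf.nonadj hh hh' hi hi' (by decide)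
    have heq : ((nonNbr Γ r).filter fun z => f z = 3) =
        ((nonNbr Γ t).filter fun z => Γ.Adj h z ∧ Γ.Adj h' z) := by
      apply Finset.eq_of_subset_of_card_le
      · intro z hz
        rw [mem_filter] at hz ⊢
        exact ⟨mt z hz.1 _ hz.2 (by decide), hf.adj hh hz.1 hi hz.2 (by decide),
          hf.adj hh' hz.1 hi' hz.2 (by decide)⟩
      · rw [hf.2 3, hP.com t h (mt h hh _ hi (by decide)) h' (mt h' hh' _ hi' (by decide)) n.1 n.2]
    have : u ∈ ((nonNbr Γ t).filter fun z => Γ.Adj h z ∧ Γ.Adj h' z) := by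
      rw [mem_filter]; exact ⟨hut, hadj.symm, hadj'.symm⟩
    rw [← heq, mem_filter] at this
    exact huH u hru u this.1 rfl
  -- without such a `u`, the degree of `q2` in `nonNbr t` would be too small, as `q1` is missing
  obtain ⟨u, hut, hru, hu2⟩ : ∃ u ∈ nonNbr Γ t, Γ.Adj r u ∧ Γ.Adj u q2 := by
    by_contra hcon
    push Not at hcon
    have hsub : ((nonNbr Γ t).filter fun z => Γ.Adj q2 z) ⊆
        (((nonNbr Γ r).filter fun z => f z = 1).erase q1) ∪
        ((((nonNbr Γ r).filter fun z => f z = 2).erase q2) ∪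
         ((nonNbr Γ r).filter fun z => f z = 3)) := by
      intro z hz
      rw [mem_filter] at hz
      rcases dich z hz.1 with hzr | hzr
      · have hne : q2 ≠ z := by rintro rfl; exact Γ.irrefl hz.2
        have hz1 : z ≠ q1 := by
          rintro rfl; exact (mem_nonNbr.1 hz.1).2 tq1
        have := (hf.1 q2 m2 z hzr hne).1 hz.2
        rw [e2] at this
        simp only [mem_union, mem_erase, mem_filter]
        have dd : ∀ i : ZMod 5, (2 = i ∨ 2 = i + 1 ∨ i = 2 + 1) → i = 1 ∨ i = 2 ∨ i = 3 := by decide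
        rcases dd _ this with h | h | h
        · exact Or.inl ⟨hz1, hzr, h⟩
        · exact Or.inr (Or.inl ⟨hne.symm, hzr, h⟩)
        · exact Or.inr (Or.inr ⟨hzr, h⟩)
      · exact absurd hz.2.symm (hcon z hz.1 hzr)
    have c := Finset.card_le_card hsub
    rw [hP.deg t q2 (mt q2 m2 _ e2 (by decide))] at c
    have c1 := Finset.card_union_le (((nonNbr Γ r).filter fun z => f z = 1).erase q1)
      ((((nonNbr Γ r).filter fun z => f z = 2).erase q2) ∪
         ((nonNbr Γ r).filter fun z => f z = 3))
    have c2 := Finset.card_union_le (((nonNbr Γ r).filter fun z => f z = 2).erase q2)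
         ((nonNbr Γ r).filter fun z => f z = 3)
    rw [Finset.card_erase_of_mem (by simp [m2, e2]), hf.2, hf.2] at c2
    rw [Finset.card_erase_of_mem (by simp [mq1, eq1]), hf.2] at c1
    have := hP.pos
    have := hP.e_eq
    omega
  refine ⟨?_, u, hut, hru, ⟨q2, m2, hu2⟩, ?_⟩
  · intro l hl hl0
    by_contra hc
    have hlt := IsLocalPent.mem_of ht hl hc
    have n3l := hf.nonadj m3 hl e3 hl0 (by decide)
    have hul : Γ.Adj u l :=
      hP.no3 t q3 (mt q3 m3 _ e3 (by decide)) u hut l hlt (huH u hru _ m3) n3l.1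
        (huH u hru _ hl).symm (fun h => n3 u hut hru q3 m3 e3 h.symm) n3l.2
    have n2l := hf.nonadj m2 hl e2 hl0 (by decide)
    exact hP.not_common ht hru hut mq1 tq1 (hP.cl q2 l n2l.1 n2l.2 u q1 hu2.symm hul.symm
      (hf.adj m2 mq1 e2 eq1 (by decide)) (hf.adj hl mq1 hl0 eq1 (by decide))
      (huH u hru _ mq1).symm)
  · intro h hh huh
    exact ⟨fun h3 => n3 u hut hru h hh h3 huh,
      fun h4 => excl u hut hru q2 m2 e2 h hh h4 hu2 huh⟩

/-- The neighbours of `t` in `nonNbr Γ r` do not occupy exactly two consecutive classes. If these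
are `0` and `1`, then `t` is adjacent to both classes completely, so the vertex `u` of `two_aux`
has neighbours in class `2` only, contradicting `single`. -/
theorem IsLocalPent.two (hP : IsLocalPent Γ e ρ) {r t : W} {f : W → ZMod 5}
    (hf : IsPent Γ (nonNbr Γ r) ρ f) (ht : Γ.Adj r t)
    (hA0 : ∃ h ∈ nonNbr Γ r, Γ.Adj t h ∧ f h = 0)
    (hA1 : ∃ h ∈ nonNbr Γ r, Γ.Adj t h ∧ f h = 1)
    (hA01 : ∀ h ∈ nonNbr Γ r, Γ.Adj t h → f h = 0 ∨ f h = 1) : False := by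
  obtain ⟨c0, u, hut, hru, hne, hn⟩ := hP.two_aux hf ht hA1 hA01
  have d10 : ∀ i : ZMod 5, i = 0 → 1 - i = 1 := by decide
  have d11 : ∀ i : ZMod 5, i = 1 → 1 - i = 0 := by decide
  have c1 : ∀ h ∈ nonNbr Γ r, f h = 1 → Γ.Adj t h := by
    intro h hh h1
    refine (hP.two_aux (hf.refl' 1) ht ?_ ?_).1 h hh (d11 _ h1)
    · obtain ⟨q, mq, tq, hq⟩ := hA0
      exact ⟨q, mq, tq, d10 _ hq⟩
    · intro z hz hz'
      rcases hA01 z hz hz' with h | h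
      · exact Or.inr (d10 _ h)
      · exact Or.inl (d11 _ h)
  refine hP.single (hf.shift 2) hru hne ?_
  intro h hh huh
  have h34 := hn h hh huh
  have h0 : f h ≠ 0 := fun h0 => hP.not_common ht hru hut hh (c0 h hh h0) huh
  have h1 : f h ≠ 1 := fun h0 => hP.not_common ht hru hut hh (c1 h hh h0) huh
  have : ∀ i : ZMod 5, i ≠ 0 → i ≠ 1 → i ≠ 3 → i ≠ 4 → i - 2 = 0 := by decide
  exact this _ h0 h1 h34.1 h34.2

/-- If `t` has neighbours in the classes `i - 1` and `i + 1`, it is adjacent to all of class `i`. -/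
theorem IsLocalPent.fill (hP : IsLocalPent Γ e ρ) {r t : W} {f : W → ZMod 5}
    (hf : IsPent Γ (nonNbr Γ r) ρ f) (ht : Γ.Adj r t) (i : ZMod 5)
    (hA0 : ∃ h ∈ nonNbr Γ r, Γ.Adj t h ∧ f h = i - 1)
    (hA1 : ∃ h ∈ nonNbr Γ r, Γ.Adj t h ∧ f h = i + 1) :
    ∀ h ∈ nonNbr Γ r, f h = i → Γ.Adj t h := by
  intro h hh hi
  obtain ⟨p, mp, tp, ep⟩ := hA0
  obtain ⟨q, mq, tq, eq⟩ := hA1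
  have hne : t ≠ h := by rintro rfl; exact (mem_nonNbr.1 hh).2 ht
  have a1 : ∀ i : ZMod 5, ¬ (i - 1 = i + 1 ∨ i - 1 = i + 1 + 1 ∨ i + 1 = i - 1 + 1) := by decide
  have a2 : ∀ i : ZMod 5, (i - 1 = i + 1 ∨ i = i - 1 + 1) ∧ i - 1 ≠ i := by decide
  have a3 : ∀ i : ZMod 5, (i + 1 = i + 1 ∨ i = i + 1 + 1) ∧ i + 1 ≠ i := by decide
  have n := hf.nonadj mp mq ep eq (a1 i)
  exact hP.cl p q n.1 n.2 t h tp.symm tq.symm (hf.adj mp hh ep hi (a2 i))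
    (hf.adj mq hh eq hi (a3 i)) hne

/-- If `t` has a neighbour in the pentagon `nonNbr Γ r`, it has neighbours in two classes `i - 1`
and `i + 1`: a nonempty subset of the 5-cycle without two such labels is a single label or a pair
of consecutive labels, cases excluded by `single` and `two`. -/
theorem IsLocalPent.tri (hP : IsLocalPent Γ e ρ) {r t : W} {f : W → ZMod 5}
    (hf : IsPent Γ (nonNbr Γ r) ρ f) (ht : Γ.Adj r t) (hA : ∃ h ∈ nonNbr Γ r, Γ.Adj t h) :
    ∃ i, (∃ h ∈ nonNbr Γ r, Γ.Adj t h ∧ f h = i - 1) ∧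
      (∃ h ∈ nonNbr Γ r, Γ.Adj t h ∧ f h = i + 1) := by
  set I : Finset (ZMod 5) := ((nonNbr Γ r).filter fun h => Γ.Adj t h).image f with hI
  have memI : ∀ i, i ∈ I ↔ ∃ h ∈ nonNbr Γ r, Γ.Adj t h ∧ f h = i := by
    intro i; simp only [hI, mem_image, mem_filter]
    constructor
    · rintro ⟨a, ⟨h1, h2⟩, h3⟩; exact ⟨a, h1, h2, h3⟩
    · rintro ⟨a, h1, h2, h3⟩; exact ⟨a, ⟨h1, h2⟩, h3⟩
  have comb : ∀ I : Finset (ZMod 5), I.Nonempty → (∃ i, I = {i}) ∨ (∃ i, I = {i, i + 1}) ∨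
      ∃ i, i - 1 ∈ I ∧ i + 1 ∈ I := by decide
  have hne : I.Nonempty := by
    obtain ⟨h, hh, hth⟩ := hA
    exact ⟨f h, (memI _).2 ⟨h, hh, hth, rfl⟩⟩
  rcases comb I hne with ⟨i, hi⟩ | ⟨i, hi⟩ | ⟨i, h1, h2⟩
  · exfalso
    refine hP.single (hf.shift i) ht hA ?_
    intro h hh hth
    have : f h ∈ I := (memI _).2 ⟨h, hh, hth, rfl⟩
    rw [hi, mem_singleton] at this
    simp [this]
  · exfalso
    have m0 : i ∈ I := by simp [hi]
    have m1 : i + 1 ∈ I := by simp [hi]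
    obtain ⟨p, mp, tp, ep⟩ := (memI _).1 m0
    obtain ⟨q, mq, tq, eq⟩ := (memI _).1 m1
    refine hP.two (hf.shift i) ht ⟨p, mp, tp, by simp [ep]⟩ ⟨q, mq, tq, by simp [eq]⟩ ?_
    intro h hh hth
    have : f h ∈ I := (memI _).2 ⟨h, hh, hth, rfl⟩
    rw [hi, mem_insert, mem_singleton] at this
    rcases this with h | h
    · left; simp [h]
    · right; simp [h]
  · exact ⟨i, (memI _).1 h1, (memI _).1 h2⟩

/-- No neighbour `t` of `r` has a neighbour in the pentagon `nonNbr Γ r`. Otherwise `t` may be assumed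
adjacent to all of class `0` and to none of the classes `2` and `3`; then some `h` in `nonNbr Γ t`
is adjacent to neither `q2` nor `q3`, it must be a neighbour of `r` missing class `0`, and no
choice of two classes as in `tri` is left for `h`. -/
theorem IsLocalPent.none (hP : IsLocalPent Γ e ρ) {r t : W} {f : W → ZMod 5}
    (hf : IsPent Γ (nonNbr Γ r) ρ f) (ht : Γ.Adj r t) : ∀ h ∈ nonNbr Γ r, ¬ Γ.Adj t h := by
  intro h₀ mh₀ th₀
  obtain ⟨i, hi1, hi2⟩ := hP.tri hf ht ⟨h₀, mh₀, th₀⟩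
  have huH : ∀ u, Γ.Adj r u → ∀ z ∈ nonNbr Γ r, z ≠ u := by
    intro u hru z hz; rw [mem_nonNbr] at hz; rintro rfl; exact hz.2 hru
  have full : ¬ ∀ h ∈ nonNbr Γ r, Γ.Adj t h := by
    intro hall
    have hU : ((nonNbr Γ t).filter fun u => Γ.Adj r u).Nonempty := by
      rw [← card_pos, hP.card_U ht, card_pos]; exact ⟨h₀, by simp [mh₀, th₀]⟩
    obtain ⟨u, hu⟩ := hU
    rw [mem_filter] at hu
    obtain ⟨h, mh, uh⟩ := hP.exists_adj ht hu.2 hu.1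
    exact hP.not_common ht hu.2 hu.1 mh (hall h mh) uh
  -- normalise to `i = 0`
  obtain ⟨g, hg, h4, h1⟩ : ∃ g : W → ZMod 5, IsPent Γ (nonNbr Γ r) ρ g ∧
      (∃ h ∈ nonNbr Γ r, Γ.Adj t h ∧ g h = 4) ∧ (∃ h ∈ nonNbr Γ r, Γ.Adj t h ∧ g h = 1) := by
    refine ⟨_, hf.shift i, ?_, ?_⟩
    · obtain ⟨h, m, th, eh⟩ := hi1
      refine ⟨h, m, th, ?_⟩
      simp only [eh]
      have : ∀ i : ZMod 5, i - 1 - i = 4 := by decide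
      exact this i
    · obtain ⟨h, m, th, eh⟩ := hi2
      exact ⟨h, m, th, by simp [eh]⟩
  have fillg := fun (t : W) (ht : Γ.Adj r t) i => hP.fill hg (t := t) ht i
  have c0 := fillg t ht 0 h4 h1
  obtain ⟨q0, m0, e0⟩ := hg.exists_mem hP.pos 0
  obtain ⟨q2, m2, e2⟩ := hg.exists_mem hP.pos 2
  obtain ⟨q3, m3, e3⟩ := hg.exists_mem hP.pos 3
  have h0 : ∃ h ∈ nonNbr Γ r, Γ.Adj t h ∧ g h = 0 := ⟨q0, m0, c0 q0 m0 e0, e0⟩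
  have all5 : ∀ i : ZMod 5, i = 0 ∨ i = 1 ∨ i = 2 ∨ i = 3 ∨ i = 4 := by decide
  have no2 : ∀ h ∈ nonNbr Γ r, g h = 2 → ¬ Γ.Adj t h := by
    intro h mh eh th
    have h2 : ∃ h ∈ nonNbr Γ r, Γ.Adj t h ∧ g h = 2 := ⟨h, mh, th, eh⟩
    have c1 := fillg t ht 1 h0 h2
    have c3 := fillg t ht 3 h2 h4
    have h3 : ∃ h ∈ nonNbr Γ r, Γ.Adj t h ∧ g h = 3 := ⟨q3, m3, c3 q3 m3 e3, e3⟩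
    have c2 := fillg t ht 2 h1 h3
    have c4 := fillg t ht 4 h3 h0
    apply full
    intro z mz
    rcases all5 (g z) with h | h | h | h | h
    · exact c0 z mz h
    · exact c1 z mz h
    · exact c2 z mz h
    · exact c3 z mz h
    · exact c4 z mz h
  have no3 : ∀ h ∈ nonNbr Γ r, g h = 3 → ¬ Γ.Adj t h := by
    intro h mh eh th
    have h3 : ∃ h ∈ nonNbr Γ r, Γ.Adj t h ∧ g h = 3 := ⟨h, mh, th, eh⟩
    have c2 := fillg t ht 2 h1 h3
    exact no2 q2 m2 e2 (c2 q2 m2 e2)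
  have mt : ∀ h ∈ nonNbr Γ r, g h = 2 ∨ g h = 3 → h ∈ nonNbr Γ t := by
    intro h mh hi
    refine IsLocalPent.mem_of ht mh ?_
    rcases hi with hi | hi
    · exact no2 h mh hi
    · exact no3 h mh hi
  -- the closed neighbourhoods of `q2` and `q3` do not cover `nonNbr t`
  obtain ⟨h, mh, hh2, hh3, hn2, hn3⟩ : ∃ h ∈ nonNbr Γ t, h ≠ q2 ∧ h ≠ q3 ∧
      ¬ Γ.Adj q2 h ∧ ¬ Γ.Adj q3 h := by
    by_contra hcon
    push Not at hcon
    set N2 := insert q2 ((nonNbr Γ t).filter fun z => Γ.Adj q2 z)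
    set N3 := insert q3 ((nonNbr Γ t).filter fun z => Γ.Adj q3 z)
    have n2 : N2.card ≤ e + 1 := by
      refine (Finset.card_insert_le _ _).trans ?_
      rw [hP.deg t q2 (mt q2 m2 (Or.inl e2))]
    have n3 : N3.card ≤ e + 1 := by
      refine (Finset.card_insert_le _ _).trans ?_
      rw [hP.deg t q3 (mt q3 m3 (Or.inr e3))]
    have hsub : nonNbr Γ t ⊆ N2 ∪ N3 := by
      intro z hz
      simp only [N2, N3, mem_union, mem_insert, mem_filter]
      by_contra hc
      push Not at hc
      exact hc.2.2 hz (hcon z hz hc.1.1 hc.2.1 (hc.1.2 hz))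
    have hint : ((nonNbr Γ r).filter fun z => g z = 2) ∪ ((nonNbr Γ r).filter fun z => g z = 3) ⊆
        N2 ∩ N3 := by
      intro z hz
      rw [mem_union, mem_filter, mem_filter] at hz
      have hz' : z ∈ nonNbr Γ r ∧ (g z = 2 ∨ g z = 3) := by tauto
      have mz := mt z hz'.1 hz'.2
      simp only [N2, N3, mem_inter, mem_insert, mem_filter]
      constructor
      · by_cases hne : z = q2
        · exact Or.inl hne
        · right; refine ⟨mz, ?_⟩
          rw [hg.1 q2 m2 z hz'.1 (Ne.symm hne), e2]
          rcases hz'.2 with h | h <;> rw [h] <;> decide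
      · by_cases hne : z = q3
        · exact Or.inl hne
        · right; refine ⟨mz, ?_⟩
          rw [hg.1 q3 m3 z hz'.1 (Ne.symm hne), e3]
          rcases hz'.2 with h | h <;> rw [h] <;> decide
    have k1 := Finset.card_le_card hsub
    have k2 := Finset.card_le_card hint
    have k3 := Finset.card_union_add_card_inter N2 N3
    rw [Finset.card_union_of_disjoint, hg.2, hg.2] at k2
    · have := hP.card t
      have := hP.pos
      have := hP.e_eq
      omega
    · rw [Finset.disjoint_left]
      intro z hz hz'
      rw [mem_filter] at hz hz'
      exact absurd (hz.2.symm.trans hz'.2) (by decide)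
  have hrh : Γ.Adj r h := by
    by_contra hc
    have hr : h ∈ nonNbr Γ r := by
      rw [mem_nonNbr] at mh ⊢
      exact ⟨by rintro rfl; exact mh.2 ht.symm, hc⟩
    have a2 := fun h' => hn2 ((hg.1 q2 m2 h hr hh2.symm).2 h')
    have a3 := fun h' => hn3 ((hg.1 q3 m3 h hr hh3.symm).2 h')
    rw [e2] at a2
    rw [e3] at a3
    have : ∀ i : ZMod 5, ¬ (2 = i ∨ 2 = i + 1 ∨ i = 2 + 1) → ¬ (3 = i ∨ 3 = i + 1 ∨ i = 3 + 1) →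
      i = 0 := by decide
    exact (mem_nonNbr.1 mh).2 (c0 h hr (this _ a2 a3))
  have miss0 : ∀ z ∈ nonNbr Γ r, g z = 0 → ¬ Γ.Adj h z :=
    fun z mz ez => hP.not_common ht hrh mh mz (c0 z mz ez)
  obtain ⟨j, j1, j2⟩ := hP.tri hg hrh (hP.exists_adj ht hrh mh)
  have cj := fillg h hrh j j1 j2
  rcases all5 j with rfl | rfl | rfl | rfl | rfl
  · exact miss0 q0 m0 e0 (cj q0 m0 e0)
  · obtain ⟨z, mz, hz, ez⟩ := j1
    exact miss0 z mz (ez.trans (by decide)) hz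
  · exact hn2 (cj q2 m2 e2).symm
  · exact hn3 (cj q3 m3 e3).symm
  · obtain ⟨z, mz, hz, ez⟩ := j2
    exact miss0 z mz (ez.trans (by decide)) hz

/-- A graph satisfying `IsLocal` has no 3-coclique `p, q, r`. Let `ρ` be the number of common
neighbours of `p` and `q` in `nonNbr Γ r`. If `ρ = 0`, a common neighbour of `p` and `q` turns out
to be adjacent to all other vertices, contradicting regularity. If `ρ > 0`, then `nonNbr Γ r` is a
blown-up pentagon, and a common neighbour of `p` and `r` contradicts `IsLocalPent.none`. -/
theorem IsLocal.no3coclique (hL : IsLocal Γ d μ) (p q r : W) (hpq : p ≠ q) (hpr : p ≠ r)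
    (hqr : q ≠ r) (npq : ¬ Γ.Adj p q) (npr : ¬ Γ.Adj p r) (nqr : ¬ Γ.Adj q r) : False := by
  have nrp : ¬ Γ.Adj r p := fun h => npr h.symm
  have nrq : ¬ Γ.Adj r q := fun h => nqr h.symm
  have hp : p ∈ nonNbr Γ r := mem_nonNbr.2 ⟨hpr, nrp⟩
  have hq : q ∈ nonNbr Γ r := mem_nonNbr.2 ⟨hqr, nrq⟩
  obtain ⟨ρ, hρ⟩ : ∃ ρ, ((nonNbr Γ r).filter fun z => Γ.Adj p z ∧ Γ.Adj q z).card = ρ := ⟨_, rfl⟩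
  have c0 := hL.com_nonNbr hp hq hpq npq
  have cr := hL.card_nonNbr r
  have hcom : ∀ t, ∀ p ∈ nonNbr Γ t, ∀ q ∈ nonNbr Γ t, p ≠ q → ¬ Γ.Adj p q →
    ((nonNbr Γ t).filter fun z => Γ.Adj p z ∧ Γ.Adj q z).card = ρ := by
    intro t p' hp' q' hq' h1 h2
    have c1 := hL.com_nonNbr hp' hq' h1 h2
    have c2 := hL.card_nonNbr t
    omega
  have hdeg : ∀ t, ∀ h ∈ nonNbr Γ t, ((nonNbr Γ t).filter fun z => Γ.Adj h z).card = d - μ := by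
    intro t h hh
    have := hL.deg_nonNbr hh
    omega
  rcases Nat.eq_zero_or_pos ρ with h0 | h0
  · subst h0
    -- with `ρ = 0` a common neighbour of two vertices nonadjacent to `h` is adjacent to `h`
    have key : ∀ h a b, a ∈ nonNbr Γ h → b ∈ nonNbr Γ h → a ≠ b → ¬ Γ.Adj a b →
        ∀ t, t ≠ h → Γ.Adj a t → Γ.Adj b t → Γ.Adj h t := by
      intro h a b ha hb hab nab t hth hat hbt
      by_contra hc
      have := hcom h a ha b hb hab nab
      rw [card_eq_zero] at this
      have hmem : t ∈ (nonNbr Γ h).filter fun z => Γ.Adj a z ∧ Γ.Adj b z := by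
        rw [mem_filter, mem_nonNbr]; exact ⟨⟨hth, hc⟩, hat, hbt⟩
      rw [this] at hmem; simp at hmem
    obtain ⟨t, htm⟩ : (univ.filter fun z => Γ.Adj p z ∧ Γ.Adj q z).Nonempty := by
      rw [← card_pos, hL.mu p q hpq npq]; exact hL.mu_pos
    obtain ⟨hpt, hqt⟩ : Γ.Adj p t ∧ Γ.Adj q t := by simpa using htm
    have htr : t ≠ r := by rintro rfl; exact npr hpt
    have hrt : Γ.Adj r t := key r p q hp hq hpq npq t htr hpt hqt
    have empty : nonNbr Γ t = ∅ := by
      rw [Finset.eq_empty_iff_forall_notMem]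
      intro s hs
      rw [mem_nonNbr] at hs
      have hsn : ¬ Γ.Adj s t := fun h => hs.2 h.symm
      have two : ∀ a b, a ≠ b → ¬ Γ.Adj a b → Γ.Adj a t → Γ.Adj b t →
          ¬ (Γ.Adj a s ∧ Γ.Adj b s) := by
        intro a b hab nab hat hbt ⟨has, hbs⟩
        exact hs.2 (hL.cl a b hab nab t s hat hbt has hbs hs.1.symm)
      have two' : ∀ a b, a ≠ b → ¬ Γ.Adj a b → Γ.Adj a t → Γ.Adj b t →
          ¬ (¬ Γ.Adj a s ∧ ¬ Γ.Adj b s) := by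
        intro a b hab nab hat hbt ⟨has, hbs⟩
        refine hsn (key s a b ?_ ?_ hab nab t hs.1.symm hat hbt)
        · rw [mem_nonNbr]; exact ⟨by rintro rfl; exact hsn hat, fun h => has h.symm⟩
        · rw [mem_nonNbr]; exact ⟨by rintro rfl; exact hsn hbt, fun h => hbs h.symm⟩
      have := two p q hpq npq hpt hqt
      have := two p r hpr npr hpt hrt
      have := two q r hqr nqr hqt hrt
      have := two' p q hpq npq hpt hqt
      have := two' p r hpr npr hpt hrt
      have := two' q r hqr nqr hqt hrt
      tauto
    have c2 := hL.card_nonNbr t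
    rw [empty, card_empty] at c2
    have := card_pos.2 ⟨p, hp⟩
    omega
  · obtain ⟨he, hc5, f, hf⟩ := exists_isPent Γ (nonNbr Γ r) (d - μ) ρ hL.cl (hdeg r)
      (hcom r) (hL.no3 r) h0 p q hp hq hpq npq
    have hP : IsLocalPent Γ (d - μ) ρ := by
      refine ⟨fun t => ?_, hdeg, hcom, hL.no3, hL.cl, he, h0⟩
      have := hL.card_nonNbr t
      omega
    obtain ⟨t, htm⟩ : (univ.filter fun z => Γ.Adj p z ∧ Γ.Adj r z).Nonempty := by
      rw [← card_pos, hL.mu p r hpr npr]; exact hL.mu_pos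
    obtain ⟨hpt, hrt⟩ : Γ.Adj p t ∧ Γ.Adj r t := by simpa using htm
    exact hP.none hf hrt p hp hpt.symm

end LocalGraph

/-! ### Counting in distance-regular graphs -/

section Basics
open scoped Classical
variable {V : Type*} [Fintype V] {G : SimpleGraph V} {D : ℕ} {b c : ℕ → ℕ}

namespace IsDRG

theorem dist_le (h : IsDRG G D b c) (x y : V) : G.dist x y ≤ D := h.2.2.1 x y

theorem step (h : IsDRG G D b c) (x : V) {y z : V} (hyz : G.Adj y z) :
    G.dist x z ≤ G.dist x y + 1 := by
  have h1 := h.1.dist_triangle (u := x) (v := y) (w := z)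
  have h2 : G.dist y z = 1 := SimpleGraph.dist_eq_one_iff_adj.2 hyz
  omega

theorem card_c (h : IsDRG G D b c) (x y : V) :
    (univ.filter fun z => G.Adj y z ∧ G.dist x z + 1 = G.dist x y).card = c (G.dist x y) := by
  rcases Nat.eq_zero_or_pos (G.dist x y) with h0 | h0
  · rw [h0, h.2.2.2.1]
    simp
  · have := (h.2.2.2.2.2.2 (G.dist x y) (h.dist_le x y) x y rfl).1
    rw [← this, Set.ncard_eq_toFinset_card']
    congr 1
    ext z; simp only [mem_filter, mem_univ, true_and, Set.mem_toFinset, Set.mem_ofPred_eq]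
    constructor
    · rintro ⟨h1, h2⟩; exact ⟨h1, by omega⟩
    · rintro ⟨h1, h2⟩; exact ⟨h1, by omega⟩

theorem card_b (h : IsDRG G D b c) (x y : V) :
    (univ.filter fun z => G.Adj y z ∧ G.dist x z = G.dist x y + 1).card = b (G.dist x y) := by
  have := (h.2.2.2.2.2.2 (G.dist x y) (h.dist_le x y) x y rfl).2
  rw [← this, Set.ncard_eq_toFinset_card']
  congr 1
  ext z; simp

theorem card_nbr (h : IsDRG G D b c) (x : V) :
    (univ.filter fun z => G.Adj x z).card = b 0 := by
  have := h.card_b x x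
  rw [SimpleGraph.dist_self] at this
  rw [← this]
  congr 1
  ext z; simp

/-- The number of neighbours at the same distance. -/
theorem card_a (h : IsDRG G D b c) (x y : V) :
    (univ.filter fun z => G.Adj y z ∧ G.dist x z = G.dist x y).card + b (G.dist x y)
      + c (G.dist x y) = b 0 := by
  rw [← h.card_nbr y, ← h.card_b x y, ← h.card_c x y, ← card_union_of_disjoint,
    ← card_union_of_disjoint]
  · congr 1
    ext z
    simp only [mem_union, mem_filter, mem_univ, true_and]
    constructor
    · tauto
    · intro hz
      have h1 := h.step x hz
      have h2 := h.step x hz.symm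
      have : G.dist x z = G.dist x y ∨ G.dist x z = G.dist x y + 1 ∨
        G.dist x z + 1 = G.dist x y := by omega
      tauto
  · rw [Finset.disjoint_left]; intro z; simp only [mem_union, mem_filter, mem_univ, true_and]
    rintro (⟨_, h1⟩ | ⟨_, h1⟩) ⟨_, h2⟩ <;> omega
  · rw [Finset.disjoint_left]; intro z; simp only [mem_filter, mem_univ, true_and]
    rintro ⟨_, h1⟩ ⟨_, h2⟩; omega

/-- The sum over the neighbours of `y` of a function of the distance from `x`. For `x = y` the term
`F (0 - 1)` is a junk value with coefficient `c 0 = 0`. -/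
theorem sum_nbr (h : IsDRG G D b c) (F : ℕ → ℝ) (x y : V) :
    ∑ z ∈ univ.filter (fun z => G.Adj y z), F (G.dist x z) =
      c (G.dist x y) * F (G.dist x y - 1) +
      ((b 0 : ℝ) - b (G.dist x y) - c (G.dist x y)) * F (G.dist x y) +
      b (G.dist x y) * F (G.dist x y + 1) := by
  have ha := h.card_a x y
  have ha' : ((b 0 : ℝ) - b (G.dist x y) - c (G.dist x y)) =
      (univ.filter fun z => G.Adj y z ∧ G.dist x z = G.dist x y).card := by
    have : ((univ.filter fun z => G.Adj y z ∧ G.dist x z = G.dist x y).card : ℝ)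
      + b (G.dist x y) + c (G.dist x y) = b 0 := by exact_mod_cast ha
    linarith
  rw [ha', ← h.card_c x y, ← h.card_b x y]
  have e : univ.filter (fun z => G.Adj y z) =
      ((univ.filter fun z => G.Adj y z ∧ G.dist x z + 1 = G.dist x y) ∪
      (univ.filter fun z => G.Adj y z ∧ G.dist x z = G.dist x y)) ∪
      (univ.filter fun z => G.Adj y z ∧ G.dist x z = G.dist x y + 1) := by
    ext z
    simp only [mem_union, mem_filter, mem_univ, true_and]
    constructor
    · intro hz
      have h1 := h.step x hz
      have h2 := h.step x hz.symm
      have : G.dist x z = G.dist x y ∨ G.dist x z = G.dist x y + 1 ∨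
        G.dist x z + 1 = G.dist x y := by omega
      tauto
    · tauto
  rw [e, sum_union, sum_union]
  · congr 1
    · congr 1
      · rw [Finset.sum_congr rfl (g := fun _ => F (G.dist x y - 1)), sum_const, nsmul_eq_mul]
        intro z hz
        have := (mem_filter.1 hz).2.2
        congr 1; omega
      · rw [Finset.sum_congr rfl (g := fun _ => F (G.dist x y)), sum_const, nsmul_eq_mul]
        intro z hz
        rw [(mem_filter.1 hz).2.2]
    · rw [Finset.sum_congr rfl (g := fun _ => F (G.dist x y + 1)), sum_const, nsmul_eq_mul]
      intro z hz
      rw [(mem_filter.1 hz).2.2]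
  · rw [Finset.disjoint_left]; intro z; simp only [mem_filter, mem_univ, true_and]
    rintro ⟨_, h1⟩ ⟨_, h2⟩; omega
  · rw [Finset.disjoint_left]; intro z; simp only [mem_union, mem_filter, mem_univ, true_and]
    rintro (⟨_, h1⟩ | ⟨_, h1⟩) ⟨_, h2⟩ <;> omega

theorem dist_eq_two_iff (h : IsDRG G D b c) {x y : V} :
    G.dist x y = 2 ↔ x ≠ y ∧ ¬ G.Adj x y ∧ ∃ z, G.Adj x z ∧ G.Adj z y := by
  constructor
  · intro h2
    refine ⟨?_, ?_, ?_⟩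
    · rintro rfl; simp at h2
    · intro hadj; rw [SimpleGraph.dist_eq_one_iff_adj.2 hadj] at h2; omega
    · obtain ⟨p, hp⟩ := h.1.exists_walk_length_eq_dist x y
      rw [h2] at hp
      match p, hp with
      | .cons h1 (.cons h2 .nil), _ => exact ⟨_, h1, h2⟩
  · rintro ⟨hne, hn, z, h1, h2⟩
    have a1 : G.dist x z = 1 := SimpleGraph.dist_eq_one_iff_adj.2 h1
    have := h.step x h2
    have h3 : G.dist x y ≠ 0 := by
      rw [Ne, h.1.dist_eq_zero_iff]; exact hne
    have h4 : G.dist x y ≠ 1 := fun h5 => hn (SimpleGraph.dist_eq_one_iff_adj.1 h5)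
    omega

theorem card_common_adj (h : IsDRG G D b c) {x y : V} (hxy : G.Adj x y) :
    (univ.filter fun z => G.Adj x z ∧ G.Adj y z).card + 1 + b 1 = b 0 := by
  have h1 := h.card_a x y
  rw [SimpleGraph.dist_eq_one_iff_adj.2 hxy, h.2.2.2.2.1] at h1
  rw [← h1]
  have : (univ.filter fun z => G.Adj x z ∧ G.Adj y z) =
      (univ.filter fun z => G.Adj y z ∧ G.dist x z = 1) := by
    ext z; simp [SimpleGraph.dist_eq_one_iff_adj, and_comm]
  rw [this]; omega

theorem card_common_two (h : IsDRG G D b c) {x y : V} (hxy : G.dist x y = 2) :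
    (univ.filter fun z => G.Adj x z ∧ G.Adj y z).card = c 2 := by
  have h1 := h.card_c x y
  rw [hxy] at h1
  rw [← h1]
  congr 1
  ext z; simp [SimpleGraph.dist_eq_one_iff_adj, and_comm]

theorem exists_pred (h : IsDRG G D b c) {x y : V} (hxy : x ≠ y) :
    ∃ z, G.Adj y z ∧ G.dist x z + 1 = G.dist x y := by
  obtain ⟨p, hp⟩ := h.1.exists_walk_length_eq_dist y x
  match p, hp with
  | .nil, _ => exact absurd rfl hxy
  | .cons (v := z) h1 q, hp =>
    refine ⟨z, h1, ?_⟩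
    have h2 := SimpleGraph.dist_le q
    rw [SimpleGraph.Walk.length_cons, SimpleGraph.dist_comm] at hp
    rw [SimpleGraph.dist_comm] at h2
    have := h.step x h1.symm
    omega

theorem exists_dist (h : IsDRG G D b c) : ∀ i ≤ D, ∃ x y, G.dist x y = i := by
  intro i hi
  obtain ⟨j, rfl⟩ := Nat.exists_eq_add_of_le hi
  clear hi
  suffices H : ∀ n, n ≤ i + j → ∃ x y, G.dist x y = i + j - n by
    have := H j (by omega); simpa using this
  intro n hn
  induction n with
  | zero => simpa using h.2.1
  | succ n ih =>
    obtain ⟨x, y, hxy⟩ := ih (by omega)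
    have hne : x ≠ y := by rintro rfl; rw [SimpleGraph.dist_self] at hxy; omega
    obtain ⟨z, _, hz⟩ := h.exists_pred hne
    exact ⟨x, z, by omega⟩

theorem c_pos (h : IsDRG G D b c) {i : ℕ} (h1 : 1 ≤ i) (hi : i ≤ D) : 0 < c i := by
  obtain ⟨x, y, hxy⟩ := h.exists_dist i hi
  have hne : x ≠ y := by rintro rfl; rw [SimpleGraph.dist_self] at hxy; omega
  obtain ⟨z, hz⟩ := h.exists_pred hne
  rw [← hxy, ← h.card_c x y, card_pos]
  exact ⟨z, by simpa using hz⟩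

theorem b_pos (h : IsDRG G D b c) {i : ℕ} (hi : i < D) : 0 < b i := by
  obtain ⟨x, y, hxy⟩ := h.exists_dist (i + 1) hi
  have hne : x ≠ y := by rintro rfl; rw [SimpleGraph.dist_self] at hxy; omega
  obtain ⟨z, hz1, hz2⟩ := h.exists_pred hne
  have : G.dist x z = i := by omega
  rw [← this, ← h.card_b x z, card_pos]
  exact ⟨y, by simp [hz1.symm]; omega⟩

theorem exists_succ (h : IsDRG G D b c) {x y : V} (hi : G.dist x y < D) :
    ∃ z, G.Adj y z ∧ G.dist x z = G.dist x y + 1 := by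
  have := h.b_pos hi
  rw [← h.card_b x y, card_pos] at this
  obtain ⟨z, hz⟩ := this
  exact ⟨z, by simpa using hz⟩

theorem exists_at (h : IsDRG G D b c) (x : V) : ∀ i ≤ D, ∃ y, G.dist x y = i := by
  intro i
  induction i with
  | zero => exact fun _ => ⟨x, by simp⟩
  | succ i ih =>
    intro hi
    obtain ⟨y, hy⟩ := ih (by omega)
    obtain ⟨z, _, hz⟩ := h.exists_succ (x := x) (y := y) (by omega)
    exact ⟨z, by omega⟩

theorem bc_le (h : IsDRG G D b c) {i : ℕ} (hi : i ≤ D) : b i + c i ≤ b 0 := by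
  obtain ⟨x, y, hxy⟩ := h.exists_dist i hi
  have := h.card_a x y
  rw [hxy] at this
  omega

end IsDRG
end Basics

/-! ### The case without quadrangles -/

section NoQuadrangle
open scoped Classical
variable {V : Type*} [Fintype V] {G : SimpleGraph V} {D : ℕ} {b c : ℕ → ℕ}

theorem adj_of_no_claw {V : Type*} {G : SimpleGraph V} (h4 : ¬ HasClaw G 4) {y p q r t : V}
    (yp : G.Adj y p) (yq : G.Adj y q) (yr : G.Adj y r) (yt : G.Adj y t)
    (h1 : p ≠ q) (h2 : p ≠ r) (h3 : p ≠ t) (h4' : q ≠ r) (h5 : q ≠ t) (h6 : r ≠ t)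
    (n1 : ¬ G.Adj p q) (n2 : ¬ G.Adj p r) (n3 : ¬ G.Adj p t) (n4 : ¬ G.Adj q r)
    (n5 : ¬ G.Adj q t) : G.Adj r t := by
  by_contra n6
  apply h4
  refine ⟨y, {p, q, r, t}, ?_, ?_, ?_⟩
  · rw [card_insert_of_notMem, card_insert_of_notMem, card_insert_of_notMem, card_singleton] <;>
      simp [*]
  · intro z hz
    simp only [mem_insert, mem_singleton] at hz
    rcases hz with rfl | rfl | rfl | rfl <;> assumption
  · intro z hz z' hz' _
    simp only [coe_insert, coe_singleton, Set.mem_insert_iff, Set.mem_singleton_iff] at hz hz'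
    rcases hz with rfl | rfl | rfl | rfl <;> rcases hz' with rfl | rfl | rfl | rfl <;>
      first | assumption | exact G.irrefl | (rw [G.adj_comm]; assumption)

theorem card_subtype_filter (P Q : V → Prop) :
    (univ.filter fun z : {z // P z} => Q z.1).card = (univ.filter fun z => P z ∧ Q z).card := by
  rw [← Finset.card_map (Function.Embedding.subtype P)]
  congr 1
  ext z; simp [and_comm]

theorem HasClaw.three {V : Type*} {G : SimpleGraph V} (h : HasClaw G 3) : ∃ y p q r,
    G.Adj y p ∧ G.Adj y q ∧ G.Adj y r ∧ p ≠ q ∧ p ≠ r ∧ q ≠ r ∧ ¬ G.Adj p q ∧ ¬ G.Adj p r ∧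
    ¬ G.Adj q r := by
  obtain ⟨y, s, hs, hadj, hpw⟩ := h
  obtain ⟨p, q, r, h1, h2, h3, rfl⟩ := Finset.card_eq_three.1 hs
  refine ⟨y, p, q, r, hadj p (by simp), hadj q (by simp), hadj r (by simp), h1, h2, h3,
    hpw (by simp) (by simp) h1, hpw (by simp) (by simp) h2, hpw (by simp) (by simp) h3⟩

/-- A graph with `k < 3 (a₁ + 1)`, without quadrangles and without 4-claws, has no 3-claws. The
local graph at the centre of a 3-claw satisfies
`IsLocal`; here `μ ≥ 1`, since otherwise the closed neighbourhoods of the three leaves, of size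
`a₁ + 1` each, would be disjoint subsets of a set of `k < 3 (a₁ + 1)` vertices. -/
theorem false_of_no_quadrangle (h : IsDRG G D b c) (hk : 3 * b 1 < 2 * b 0) (h3 : HasClaw G 3)
    (h4 : ¬ HasClaw G 4)
    (nq : ∀ w y p q, G.dist w y = 2 → G.Adj w p → G.Adj y p → G.Adj w q → G.Adj y q → p ≠ q →
      G.Adj p q) : False := by
  obtain ⟨y, p, q, r, yp, yq, yr, hpq, hpr, hqr, npq, npr, nqr⟩ := h3.three
  let W := {z // G.Adj y z}
  let Γ : SimpleGraph W := G.comap Subtype.val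
  have Γadj : ∀ u v : W, Γ.Adj u v ↔ G.Adj u.1 v.1 := fun u v => Iff.rfl
  have d2 : ∀ u v : W, u ≠ v → ¬ Γ.Adj u v → G.dist u.1 v.1 = 2 := by
    intro u v hne hn
    rw [h.dist_eq_two_iff]
    exact ⟨fun h => hne (Subtype.ext h), hn, y, u.2.symm, v.2⟩
  have hreg : ∀ x : W, (univ.filter fun z => Γ.Adj x z).card = b 0 - 1 - b 1 := by
    intro x
    have h1 := h.card_common_adj x.2
    have h2 := card_subtype_filter (fun z => G.Adj y z) (fun z => G.Adj x.1 z)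
    simp only [Γadj]
    rw [h2]; omega
  have hmu : ∀ p q : W, p ≠ q → ¬ Γ.Adj p q →
      (univ.filter fun z => Γ.Adj p z ∧ Γ.Adj q z).card = c 2 - 1 := by
    intro p q hne hn
    have h2 := card_subtype_filter (fun z => G.Adj y z) (fun z => G.Adj p.1 z ∧ G.Adj q.1 z)
    have h3 : (univ.filter fun z => Γ.Adj p z ∧ Γ.Adj q z).card =
        (univ.filter fun z => G.Adj y z ∧ G.Adj p.1 z ∧ G.Adj q.1 z).card := by
      convert h2 <;> exact Iff.rfl
    rw [h3, ← h.card_common_two (d2 p q hne hn), ← Finset.card_erase_of_mem (a := y)]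
    · congr 1
      ext z; simp only [mem_filter, mem_erase, mem_univ, true_and]
      constructor
      · rintro ⟨h1, h2⟩; exact ⟨h1.ne', h2⟩
      · rintro ⟨h1, h2⟩
        exact ⟨nq p.1 q.1 y z (d2 p q hne hn) p.2.symm q.2.symm h2.1 h2.2 h1.symm, h2⟩
    · simp [p.2.symm, q.2.symm]
  set P : W := ⟨p, yp⟩
  set Q : W := ⟨q, yq⟩
  set R : W := ⟨r, yr⟩
  have hPQ : P ≠ Q := fun h => hpq (congrArg Subtype.val h)
  have hPR : P ≠ R := fun h => hpr (congrArg Subtype.val h)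
  have hQR : Q ≠ R := fun h => hqr (congrArg Subtype.val h)
  have nPQ : ¬ Γ.Adj P Q := npq
  have nPR : ¬ Γ.Adj P R := npr
  have nQR : ¬ Γ.Adj Q R := nqr
  have hL : IsLocal Γ (b 0 - 1 - b 1) (c 2 - 1) := by
    refine ⟨hreg, hmu, ?_, ?_, ?_⟩
    · intro p q hne hn z z' h1 h2 h3 h4 hz
      exact nq p.1 q.1 z.1 z'.1 (d2 p q hne hn) h1 h2 h3 h4 (fun h => hz (Subtype.ext h))
    · intro p q r t h1 h2 h3 h5 h6 h7 n1 n2 n3 n4 n5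
      have ne : ∀ u v : W, u ≠ v → u.1 ≠ v.1 := fun u v h h' => h (Subtype.ext h')
      exact adj_of_no_claw h4 p.2 q.2 r.2 t.2 (ne _ _ h1) (ne _ _ h2) (ne _ _ h3) (ne _ _ h5)
        (ne _ _ h6) (ne _ _ h7) n1 n2 n3 n4 n5
    · by_contra hμ
      have h0 : c 2 - 1 = 0 := by omega
      have dis : ∀ u v : W, u ≠ v → ¬ Γ.Adj u v →
          Disjoint (insert u (univ.filter fun z => Γ.Adj u z))
            (insert v (univ.filter fun z => Γ.Adj v z)) := by
        intro u v hne hn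
        have h1 := hmu u v hne hn
        rw [h0, card_eq_zero, Finset.eq_empty_iff_forall_notMem] at h1
        rw [Finset.disjoint_left]
        intro z hz hz'
        simp only [mem_insert, mem_filter, mem_univ, true_and] at hz hz' h1
        rcases hz with rfl | hz
        · rcases hz' with rfl | hz'
          · exact hne rfl
          · exact hn hz'.symm
        · rcases hz' with rfl | hz'
          · exact hn hz
          · exact h1 z ⟨hz, hz'⟩
      have cc : ∀ u : W, (insert u (univ.filter fun z => Γ.Adj u z)).card = b 0 - 1 - b 1 + 1 := by
        intro u
        rw [card_insert_of_notMem (by simp), hreg]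
      have c3 := Finset.card_le_univ ((insert P (univ.filter fun z => Γ.Adj P z)) ∪
        (insert Q (univ.filter fun z => Γ.Adj Q z)) ∪ (insert R (univ.filter fun z => Γ.Adj R z)))
      rw [card_union_of_disjoint, card_union_of_disjoint (dis P Q hPQ nPQ), cc, cc, cc] at c3
      · have c4 : Fintype.card W = b 0 := by
          rw [← h.card_nbr y, Fintype.card_subtype]
        have := h.card_common_adj yp
        omega
      · rw [Finset.disjoint_union_left]
        exact ⟨dis P R hPR nPR, dis Q R hQR nQR⟩
  exact hL.no3coclique P Q R hPQ hPR hQR nPQ nPR nQR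

end NoQuadrangle

/-! ### Terwilliger's inequality -/

section Terwilliger
open scoped Classical
variable {V : Type*} [Fintype V] {G : SimpleGraph V} {D : ℕ} {b c : ℕ → ℕ}

/-- Kronecker delta, real valued. -/
def dlt (i h : ℕ) : ℝ := if h = i then 1 else 0

/-- The number of `y` with `dist x y = i` and `dist z y = j`, as a real number. -/
noncomputable def pairCount (G : SimpleGraph V) (i j : ℕ) (x z : V) : ℝ :=
  ∑ y, dlt i (G.dist x y) * dlt j (G.dist z y)

namespace IsDRG

theorem sum_pairCount (i j : ℕ) (z : V) (s : Finset V) :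
    ∑ x ∈ s, pairCount G i j x z =
      ∑ y, dlt j (G.dist z y) * ∑ x ∈ s, dlt i (G.dist y x) := by
  simp only [pairCount, mul_sum]
  rw [sum_comm]
  refine sum_congr rfl fun y _ => sum_congr rfl fun x _ => ?_
  rw [SimpleGraph.dist_comm (u := x), mul_comm]

theorem sum_dlt_nbr (h : IsDRG G D b c) (i : ℕ) (x y : V) :
    ∑ x' ∈ univ.filter (fun x' => G.Adj x x'), dlt i (G.dist y x') =
      c (i + 1) * dlt (i + 1) (G.dist x y) + ((b 0 : ℝ) - b i - c i) * dlt i (G.dist x y) +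
        (if i = 0 then 0 else b (i - 1) * dlt (i - 1) (G.dist x y)) := by
  rw [h.sum_nbr, SimpleGraph.dist_comm (u := y)]
  set m := G.dist x y
  congr 1
  · congr 1
    · simp only [dlt]
      by_cases hm : m = i + 1
      · rw [hm]; simp
      · rw [if_neg hm]
        rcases Nat.eq_zero_or_pos m with h0 | h0
        · rw [h0, h.2.2.2.1]; simp
        · rw [if_neg (by omega)]; simp
    · simp only [dlt]
      by_cases hm : m = i
      · rw [hm]
      · rw [if_neg hm]; simp
  · rcases Nat.eq_zero_or_pos i with h0 | h0
    · simp [h0, dlt]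
    · rw [if_neg (by omega)]
      simp only [dlt]
      by_cases hm : m = i - 1
      · rw [hm, if_pos (by omega), if_pos rfl]
      · rw [if_neg (by omega), if_neg hm]; simp

theorem pairCount_rec (h : IsDRG G D b c) (i j : ℕ) (x z : V) :
    ∑ x' ∈ univ.filter (fun x' => G.Adj x x'), pairCount G i j x' z =
      c (i + 1) * pairCount G (i + 1) j x z + ((b 0 : ℝ) - b i - c i) * pairCount G i j x z +
        (if i = 0 then 0 else b (i - 1) * pairCount G (i - 1) j x z) := by
  rw [sum_pairCount]
  simp only [h.sum_dlt_nbr i, pairCount, mul_add, sum_add_distrib, mul_sum]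
  congr 1
  · congr 1 <;> exact sum_congr rfl fun y _ => by ring
  · split_ifs
    · simp
    · exact sum_congr rfl fun y _ => by ring

/-- `pairCount` depends on `x` and `z` through their distance only: a distance-regular graph gives
rise to an association scheme. Induction on `i` by means of `pairCount_rec`. -/
theorem pairCount_dist (h : IsDRG G D b c) (j : ℕ) : ∀ i, ∃ F : ℕ → ℝ, ∀ x z,
    pairCount G i j x z = F (G.dist z x) := by
  have zero : ∃ F : ℕ → ℝ, ∀ x z, pairCount G 0 j x z = F (G.dist z x) := by
    refine ⟨dlt j, fun x z => ?_⟩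
    simp only [pairCount]
    rw [sum_eq_single x]
    · simp [dlt]
    · intro y _ hne
      have : G.dist x y ≠ 0 := by rw [Ne, h.1.dist_eq_zero_iff]; exact hne.symm
      simp [dlt, this]
    · simp
  have nxt : ∀ i, (∃ F : ℕ → ℝ, ∀ x z, pairCount G i j x z = F (G.dist z x)) →
      (i = 0 ∨ ∃ F : ℕ → ℝ, ∀ x z, pairCount G (i - 1) j x z = F (G.dist z x)) →
      ∃ F : ℕ → ℝ, ∀ x z, pairCount G (i + 1) j x z = F (G.dist z x) := by
    rintro i ⟨F, hF⟩ h2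
    by_cases hi : i + 1 ≤ D
    · have hc : (c (i + 1) : ℝ) ≠ 0 := by
        have := h.c_pos (i := i + 1) (by omega) hi
        exact_mod_cast this.ne'
      obtain ⟨F', hF'⟩ : ∃ F' : ℕ → ℝ, ∀ x z,
          (if i = 0 then 0 else b (i - 1) * pairCount G (i - 1) j x z) = F' (G.dist z x) := by
        rcases h2 with h2 | ⟨F', hF'⟩
        · exact ⟨fun _ => 0, fun x z => by simp [h2]⟩
        · refine ⟨fun m => if i = 0 then 0 else b (i - 1) * F' m, fun x z => ?_⟩
          rw [hF']
      refine ⟨fun m => (c m * F (m - 1) + ((b 0 : ℝ) - b m - c m) * F m + b m * F (m + 1)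
        - ((b 0 : ℝ) - b i - c i) * F m - F' m) / c (i + 1), fun x z => ?_⟩
      have := h.pairCount_rec i j x z
      simp only [hF, hF', h.sum_nbr] at this
      rw [eq_div_iff hc]
      linarith
    · refine ⟨fun _ => 0, fun x z => ?_⟩
      simp only [pairCount]
      refine sum_eq_zero fun y _ => ?_
      have := h.dist_le x y
      simp only [dlt]
      rw [if_neg (by omega)]; simp
  have both : ∀ i, (∃ F : ℕ → ℝ, ∀ x z, pairCount G i j x z = F (G.dist z x)) ∧
      (i = 0 ∨ ∃ F : ℕ → ℝ, ∀ x z, pairCount G (i - 1) j x z = F (G.dist z x)) := by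
    intro i
    induction i with
    | zero => exact ⟨zero, Or.inl rfl⟩
    | succ i ih => exact ⟨nxt i ih.1 ih.2, Or.inr ih.1⟩
  exact fun i => (both i).1

theorem sum_walks (h : IsDRG G D b c) (F : ℕ → ℝ) (x : V) :
    ∑ m ∈ univ.filter (fun m => G.Adj x m), ∑ z ∈ univ.filter (fun z => G.Adj m z),
      F (G.dist x z) = b 0 * (F 0 + ((b 0 : ℝ) - b 1 - 1) * F 1 + b 1 * F 2) := by
  rw [sum_congr rfl (g := fun _ => F 0 + ((b 0 : ℝ) - b 1 - 1) * F 1 + b 1 * F 2)]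
  · rw [sum_const, h.card_nbr, nsmul_eq_mul]
  · intro m hm
    have hm' : G.dist x m = 1 := SimpleGraph.dist_eq_one_iff_adj.2 (mem_filter.1 hm).2
    rw [h.sum_nbr, hm', h.2.2.2.2.1]
    simp

/-- Double counting of the edges between the spheres of radius `i` and `i + 1` around `x`. -/
theorem sphere_rec (h : IsDRG G D b c) (x : V) (i : ℕ) :
    (∑ y, dlt (i + 1) (G.dist x y)) * c (i + 1) = (∑ y, dlt i (G.dist x y)) * b i := by
  have e1 : ∀ y, dlt (i + 1) (G.dist x y) * c (i + 1) =
      ∑ y' ∈ univ.filter (fun y' => G.Adj y y'), dlt (i + 1) (G.dist x y) * dlt i (G.dist x y') := by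
    intro y
    rw [← mul_sum, h.sum_nbr]
    simp only [dlt]
    by_cases hy : G.dist x y = i + 1
    · rw [hy]; simp [show ¬ i + 1 + 1 = i by omega]
    · simp [hy]
  have e2 : ∀ y, dlt i (G.dist x y) * b i =
      ∑ y' ∈ univ.filter (fun y' => G.Adj y y'), dlt i (G.dist x y) * dlt (i + 1) (G.dist x y') := by
    intro y
    rw [← mul_sum, h.sum_nbr]
    simp only [dlt]
    by_cases hy : G.dist x y = i
    · rw [hy, if_neg (show ¬ (i - 1 = i + 1) by omega)]; simp
    · simp [hy]
  rw [sum_mul, sum_mul, sum_congr rfl fun y _ => e1 y, sum_congr rfl fun y _ => e2 y]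
  simp only [sum_filter]
  rw [sum_comm]
  refine sum_congr rfl fun y _ => sum_congr rfl fun y' _ => ?_
  simp only [G.adj_comm y y', mul_comm]

theorem sphere_pos (h : IsDRG G D b c) (x : V) {i : ℕ} (hi : i ≤ D) :
    0 < ∑ y, dlt i (G.dist x y) := by
  obtain ⟨y, hy⟩ := h.exists_at x i hi
  refine sum_pos' (fun y _ => by simp only [dlt]; split_ifs <;> norm_num) ⟨y, mem_univ _, ?_⟩
  simp [dlt, hy]

/-- Terwilliger's inequality `c_{i+2} - b_{i+2} ≥ c_{i+1} - b_{i+1} + a₁ + 2`, valid in the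
presence of a quadrangle `α, β, γ, β'`. A pointwise inequality between the distances of a vertex
to the four corners is summed over all vertices, which gives a linear inequality between
intersection numbers `p^1` and `p^2`; these are then evaluated in terms of the `b` and `c`. -/
theorem terwilliger (h : IsDRG G D b c) {α β γ β' : V} (h1 : G.Adj α β) (h2 : G.Adj β γ)
    (h3 : G.Adj γ β') (h4 : G.Adj β' α) (hαγ : G.dist α γ = 2) (hββ : G.dist β β' = 2)
    (i : ℕ) (hi : i + 2 ≤ D) :
    (b 0 : ℝ) - b 1 + 1 + c (i + 1) + b (i + 2) ≤ c (i + 2) + b (i + 1) := by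
  obtain ⟨FP, hP⟩ := h.pairCount_dist (i + 1) (i + 2)
  obtain ⟨FQ, hQ⟩ := h.pairCount_dist i (i + 2)
  obtain ⟨FQ', hQ'⟩ := h.pairCount_dist (i + 1) (i + 3)
  have a1 : ∀ {u v : V}, G.Adj u v → G.dist u v = 1 := fun h => SimpleGraph.dist_eq_one_iff_adj.2 h
  have main : 2 * FQ 2 + 2 * FQ' 2 + FP 2 ≤ 2 * FP 1 := by
    have pw : ∀ y : V,
        dlt (i + 2) (G.dist β y) * dlt i (G.dist β' y)
        + dlt (i + 3) (G.dist β y) * dlt (i + 1) (G.dist β' y)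
        + dlt (i + 2) (G.dist β y) * dlt (i + 1) (G.dist β' y)
        + dlt (i + 3) (G.dist γ y) * dlt (i + 1) (G.dist α y)
        + dlt (i + 2) (G.dist α y) * dlt i (G.dist γ y) ≤
        dlt (i + 2) (G.dist β y) * dlt (i + 1) (G.dist α y)
        + dlt (i + 2) (G.dist α y) * dlt (i + 1) (G.dist β' y) := by
      intro y
      have s : ∀ {u v : V}, G.Adj u v → G.dist u y ≤ G.dist v y + 1 ∧
          G.dist v y ≤ G.dist u y + 1 := by
        intro u v huv
        rw [SimpleGraph.dist_comm (u := u), SimpleGraph.dist_comm (u := v)]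
        exact ⟨h.step y huv.symm, h.step y huv⟩
      have s1 := s h1
      have s2 := s h2
      have s3 := s h3
      have s4 := s h4
      generalize G.dist α y = A at *
      generalize G.dist β y = B at *
      generalize G.dist γ y = C at *
      generalize G.dist β' y = B' at *
      simp only [dlt]
      split_ifs <;> first | omega | norm_num
    have hs := sum_le_sum fun y (_ : y ∈ univ) => pw y
    simp only [sum_add_distrib] at hs
    change pairCount G (i + 2) i β β' + pairCount G (i + 3) (i + 1) β β' +
      pairCount G (i + 2) (i + 1) β β' + pairCount G (i + 3) (i + 1) γ α +
      pairCount G (i + 2) i α γ ≤ pairCount G (i + 2) (i + 1) β α +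
      pairCount G (i + 2) (i + 1) α β' at hs
    rw [hP, hP, hP, hQ, hQ, hQ', hQ', hαγ, a1 h1, a1 h4, SimpleGraph.dist_comm (u := β'), hββ,
      SimpleGraph.dist_comm (u := γ), hαγ] at hs
    linarith
  -- `κ` and `κ'` are the sizes of the spheres of radius `i + 2` and `i + 3`; the values of `FP`,
  -- `FQ`, `FQ'` follow by counting over walks of length one and two starting at `α`
  set κ := ∑ y, dlt (i + 2) (G.dist α y) with hκ
  set κ' := ∑ y, dlt (i + 3) (G.dist α y) with hκ'
  have κpos : 0 < κ := h.sphere_pos α hi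
  have srec : κ' * c (i + 3) = κ * b (i + 2) := h.sphere_rec α (i + 2)
  -- `pairCount` summed over the second argument
  have psum : ∀ (m l : ℕ) (s : Finset V), ∑ z ∈ s, pairCount G m l α z =
      ∑ y, dlt m (G.dist α y) * ∑ z ∈ s, dlt l (G.dist y z) := by
    intro m l s
    rw [← sum_pairCount]
    refine sum_congr rfl fun z _ => ?_
    simp only [pairCount]
    exact sum_congr rfl fun y _ => mul_comm _ _
  have cP : b 0 * FP 1 = κ * c (i + 2) := by
    have e := psum (i + 2) (i + 1) (univ.filter fun z => G.Adj α z)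
    rw [sum_congr rfl (g := fun _ => FP 1), sum_const, h.card_nbr, nsmul_eq_mul] at e
    · rw [e, hκ, sum_mul]
      refine sum_congr rfl fun y _ => ?_
      rw [h.sum_nbr, SimpleGraph.dist_comm (u := y)]
      simp only [dlt]
      by_cases hy : G.dist α y = i + 2
      · rw [hy]; simp
      · simp [hy]
    · intro z hz
      rw [hP, a1 (mem_filter.1 hz).2.symm]
  have walk : ∀ (m l : ℕ) (F : ℕ → ℝ), (∀ x z, pairCount G m l x z = F (G.dist z x)) →
      b 0 * (F 0 + ((b 0 : ℝ) - b 1 - 1) * F 1 + b 1 * F 2) =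
      ∑ y, dlt m (G.dist α y) * ∑ x' ∈ univ.filter (fun x' => G.Adj α x'),
        ∑ z ∈ univ.filter (fun z => G.Adj x' z), dlt l (G.dist y z) := by
    intro m l F hF
    rw [← h.sum_walks F α]
    have : ∀ z, F (G.dist α z) = pairCount G m l α z := by
      intro z; rw [hF, SimpleGraph.dist_comm]
    simp only [this, psum]
    rw [sum_comm]
    simp only [mul_sum]
  -- inner double sums depend on `dist α y` only
  have inner : ∀ (l : ℕ) (y : V), ∑ x' ∈ univ.filter (fun x' => G.Adj α x'),
        ∑ z ∈ univ.filter (fun z => G.Adj x' z), dlt l (G.dist y z) =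
      c (G.dist α y) * (fun n => c n * dlt l (n - 1) + ((b 0 : ℝ) - b n - c n) * dlt l n +
        b n * dlt l (n + 1)) (G.dist α y - 1) +
      ((b 0 : ℝ) - b (G.dist α y) - c (G.dist α y)) *
        (fun n => c n * dlt l (n - 1) + ((b 0 : ℝ) - b n - c n) * dlt l n +
        b n * dlt l (n + 1)) (G.dist α y) +
      b (G.dist α y) * (fun n => c n * dlt l (n - 1) + ((b 0 : ℝ) - b n - c n) * dlt l n +
        b n * dlt l (n + 1)) (G.dist α y + 1) := by
    intro l y
    rw [sum_congr rfl fun x' _ => h.sum_nbr (dlt l) y x']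
    rw [h.sum_nbr (fun n => c n * dlt l (n - 1) + ((b 0 : ℝ) - b n - c n) * dlt l n +
        b n * dlt l (n + 1)) y α, SimpleGraph.dist_comm (u := y)]
  have F0 : ∀ (m l : ℕ) (F : ℕ → ℝ), (∀ x z, pairCount G m l x z = F (G.dist z x)) → m ≠ l →
      F 0 = 0 := by
    intro m l F hF hne
    have := hF α α
    rw [SimpleGraph.dist_self] at this
    rw [← this]
    refine sum_eq_zero fun y _ => ?_
    simp only [dlt]
    split_ifs <;> first | omega | simp
  have F1 : ∀ (m l : ℕ) (F : ℕ → ℝ), (∀ x z, pairCount G m l x z = F (G.dist z x)) → m = l + 2 →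
      F 1 = 0 := by
    intro m l F hF hne
    have := hF α β
    rw [a1 h1.symm] at this
    rw [← this]
    refine sum_eq_zero fun y _ => ?_
    have s1 := h.step y h1
    have s2 := h.step y h1.symm
    rw [SimpleGraph.dist_comm (u := α), SimpleGraph.dist_comm (u := β)]
    simp only [dlt]
    split_ifs <;> first | omega | simp
  have cQ : b 0 * b 1 * FQ 2 = κ * c (i + 2) * c (i + 1) := by
    have e := walk _ _ FQ hQ
    rw [F0 _ _ FQ hQ (by omega), F1 _ _ FQ hQ rfl] at e
    have e2 : b 0 * b 1 * FQ 2 = b 0 * (0 + ((b 0 : ℝ) - b 1 - 1) * 0 + b 1 * FQ 2) := by ring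
    rw [e2, e, hκ, mul_assoc, sum_mul]
    refine sum_congr rfl fun y _ => ?_
    rw [inner]
    by_cases hy : G.dist α y = i + 2
    · rw [hy]; simp [dlt, show ¬ i + 1 + 1 = i by omega, show ¬ i + 2 + 1 = i by omega,
        show ¬ i + 2 + 1 + 1 = i by omega]
    · simp [hy, dlt]
  have cQ' : b 0 * b 1 * FQ' 2 = κ' * c (i + 3) * c (i + 2) := by
    have e := walk _ _ FQ' hQ'
    rw [F0 _ _ FQ' hQ' (by omega), F1 _ _ FQ' hQ' rfl] at e
    have e2 : b 0 * b 1 * FQ' 2 = b 0 * (0 + ((b 0 : ℝ) - b 1 - 1) * 0 + b 1 * FQ' 2) := by ring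
    rw [e2, e, hκ', mul_assoc, sum_mul]
    refine sum_congr rfl fun y _ => ?_
    rw [inner]
    by_cases hy : G.dist α y = i + 3
    · rw [hy]; simp [dlt, show ¬ i + 1 + 1 = i by omega, show ¬ i + 2 + 1 = i by omega,
        show ¬ i + 2 + 1 + 1 = i by omega]
    · simp [hy, dlt]
  have cR : b 0 * (((b 0 : ℝ) - b 1 - 1) * FP 1 + b 1 * FP 2) =
      κ * (c (i + 2) * (((b 0 : ℝ) - b (i + 1) - c (i + 1)) +
        ((b 0 : ℝ) - b (i + 2) - c (i + 2)))) := by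
    have e := walk _ _ FP hP
    rw [F0 _ _ FP hP (by omega), zero_add] at e
    rw [e, hκ, sum_mul]
    refine sum_congr rfl fun y _ => ?_
    rw [inner]
    by_cases hy : G.dist α y = i + 2
    · rw [hy]; simp [dlt, show ¬ i + 1 + 1 = i by omega, show ¬ i + 2 + 1 = i by omega,
        show ¬ i + 2 + 1 + 1 = i by omega]
      ring
    · simp [hy, dlt]
  have cpos : (0 : ℝ) < c (i + 2) := by exact_mod_cast h.c_pos (by omega) hi
  have b1n : (0 : ℝ) ≤ b 0 * b 1 := by positivity
  have m2 := mul_le_mul_of_nonneg_left main b1n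
  have fin : κ * c (i + 2) * (2 * c (i + 1) + 2 * b (i + 2) +
      (((b 0 : ℝ) - b (i + 1) - c (i + 1)) + ((b 0 : ℝ) - b (i + 2) - c (i + 2)))
      - ((b 0 : ℝ) - b 1 - 1)) ≤ κ * c (i + 2) * (2 * b 1) := by
    have k1 : (b 0 : ℝ) * b 1 * FP 2 = κ * (c (i + 2) * (((b 0 : ℝ) - b (i + 1) - c (i + 1)) +
        ((b 0 : ℝ) - b (i + 2) - c (i + 2)))) - ((b 0 : ℝ) - b 1 - 1) * (κ * c (i + 2)) := by
      rw [← cR, ← cP]; ring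
    rw [srec] at cQ'
    have k2 : (b 0 : ℝ) * b 1 * (2 * FP 1) = 2 * b 1 * (κ * c (i + 2)) := by rw [← cP]; ring
    rw [k2] at m2
    have k3 : (b 0 : ℝ) * b 1 * (2 * FQ 2 + 2 * FQ' 2 + FP 2) =
      2 * (b 0 * b 1 * FQ 2) + 2 * (b 0 * b 1 * FQ' 2) + b 0 * b 1 * FP 2 := by ring
    rw [k3, k1, cQ, cQ'] at m2
    linarith
  have := le_of_mul_le_mul_left fin (by positivity)
  linarith

end IsDRG
end Terwilliger

/-! ### Line systems and the eigenvalue −3 -/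

section Spectral
open scoped Classical
variable {V : Type*} [Fintype V] {G : SimpleGraph V} {D : ℕ} {b c : ℕ → ℕ}

/-- A family of cliques (`lines`) such that every edge lies in exactly one of them and every
vertex lies in exactly three of them. -/
structure IsLineSystem (G : SimpleGraph V) (𝓛 : Finset (Finset V)) : Prop where
  clique : ∀ L ∈ 𝓛, ∀ u ∈ L, ∀ v ∈ L, u ≠ v → G.Adj u v
  unique : ∀ L ∈ 𝓛, ∀ M ∈ 𝓛, ∀ u v, u ≠ v → u ∈ L → v ∈ L → u ∈ M → v ∈ M → L = M
  cover : ∀ u v, G.Adj u v → ∃ L ∈ 𝓛, u ∈ L ∧ v ∈ L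
  three : ∀ u, #(𝓛.filter (fun L => u ∈ L)) = 3

/-- The lines through `y`, each with `y` removed, partition the neighbourhood of `y`. -/
theorem sum_lines_erase {𝓛 : Finset (Finset V)}
    (clique : ∀ L ∈ 𝓛, ∀ u ∈ L, ∀ v ∈ L, u ≠ v → G.Adj u v)
    (unique : ∀ L ∈ 𝓛, ∀ M ∈ 𝓛, ∀ u v, u ≠ v → u ∈ L → v ∈ L → u ∈ M → v ∈ M → L = M)
    (cover : ∀ u v, G.Adj u v → ∃ L ∈ 𝓛, u ∈ L ∧ v ∈ L) {R : Type*} [AddCommMonoid R]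
    (f : V → R) (y : V) :
    ∑ L ∈ 𝓛.filter (fun L => y ∈ L), ∑ z ∈ L.erase y, f z =
      ∑ z ∈ univ.filter (fun z => G.Adj y z), f z := by
  rw [← sum_biUnion]
  · refine sum_congr ?_ fun _ _ => rfl
    ext z
    simp only [mem_biUnion, mem_filter, mem_erase, mem_univ, true_and]
    constructor
    · rintro ⟨L, ⟨hL, hy⟩, hne, hz⟩
      exact clique L hL y hy z hz hne.symm
    · intro hz
      obtain ⟨L, hL, hy, hz'⟩ := cover y z hz
      exact ⟨L, ⟨hL, hy⟩, hz.ne', hz'⟩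
  · intro L hL M hM hne
    simp only [coe_filter, Set.mem_ofPred_eq] at hL hM
    refine Finset.disjoint_left.2 fun z hz hz' => hne ?_
    rw [mem_erase] at hz hz'
    exact unique L hL.1 M hM.1 y z hz.1.symm hL.2 hz.2 hM.2 hz'.2

namespace IsLineSystem
variable {𝓛 : Finset (Finset V)}

theorem nbr_sum (hS : IsLineSystem G 𝓛) (f : V → ℝ) (y : V) :
    ∑ z ∈ univ.filter (fun z => G.Adj y z), f z + 3 * f y =
      ∑ L ∈ 𝓛.filter (fun L => y ∈ L), ∑ z ∈ L, f z := by
  rw [← sum_lines_erase hS.clique hS.unique hS.cover f y]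
  have : ∀ L ∈ 𝓛.filter (fun L => y ∈ L), ∑ z ∈ L, f z = ∑ z ∈ L.erase y, f z + f y := by
    intro L hL
    rw [sum_erase_add _ _ (mem_filter.1 hL).2]
  rw [sum_congr rfl this, sum_add_distrib, sum_const, hS.three]
  simp

theorem sum_sq (hS : IsLineSystem G 𝓛) (f : V → ℝ) :
    ∑ L ∈ 𝓛, (∑ z ∈ L, f z) ^ 2 =
      ∑ y, f y * (∑ z ∈ univ.filter (fun z => G.Adj y z), f z + 3 * f y) := by
  have e : ∀ y, f y * (∑ z ∈ univ.filter (fun z => G.Adj y z), f z + 3 * f y) =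
      ∑ L ∈ 𝓛, if y ∈ L then f y * ∑ z ∈ L, f z else 0 := by
    intro y
    rw [hS.nbr_sum, mul_sum, sum_filter]
  rw [sum_congr rfl fun y _ => e y, sum_comm]
  refine sum_congr rfl fun L _ => ?_
  rw [sq, sum_mul, ← sum_filter]
  refine sum_congr ?_ fun _ _ => rfl
  ext z; simp

/-- An eigenfunction for the eigenvalue `-3` has vanishing sum on every line. -/
theorem line_sum_eq_zero (hS : IsLineSystem G 𝓛) (f : V → ℝ)
    (hf : ∀ y, ∑ z ∈ univ.filter (fun z => G.Adj y z), f z = -3 * f y) {L : Finset V}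
    (hL : L ∈ 𝓛) : ∑ z ∈ L, f z = 0 := by
  have h0 := hS.sum_sq f
  rw [sum_eq_zero (s := univ) fun y _ => by rw [hf y]; ring] at h0
  have := (sum_eq_zero_iff_of_nonneg fun L _ => sq_nonneg _).1 h0 L hL
  exact pow_eq_zero_iff (two_ne_zero) |>.1 this

/-- With fewer lines than vertices, some nonzero function has sum zero on every line; by `nbr_sum` it
is an eigenfunction for the eigenvalue `-3`. -/
theorem exists_eigen (hS : IsLineSystem G 𝓛) (hlt : #𝓛 < Fintype.card V) :
    ∃ f : V → ℝ, f ≠ 0 ∧ ∀ y, ∑ z ∈ univ.filter (fun z => G.Adj y z), f z = -3 * f y := by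
  let T : (V → ℝ) →ₗ[ℝ] (𝓛 → ℝ) :=
    { toFun := fun f L => ∑ z ∈ L.1, f z
      map_add' := fun f g => by ext L; simp [sum_add_distrib]
      map_smul' := fun r f => by ext L; simp [mul_sum] }
  have hk : LinearMap.ker T ≠ ⊥ := by
    apply LinearMap.ker_ne_bot_of_finrank_lt
    simpa using hlt
  obtain ⟨f, hf, hne⟩ := (Submodule.ne_bot_iff _).1 hk
  refine ⟨f, hne, fun y => ?_⟩
  have e := hS.nbr_sum f y
  rw [sum_eq_zero (s := 𝓛.filter _)] at e
  · linarith
  · intro L hL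
    have := congrFun (LinearMap.mem_ker.1 hf) ⟨L, (mem_filter.1 hL).1⟩
    exact this

end IsLineSystem

/-- Averaging an eigenfunction over the spheres around a vertex gives a function of the distance
which satisfies the eigenvalue equation around every vertex. -/
theorem IsDRG.exists_radial (h : IsDRG G D b c) (θ : ℝ) (f : V → ℝ) (hne : f ≠ 0)
    (hf : ∀ y, ∑ z ∈ univ.filter (fun z => G.Adj y z), f z = θ * f y) :
    ∃ τ : ℕ → ℝ, τ 0 ≠ 0 ∧ ∀ i ≤ D,
      c i * τ (i - 1) + ((b 0 : ℝ) - b i - c i) * τ i + b i * τ (i + 1) = θ * τ i := by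
  obtain ⟨x, hx⟩ := Function.ne_iff.1 hne
  set κ : ℕ → ℝ := fun i => ∑ y, dlt i (G.dist x y) with hκ
  set T : ℕ → ℝ := fun i => ∑ y, dlt i (G.dist x y) * f y with hT
  have T0 : T 0 = f x := by
    rw [hT]
    simp only
    rw [sum_eq_single x]
    · simp [dlt]
    · intro y _ hy
      have : G.dist x y ≠ 0 := by rw [Ne, h.1.dist_eq_zero_iff]; exact hy.symm
      simp [dlt, this]
    · simp
  have κT : ∀ i, T i = κ i * (T i / κ i) := by
    intro i
    by_cases h0 : κ i = 0
    · have h1 : ∀ y ∈ univ, dlt i (G.dist x y) = 0 :=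
        (sum_eq_zero_iff_of_nonneg fun y _ => by simp only [dlt]; split_ifs <;> norm_num).1 h0
      rw [h0, zero_mul]
      exact sum_eq_zero fun y hy => by rw [h1 y hy, zero_mul]
    · field_simp
  have hrec : ∀ i, c (i + 1) * T (i + 1) + ((b 0 : ℝ) - b i - c i) * T i +
      (if i = 0 then 0 else b (i - 1) * T (i - 1)) = θ * T i := by
    intro i
    have e1 : θ * T i = ∑ y, ∑ z ∈ univ.filter (fun z => G.Adj y z),
        dlt i (G.dist x y) * f z := by
      rw [hT]
      simp only [mul_sum]
      refine sum_congr rfl fun y _ => ?_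
      rw [← mul_sum, hf]; ring
    have e2 : ∑ y, ∑ z ∈ univ.filter (fun z => G.Adj y z), dlt i (G.dist x y) * f z =
        ∑ z, f z * ∑ y ∈ univ.filter (fun y => G.Adj z y), dlt i (G.dist x y) := by
      simp only [sum_filter, mul_sum]
      rw [sum_comm]
      refine sum_congr rfl fun z _ => sum_congr rfl fun y _ => ?_
      simp only [G.adj_comm z y]
      split_ifs <;> ring
    rw [e1, e2, hT]
    simp only [mul_sum]
    rw [← sum_add_distrib]
    by_cases hi : i = 0
    · rw [if_pos hi, add_zero]
      refine sum_congr rfl fun z _ => ?_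
      rw [← mul_sum, h.sum_dlt_nbr, if_pos hi, SimpleGraph.dist_comm (u := z)]; ring
    · rw [if_neg hi, ← sum_add_distrib]
      refine sum_congr rfl fun z _ => ?_
      rw [← mul_sum, h.sum_dlt_nbr, if_neg hi, SimpleGraph.dist_comm (u := z)]; ring
  refine ⟨fun i => T i / κ i, ?_, fun i hi => ?_⟩
  · have : κ 0 ≠ 0 := (h.sphere_pos x (Nat.zero_le D)).ne'
    simp only [T0]
    exact div_ne_zero hx this
  · have hpos : 0 < κ i := h.sphere_pos x hi
    have s1 : κ (i + 1) * c (i + 1) = κ i * b i := h.sphere_rec x i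
    have r := hrec i
    rw [κT i, κT (i + 1)] at r
    simp only
    generalize hA : T i / κ i = A at *
    generalize hB : T (i + 1) / κ (i + 1) = B at *
    apply mul_left_cancel₀ hpos.ne'
    rcases Nat.eq_zero_or_pos i with h0 | h0
    · rw [if_pos h0] at r
      have c0 : c i = 0 := by rw [h0, h.2.2.2.1]
      rw [c0] at r ⊢
      push_cast at r ⊢
      linear_combination r - B * s1
    · rw [if_neg (by omega), κT (i - 1)] at r
      have s2 : κ (i - 1 + 1) * c (i - 1 + 1) = κ (i - 1) * b (i - 1) := h.sphere_rec x (i - 1)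
      rw [Nat.sub_add_cancel h0] at s2
      generalize T (i - 1) / κ (i - 1) = C at *
      linear_combination r - B * s1 + C * s2

/-- A radial eigenfunction of eigenvalue `-3` sums to zero over every line, from any base
vertex. -/
theorem IsDRG.radial_line_sum (h : IsDRG G D b c) {𝓛 : Finset (Finset V)}
    (hS : IsLineSystem G 𝓛) {τ : ℕ → ℝ} (hτ : ∀ i ≤ D,
      c i * τ (i - 1) + ((b 0 : ℝ) - b i - c i) * τ i + b i * τ (i + 1) = -3 * τ i)
    (x : V) {L : Finset V} (hL : L ∈ 𝓛) : ∑ z ∈ L, τ (G.dist x z) = 0 := by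
  apply hS.line_sum_eq_zero (fun z => τ (G.dist x z)) _ hL
  intro y
  rw [h.sum_nbr]
  exact hτ _ (h.dist_le x y)

end Spectral

/-! ### Construction of the lines -/

section Lines
open scoped Classical
variable {V : Type*} [Fintype V] {G : SimpleGraph V} {D : ℕ} {b c : ℕ → ℕ}

/-- The neighbours of `y` in the closed neighbourhood of `p`. -/
noncomputable def nearSet (G : SimpleGraph V) (y p : V) : Finset V :=
  univ.filter fun z => G.Adj y z ∧ (z = p ∨ G.Adj p z)

/-- The neighbours of `y` outside the closed neighbourhoods of `p` and `q`. -/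
noncomputable def farSet (G : SimpleGraph V) (y p q : V) : Finset V :=
  univ.filter fun z => G.Adj y z ∧ ¬ (z = p ∨ G.Adj p z) ∧ ¬ (z = q ∨ G.Adj q z)

/-- A maximal clique whose size satisfies two lower bounds; `a` stands for `a₁`. -/
structure IsLine (G : SimpleGraph V) (b c : ℕ → ℕ) (a : ℕ) (L : Finset V) : Prop where
  clique : ∀ u ∈ L, ∀ v ∈ L, u ≠ v → G.Adj u v
  maximal : ∀ z, (∀ u ∈ L, u ≠ z → G.Adj u z) → z ∈ L
  size₁ : b 0 + 1 ≤ #L + 2 * a + 2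
  size₂ : c 2 + 3 * a + 7 ≤ #L + b 0

theorem exists_maximal_clique (S : Finset V) (hS : ∀ u ∈ S, ∀ v ∈ S, u ≠ v → G.Adj u v) :
    ∃ L, S ⊆ L ∧ (∀ u ∈ L, ∀ v ∈ L, u ≠ v → G.Adj u v) ∧
      ∀ z, (∀ u ∈ L, u ≠ z → G.Adj u z) → z ∈ L := by
  obtain ⟨L, hSL, hL⟩ := Finite.exists_le_maximal
    (p := fun L : Finset V => ∀ u ∈ L, ∀ v ∈ L, u ≠ v → G.Adj u v) hS
  refine ⟨L, hSL, hL.prop, fun z hz => ?_⟩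
  have hc : ∀ u ∈ insert z L, ∀ v ∈ insert z L, u ≠ v → G.Adj u v := by
    intro u hu v hv hne
    rw [mem_insert] at hu hv
    rcases hu with rfl | hu <;> rcases hv with rfl | hv
    · exact absurd rfl hne
    · exact (hz v hv hne.symm).symm
    · exact hz u hu hne
    · exact hL.prop u hu v hv hne
  exact hL.le_of_ge hc (subset_insert z L) (mem_insert_self z L)

/-- For nonadjacent neighbours `p`, `q` of `y`, the absence of 4-claws makes `farSet` a clique. -/
theorem farSet_clique (h4 : ¬ HasClaw G 4) {y p q : V} (yp : G.Adj y p) (yq : G.Adj y q)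
    (hne : p ≠ q) (hn : ¬ G.Adj p q) :
    ∀ u ∈ farSet G y p q, ∀ v ∈ farSet G y p q, u ≠ v → G.Adj u v := by
  intro u hu v hv huv
  simp only [farSet, mem_filter, mem_univ, true_and, not_or] at hu hv
  exact adj_of_no_claw h4 yp yq hu.1 hv.1 hne (Ne.symm hu.2.1.1) (Ne.symm hv.2.1.1)
    (Ne.symm hu.2.2.1) (Ne.symm hv.2.2.1) huv hn hu.2.1.2 hv.2.1.2 hu.2.2.2 hv.2.2.2

namespace IsDRG
variable {a : ℕ}

theorem card_nearSet (h : IsDRG G D b c) (ha : a + 1 + b 1 = b 0) {y p : V} (yp : G.Adj y p) :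
    #(nearSet G y p) = a + 1 := by
  have e : nearSet G y p = insert p (univ.filter fun z => G.Adj y z ∧ G.Adj p z) := by
    ext z
    simp only [nearSet, mem_filter, mem_univ, true_and, mem_insert]
    constructor
    · rintro ⟨h1, h2 | h2⟩
      · exact Or.inl h2
      · exact Or.inr ⟨h1, h2⟩
    · rintro (rfl | ⟨h1, h2⟩)
      · exact ⟨yp, Or.inl rfl⟩
      · exact ⟨h1, Or.inr h2⟩
  rw [e, card_insert_of_notMem (by simp)]
  have := h.card_common_adj yp
  omega

theorem card_farSet (h : IsDRG G D b c) (ha : a + 1 + b 1 = b 0) {y p q : V} (yp : G.Adj y p)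
    (yq : G.Adj y q) :
    #(farSet G y p q) + 2 * (a + 1) = b 0 + #(nearSet G y p ∩ nearSet G y q) := by
  have h1 := card_union_add_card_inter (nearSet G y p) (nearSet G y q)
  rw [h.card_nearSet ha yp, h.card_nearSet ha yq] at h1
  have h2 : #(farSet G y p q) + #(nearSet G y p ∪ nearSet G y q) = b 0 := by
    rw [← h.card_nbr y, ← card_union_of_disjoint]
    · congr 1
      ext z
      simp only [farSet, nearSet, mem_union, mem_filter, mem_univ, true_and]
      tauto
    · refine Finset.disjoint_left.2 fun z hz hz' => ?_
      simp only [farSet, nearSet, mem_union, mem_filter, mem_univ, true_and] at hz hz'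
      tauto
  omega

/-- The second size bound: either all common neighbours of `p`, `q` other than `y` are adjacent
to `y`, or one of them lies at distance two from `y`, and then `farSet` contains `b₂` vertices. -/
theorem le_card_farSet (h : IsDRG G D b c) (ha : a + 1 + b 1 = b 0)
    (h5 : 5 * (a + 2) ≤ 2 * b 0) (hs : c 2 + 3 * (a + 2) ≤ b 2 + b 0)
    {y p q : V} (yp : G.Adj y p) (yq : G.Adj y q) (hne : p ≠ q) (hn : ¬ G.Adj p q) :
    c 2 + 3 * (a + 2) ≤ #(farSet G y p q) + b 0 := by
  have hpq : G.dist p q = 2 := (h.dist_eq_two_iff).2 ⟨hne, hn, y, yp.symm, yq⟩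
  have hc := h.card_common_two hpq
  have hf := h.card_farSet ha yp yq
  by_cases hw : ∃ w, G.Adj p w ∧ G.Adj q w ∧ w ≠ y ∧ ¬ G.Adj y w
  · obtain ⟨w, pw, qw, wy, nyw⟩ := hw
    have d2 : G.dist w y = 2 :=
      (h.dist_eq_two_iff).2 ⟨wy, fun hh => nyw hh.symm, p, pw.symm, yp.symm⟩
    have hb := h.card_b w y
    rw [d2] at hb
    have sub : (univ.filter fun z => G.Adj y z ∧ G.dist w z = 2 + 1) ⊆ farSet G y p q := by
      intro z hz
      simp only [farSet, mem_filter, mem_univ, true_and, not_or] at hz ⊢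
      have dp : G.dist w p = 1 := SimpleGraph.dist_eq_one_iff_adj.2 pw.symm
      have dq : G.dist w q = 1 := SimpleGraph.dist_eq_one_iff_adj.2 qw.symm
      refine ⟨hz.1, ⟨?_, fun hh => ?_⟩, ⟨?_, fun hh => ?_⟩⟩
      · rintro rfl; omega
      · have := h.step w hh; omega
      · rintro rfl; omega
      · have := h.step w hh; omega
    have := card_le_card sub
    omega
  · push Not at hw
    have e : (univ.filter fun z => G.Adj p z ∧ G.Adj q z) ⊆
        insert y (nearSet G y p ∩ nearSet G y q) := by
      intro z hz
      simp only [nearSet, mem_filter, mem_univ, true_and, mem_insert, mem_inter] at hz ⊢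
      by_cases hzy : z = y
      · exact Or.inl hzy
      · have := hw z hz.1 hz.2 hzy
        exact Or.inr ⟨⟨this, Or.inr hz.1⟩, this, Or.inr hz.2⟩
    have h1 := card_le_card e
    have h2 := card_insert_le y (nearSet G y p ∩ nearSet G y q)
    omega

/-- For nonadjacent neighbours `p`, `q` of `y`, the clique formed by `y` and `farSet G y p q` extends
to a line. -/
theorem exists_line (h : IsDRG G D b c) (h4 : ¬ HasClaw G 4) (ha : a + 1 + b 1 = b 0)
    (h5 : 5 * (a + 2) ≤ 2 * b 0) (hs : c 2 + 3 * (a + 2) ≤ b 2 + b 0)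
    {y p q : V} (yp : G.Adj y p) (yq : G.Adj y q) (hne : p ≠ q) (hn : ¬ G.Adj p q) :
    ∃ L, IsLine G b c a L ∧ insert y (farSet G y p q) ⊆ L := by
  have hadj : ∀ z ∈ farSet G y p q, G.Adj y z := fun z hz => (mem_filter.1 hz).2.1
  obtain ⟨L, hSL, hcl, hmax⟩ := exists_maximal_clique (G := G) (insert y (farSet G y p q)) (by
    intro u hu v hv huv
    rw [mem_insert] at hu hv
    rcases hu with rfl | hu <;> rcases hv with rfl | hv
    · exact absurd rfl huv
    · exact hadj v hv
    · exact (hadj u hu).symm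
    · exact farSet_clique h4 yp yq hne hn u hu v hv huv)
  have hcard := card_le_card hSL
  rw [card_insert_of_notMem (fun hy => (hadj y hy).ne rfl)] at hcard
  have h1 := h.card_farSet ha yp yq
  have h2 := h.le_card_farSet ha h5 hs yp yq hne hn
  exact ⟨L, ⟨hcl, hmax, by omega, by omega⟩, hSL⟩

/-- Two distinct lines share at most one vertex. By maximality there are nonadjacent vertices in the
two lines, so the intersection has at most `c₂` vertices, while the union of the lines through an
edge has at most `a₁ + 2`; this is incompatible with the size bounds. -/
theorem line_unique (h : IsDRG G D b c) (ha : a + 1 + b 1 = b 0) {L M : Finset V}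
    (hL : IsLine G b c a L) (hM : IsLine G b c a M) (y t : V) (hyt : y ≠ t)
    (yL : y ∈ L) (tL : t ∈ L) (yM : y ∈ M) (tM : t ∈ M) : L = M := by
  by_contra hne
  obtain ⟨u, hu, huM⟩ : ∃ u ∈ L, u ∉ M := by
    by_contra hcon
    push Not at hcon
    refine hne (Subset.antisymm hcon fun z hz => hL.maximal z fun u hu huz => ?_)
    exact hM.clique u (hcon u hu) z hz huz
  obtain ⟨v, hv, hvu, hn⟩ : ∃ v ∈ M, v ≠ u ∧ ¬ G.Adj v u := by
    by_contra hcon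
    push Not at hcon
    exact huM (hM.maximal u hcon)
  have hvL : v ∉ L := fun hvL => hn (hL.clique v hvL u hu hvu)
  have neu : ∀ z ∈ M, z ≠ u := fun z hz e => huM (e ▸ hz)
  have nev : ∀ z ∈ L, z ≠ v := fun z hz e => hvL (e ▸ hz)
  have d2 : G.dist v u = 2 := (h.dist_eq_two_iff).2 ⟨hvu, hn, y,
    hM.clique v hv y yM (nev y yL).symm, hL.clique y yL u hu (neu y yM)⟩
  have h1 : #(L ∩ M) ≤ c 2 := by
    rw [← h.card_common_two d2]
    refine card_le_card fun z hz => ?_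
    rw [mem_inter] at hz
    simp only [mem_filter, mem_univ, true_and]
    exact ⟨hM.clique v hv z hz.2 (nev z hz.1).symm, hL.clique u hu z hz.1 (neu z hz.2).symm⟩
  have h2 : #(L ∪ M) ≤ a + 2 := by
    have hyt' : G.Adj y t := hL.clique y yL t tL hyt
    have hc := h.card_common_adj hyt'
    have sub : L ∪ M ⊆ insert y (insert t (univ.filter fun z => G.Adj y z ∧ G.Adj t z)) := by
      intro z hz
      simp only [mem_filter, mem_univ, true_and, mem_insert]
      by_cases hzy : z = y
      · exact Or.inl hzy
      by_cases hzt : z = t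
      · exact Or.inr (Or.inl hzt)
      refine Or.inr (Or.inr ?_)
      rcases mem_union.1 hz with hz | hz
      · exact ⟨hL.clique y yL z hz (Ne.symm hzy), hL.clique t tL z hz (Ne.symm hzt)⟩
      · exact ⟨hM.clique y yM z hz (Ne.symm hzy), hM.clique t tM z hz (Ne.symm hzt)⟩
    have i1 := card_le_card sub
    have i2 := card_insert_le y (insert t (univ.filter fun z => G.Adj y z ∧ G.Adj t z))
    have i3 := card_insert_le t (univ.filter fun z => G.Adj y z ∧ G.Adj t z)
    omega
  have h3 := card_union_add_card_inter L M
  have := hL.size₁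
  have := hM.size₂
  omega

/-- Every neighbour of `y` belongs to a coclique of size three among the neighbours of `y`. -/
theorem exists_coclique (h : IsDRG G D b c) (ha : a + 1 + b 1 = b 0)
    (h5 : 5 * (a + 2) ≤ 2 * b 0) {y t : V} (yt : G.Adj y t) :
    ∃ p q, G.Adj y p ∧ G.Adj y q ∧ p ≠ q ∧ ¬ G.Adj p q ∧ t ≠ p ∧ ¬ G.Adj t p ∧ t ≠ q ∧
      ¬ G.Adj t q := by
  have c1 := h.card_nearSet ha yt
  have hN := h.card_nbr y
  obtain ⟨p, hp, hpt⟩ : ∃ p ∈ univ.filter (fun z => G.Adj y z), p ∉ nearSet G y t := by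
    by_contra hcon
    push Not at hcon
    have := card_le_card hcon
    omega
  have yp : G.Adj y p := (mem_filter.1 hp).2
  have c2 := h.card_nearSet ha yp
  obtain ⟨q, hq, hqt⟩ : ∃ q ∈ univ.filter (fun z => G.Adj y z),
      q ∉ nearSet G y t ∪ nearSet G y p := by
    by_contra hcon
    push Not at hcon
    have := card_le_card hcon
    have := card_union_le (nearSet G y t) (nearSet G y p)
    omega
  have yq : G.Adj y q := (mem_filter.1 hq).2
  simp only [nearSet, mem_union, mem_filter, mem_univ, true_and, yp, yq, not_or] at hpt hqt
  exact ⟨p, q, yp, yq, Ne.symm hqt.2.1, hqt.2.2, Ne.symm hpt.1, hpt.2, Ne.symm hqt.1.1, hqt.1.2⟩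

/-- Bonferroni's inequality for the sets `nearSet` of three neighbours of `y`. -/
theorem bonferroni (h : IsDRG G D b c) (ha : a + 1 + b 1 = b 0) {y t p q : V}
    (yt : G.Adj y t) (yp : G.Adj y p) (yq : G.Adj y q) :
    3 * (a + 1) ≤ b 0 + #(nearSet G y t ∩ nearSet G y p) + #(nearSet G y t ∩ nearSet G y q) +
      #(nearSet G y p ∩ nearSet G y q) := by
  have c1 := h.card_nearSet ha yt
  have c2 := h.card_nearSet ha yp
  have c3 := h.card_nearSet ha yq
  have u1 := card_union_add_card_inter (nearSet G y t) (nearSet G y p)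
  have u2 := card_union_add_card_inter (nearSet G y t ∪ nearSet G y p) (nearSet G y q)
  have u3 : #(nearSet G y t ∪ nearSet G y p ∪ nearSet G y q) ≤ b 0 := by
    rw [← h.card_nbr y]
    refine card_le_card fun z hz => ?_
    simp only [nearSet, mem_union, mem_filter, mem_univ, true_and] at hz ⊢
    tauto
  have u4 : #((nearSet G y t ∪ nearSet G y p) ∩ nearSet G y q) ≤
      #(nearSet G y t ∩ nearSet G y q) + #(nearSet G y p ∩ nearSet G y q) := by
    rw [union_inter_distrib_right]
    exact card_union_le _ _
  omega

/-- The lines form a line system with fewer lines than vertices. A 3-coclique `t, p, q` among the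
neighbours of `y` gives three lines through `y`; by Bonferroni's inequality they leave no room for
a fourth one. As all lines have at least four vertices, there are fewer of them than vertices. -/
theorem exists_lineSystem (h : IsDRG G D b c) (h4 : ¬ HasClaw G 4) (ha : a + 1 + b 1 = b 0)
    (h5 : 5 * (a + 2) ≤ 2 * b 0) (hs : c 2 + 3 * (a + 2) ≤ b 2 + b 0) :
    ∃ 𝓛 : Finset (Finset V), IsLineSystem G 𝓛 ∧ #𝓛 < Fintype.card V := by
  set 𝓛 : Finset (Finset V) := univ.filter (IsLine G b c a) with h𝓛
  have mem : ∀ {L}, L ∈ 𝓛 ↔ IsLine G b c a L := by simp [h𝓛]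
  have clique : ∀ L ∈ 𝓛, ∀ u ∈ L, ∀ v ∈ L, u ≠ v → G.Adj u v := fun L hL => (mem.1 hL).clique
  have unique : ∀ L ∈ 𝓛, ∀ M ∈ 𝓛, ∀ u v, u ≠ v → u ∈ L → v ∈ L → u ∈ M → v ∈ M → L = M :=
    fun L hL M hM u v huv => h.line_unique ha (mem.1 hL) (mem.1 hM) u v huv
  have far : ∀ {y t p q : V}, G.Adj y t → t ≠ p → ¬ G.Adj t p → t ≠ q → ¬ G.Adj t q →
      t ∈ insert y (farSet G y p q) := by
    intro y t p q yt n1 n2 n3 n4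
    refine mem_insert_of_mem ?_
    simp only [farSet, mem_filter, mem_univ, true_and, not_or]
    exact ⟨yt, ⟨n1, fun e => n2 e.symm⟩, n3, fun e => n4 e.symm⟩
  have cover : ∀ u v, G.Adj u v → ∃ L ∈ 𝓛, u ∈ L ∧ v ∈ L := by
    intro y t yt
    obtain ⟨p, q, yp, yq, hne, hn, tp, ntp, tq, ntq⟩ := h.exists_coclique ha h5 yt
    obtain ⟨L, hL, hsub⟩ := h.exists_line h4 ha h5 hs yp yq hne hn
    exact ⟨L, mem.2 hL, hsub (mem_insert_self _ _), hsub (far yt tp ntp tq ntq)⟩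
  have three : ∀ u, #(𝓛.filter (fun L => u ∈ L)) = 3 := by
    intro y
    obtain ⟨t, yt⟩ : ∃ t, G.Adj y t := by
      have := h.card_nbr y
      have : 0 < #(univ.filter fun z => G.Adj y z) := by omega
      obtain ⟨t, ht⟩ := card_pos.1 this
      exact ⟨t, (mem_filter.1 ht).2⟩
    obtain ⟨p, q, yp, yq, pq, npq, tp, ntp, tq, ntq⟩ := h.exists_coclique ha h5 yt
    obtain ⟨L₁, hL₁, s₁⟩ := h.exists_line h4 ha h5 hs yp yq pq npq
    obtain ⟨L₂, hL₂, s₂⟩ := h.exists_line h4 ha h5 hs yt yq tq ntq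
    obtain ⟨L₃, hL₃, s₃⟩ := h.exists_line h4 ha h5 hs yt yp tp ntp
    have m₁ : t ∈ L₁ := s₁ (far yt tp ntp tq ntq)
    have m₂ : p ∈ L₂ := s₂ (far yp tp.symm (fun e => ntp e.symm) pq npq)
    have m₃ : q ∈ L₃ := s₃ (far yq tq.symm (fun e => ntq e.symm) pq.symm (fun e => npq e.symm))
    have n12 : L₁ ≠ L₂ := fun e => ntp (hL₁.clique t m₁ p (e ▸ m₂) tp)
    have n13 : L₁ ≠ L₃ := fun e => ntq (hL₁.clique t m₁ q (e ▸ m₃) tq)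
    have n23 : L₂ ≠ L₃ := fun e => npq (hL₂.clique p m₂ q (e ▸ m₃) pq)
    have yin : ∀ {S L : Finset V}, insert y S ⊆ L → y ∈ L := fun hh => hh (mem_insert_self _ _)
    have sub : ({L₁, L₂, L₃} : Finset (Finset V)) ⊆ 𝓛.filter (fun L => y ∈ L) := by
      intro L hL
      simp only [mem_insert, mem_singleton] at hL
      rcases hL with rfl | rfl | rfl
      · exact mem_filter.2 ⟨mem.2 hL₁, yin s₁⟩
      · exact mem_filter.2 ⟨mem.2 hL₂, yin s₂⟩
      · exact mem_filter.2 ⟨mem.2 hL₃, yin s₃⟩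
    have c3 : #({L₁, L₂, L₃} : Finset (Finset V)) = 3 := card_eq_three.2 ⟨_, _, _, n12, n13, n23, rfl⟩
    have heq : ({L₁, L₂, L₃} : Finset (Finset V)) = 𝓛.filter (fun L => y ∈ L) := by
      refine Subset.antisymm sub fun M hM => ?_
      by_contra hMn
      have hM' := mem_filter.1 hM
      have sub' : insert M ({L₁, L₂, L₃} : Finset (Finset V)) ⊆ 𝓛.filter (fun L => y ∈ L) :=
        insert_subset hM sub
      have tot := sum_lines_erase clique unique cover (fun _ => 1) y
      have hN := h.card_nbr y
      rw [sum_const, hN, smul_eq_mul, mul_one] at tot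
      have le := sum_le_sum_of_subset (f := fun L : Finset V => ∑ z ∈ L.erase y, 1) sub'
      rw [sum_insert hMn, sum_insert (by simp [n12, n13]), sum_insert (by simp [n23]),
        sum_singleton, tot] at le
      simp only [sum_const, smul_eq_mul, mul_one] at le
      have er : ∀ {S L : Finset V}, insert y S ⊆ L → y ∉ S → #S ≤ #(L.erase y) := by
        intro S L hh hy
        refine card_le_card fun z hz => mem_erase.2 ⟨?_, hh (mem_insert_of_mem hz)⟩
        rintro rfl; exact hy hz
      have nf : ∀ p q, y ∉ farSet G y p q := fun p q hy => (mem_filter.1 hy).2.1.ne rfl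
      have e1 := er s₁ (nf _ _)
      have e2 := er s₂ (nf _ _)
      have e3 := er s₃ (nf _ _)
      have e4 := card_erase_add_one hM'.2
      have e5 := (mem.1 hM'.1).size₁
      have f1 := h.card_farSet ha yp yq
      have f2 := h.card_farSet ha yt yq
      have f3 := h.card_farSet ha yt yp
      have bf := h.bonferroni ha yt yp yq
      omega
    rw [← heq, c3]
  refine ⟨𝓛, ⟨clique, unique, cover, three⟩, ?_⟩
  have dc : ∑ L ∈ 𝓛, #L = 3 * Fintype.card V := by
    have e : ∀ L : Finset V, #L = ∑ y : V, if y ∈ L then 1 else 0 := by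
      intro L; simp
    rw [sum_congr rfl fun L _ => e L, sum_comm]
    rw [sum_congr rfl (g := fun _ => 3)]
    · simp [mul_comm]
    · intro y _
      rw [← three y, card_filter]
  have l4 : #𝓛 * 4 ≤ ∑ L ∈ 𝓛, #L := by
    rw [← smul_eq_mul]
    refine card_nsmul_le_sum _ _ _ fun L hL => ?_
    have := (mem.1 hL).size₁
    omega
  have : 0 < Fintype.card V := Fintype.card_pos_iff.2 h.1.nonempty
  omega

end IsDRG
end Lines

/-! ### The case with a quadrangle -/

section Quadrangle
open scoped Classical
variable {V : Type*} [Fintype V] {G : SimpleGraph V} {D : ℕ} {b c : ℕ → ℕ}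

/-- Sum over `s` of a function of the distance from `x`, when only the distances `i` and `j`
occur and `i` occurs exactly `n` times. -/
theorem sum_two_dist (s : Finset V) (x : V) (τ : ℕ → ℝ) (i j n : ℕ)
    (hij : ∀ v ∈ s, G.dist x v = i ∨ G.dist x v = j)
    (hn : #(s.filter fun v => G.dist x v = i) = n) :
    ∑ v ∈ s, τ (G.dist x v) = n * τ i + ((#s : ℝ) - n) * τ j := by
  have e : ∀ v ∈ s, τ (G.dist x v) = (if G.dist x v = i then τ i - τ j else 0) + τ j := by
    intro v hv
    split_ifs with hi
    · rw [hi]; ring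
    · rw [(hij v hv).resolve_left hi, zero_add]
  rw [sum_congr rfl e, sum_add_distrib, ← sum_filter, sum_const, sum_const, hn]
  simp only [nsmul_eq_mul]
  ring

namespace IsDRG
variable {a : ℕ}

/-- `c₃ + b₂ ≥ a₁ + 3` in the presence of a quadrangle: for `z` at distance three from `w`, split
the common neighbours of `w` and `p` according to their distance from `z`. -/
theorem le_c_add_b (h : IsDRG G D b c) (ha : a + 1 + b 1 = b 0) {w y p q z : V}
    (wp : G.Adj w p) (yp : G.Adj y p) (wq : G.Adj w q) (yq : G.Adj y q) (pq : p ≠ q)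
    (npq : ¬ G.Adj p q) (yz : G.Adj y z) (dwz : G.dist w z = 3) : a + 3 ≤ c 3 + b 2 := by
  have dzw : G.dist z w = 3 := by rw [SimpleGraph.dist_comm, dwz]
  have dzy : G.dist z y = 1 := SimpleGraph.dist_eq_one_iff_adj.2 yz.symm
  have dz : ∀ {r : V}, G.Adj w r → G.Adj y r → G.dist z r = 2 := by
    intro r wr yr
    have := h.step z yr
    have := h.step z wr.symm
    omega
  have dzp := dz wp yp
  have dzq := dz wq yq
  have hc := h.card_c z w
  have hb := h.card_b z p
  have hcom := h.card_common_adj wp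
  rw [dzw] at hc
  rw [dzp] at hb
  set A := univ.filter fun v => G.Adj w v ∧ G.Adj p v
  have s1 : insert p (insert q (A.filter fun v => G.dist z v = 2)) ⊆
      univ.filter fun v => G.Adj w v ∧ G.dist z v + 1 = 3 := by
    intro v hv
    simp only [A, mem_insert, mem_filter, mem_univ, true_and] at hv ⊢
    rcases hv with rfl | rfl | hv
    · exact ⟨wp, by omega⟩
    · exact ⟨wq, by omega⟩
    · exact ⟨hv.1.1, by omega⟩
  have s2 : insert w (A.filter fun v => ¬ G.dist z v = 2) ⊆
      univ.filter fun v => G.Adj p v ∧ G.dist z v = 2 + 1 := by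
    intro v hv
    simp only [A, mem_insert, mem_filter, mem_univ, true_and] at hv ⊢
    rcases hv with rfl | hv
    · exact ⟨wp.symm, by omega⟩
    · refine ⟨hv.1.2, ?_⟩
      have := h.step z hv.1.2
      have := h.step z hv.1.1.symm
      omega
  have c1 := card_le_card s1
  have c2 := card_le_card s2
  rw [card_insert_of_notMem (by simp [A, pq]), card_insert_of_notMem (by simp [A, npq])] at c1
  rw [card_insert_of_notMem (by simp [A])] at c2
  have := card_filter_add_card_filter_not (s := A) (fun v => G.dist z v = 2)
  omega

/-- A graph with a quadrangle `w, p, y, q` and without 4-claws has diameter at most four. For `D ≥ 5`,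
Terwilliger's inequality supplies the bounds needed for a line system, so `-3` is an eigenvalue and
has a radial eigenfunction `τ`. For a geodesic `w, p, y, z, u, x` the line `ℓ` through `y` and `z`
has exactly `b₂` vertices at distance three from `w`, all others being at distance two, and exactly
`c₃` vertices at distance two from `x`, all others being at distance three. The two resulting
equations for `τ 2` and `τ 3` are independent as `c₃ + b₂ > |ℓ|`, so `τ` vanishes. -/
theorem false_of_quadrangle (h : IsDRG G D b c) (hD : 5 ≤ D) (h4 : ¬ HasClaw G 4) (ha : a + 1 + b 1 = b 0)
    {w y p q : V} (dwy : G.dist w y = 2) (wp : G.Adj w p) (yp : G.Adj y p) (wq : G.Adj w q)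
    (yq : G.Adj y q) (pq : p ≠ q) (npq : ¬ G.Adj p q) : False := by
  have dpq : G.dist p q = 2 := (h.dist_eq_two_iff).2 ⟨pq, npq, y, yp.symm, yq⟩
  have ter : ∀ i, i + 2 ≤ D → a + 2 + c (i + 1) + b (i + 2) ≤ c (i + 2) + b (i + 1) := by
    intro i hi
    have t := h.terwilliger wp yp.symm yq wq.symm dwy dpq i hi
    have ha' : (a : ℝ) + 1 + b 1 = b 0 := by exact_mod_cast ha
    have : (a : ℝ) + 2 + c (i + 1) + b (i + 2) ≤ c (i + 2) + b (i + 1) := by linarith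
    exact_mod_cast this
  have t0 := ter 0 (by omega)
  have t1 := ter 1 (by omega)
  have t2 := ter 2 (by omega)
  have t3 := ter 3 (by omega)
  have hc1 : c 1 = 1 := h.2.2.2.2.1
  have bc5 := h.bc_le (i := 5) hD
  norm_num at t0 t1 t2 t3
  obtain ⟨𝓛, hS, hlt⟩ := h.exists_lineSystem h4 ha (by omega) (by omega)
  obtain ⟨f, hf0, hf⟩ := hS.exists_eigen hlt
  obtain ⟨τ, τ0, hτ⟩ := h.exists_radial (-3) f hf0 hf
  -- a geodesic `w, p, y, z, u, x`
  obtain ⟨z, yz, dwz⟩ := h.exists_succ (x := w) (y := y) (by omega)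
  obtain ⟨u, zu, dwu⟩ := h.exists_succ (x := w) (y := z) (by omega)
  obtain ⟨x, ux, dwx⟩ := h.exists_succ (x := w) (y := u) (by omega)
  rw [dwy] at dwz
  rw [dwz] at dwu
  rw [dwu] at dwx
  have hcb := h.le_c_add_b ha wp yp wq yq pq npq yz dwz
  have dwp : G.dist w p = 1 := SimpleGraph.dist_eq_one_iff_adj.2 wp
  have dwq : G.dist w q = 1 := SimpleGraph.dist_eq_one_iff_adj.2 wq
  obtain ⟨ℓ, hℓ, yℓ, zℓ⟩ := hS.cover y z yz
  -- vertices at distance three from `w` are not adjacent to `p` or `q`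
  have nadj : ∀ {r v : V}, G.dist w r = 1 → G.dist w v = 3 → r ≠ v ∧ ¬ G.Adj r v := by
    intro r v hr hv
    refine ⟨by rintro rfl; omega, fun hh => ?_⟩
    have := h.step w hh
    omega
  -- the three lines through `y` are `ℓ`, the one through `p` and the one through `q`; only `ℓ` can
  -- contain a vertex at distance three from `w`
  have inℓ : ∀ v, G.Adj y v → G.dist w v = 3 → v ∈ ℓ := by
    intro v yv dv
    obtain ⟨L, hL, yL, vL⟩ := hS.cover y v yv
    obtain ⟨P, hP, yP, pP⟩ := hS.cover y p yp
    obtain ⟨Q, hQ, yQ, qQ⟩ := hS.cover y q yq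
    by_contra hv
    have n1 : P ≠ Q := fun e => npq (hS.clique P hP p pP q (e ▸ qQ) pq)
    have sep : ∀ {R M : Finset V} {r s : V}, R ∈ 𝓛 → r ∈ R → s ∈ M → G.dist w r = 1 →
        G.dist w s = 3 → R ≠ M := fun hR hr hs d1 d3 e =>
      (nadj d1 d3).2 (hS.clique _ hR _ hr _ (e ▸ hs) (nadj d1 d3).1)
    have n2 : P ≠ ℓ := sep hP pP zℓ dwp dwz
    have n3 : P ≠ L := sep hP pP vL dwp dv
    have n4 : Q ≠ ℓ := sep hQ qQ zℓ dwq dwz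
    have n5 : Q ≠ L := sep hQ qQ vL dwq dv
    have n6 : ℓ ≠ L := by rintro rfl; exact hv vL
    have sub : ({P, Q, ℓ, L} : Finset (Finset V)) ⊆ 𝓛.filter (fun L => y ∈ L) := by
      intro M hM
      simp only [mem_insert, mem_singleton] at hM
      rcases hM with rfl | rfl | rfl | rfl <;> exact mem_filter.2 ⟨by assumption, by assumption⟩
    have := card_le_card sub
    rw [hS.three, card_insert_of_notMem (by simp [n1, n2, n3]),
      card_insert_of_notMem (by simp [n4, n5]), card_insert_of_notMem (by simp [n6]),
      card_singleton] at this
    omega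
  have adjy : ∀ v ∈ ℓ, v ≠ y → G.Adj y v := fun v hv hne => hS.clique ℓ hℓ y yℓ v hv hne.symm
  have dw : ∀ v ∈ ℓ, G.dist w v = 3 ∨ G.dist w v = 2 := by
    intro v hv
    by_cases e1 : v = y
    · right; rw [e1, dwy]
    by_cases e2 : v = z
    · left; rw [e2, dwz]
    have s1 := h.step w (adjy v hv e1)
    have s2 := h.step w (hS.clique ℓ hℓ v hv z zℓ e2)
    omega
  have cw : #(ℓ.filter fun v => G.dist w v = 3) = b 2 := by
    have hb := h.card_b w y
    rw [dwy] at hb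
    rw [← hb]
    congr 1
    ext v
    simp only [mem_filter, mem_univ, true_and]
    constructor
    · rintro ⟨hv, d⟩
      exact ⟨adjy v hv (by rintro rfl; omega), d⟩
    · rintro ⟨hv, d⟩
      exact ⟨inℓ v hv d, d⟩
  have dxz : G.dist x z ≤ 2 := by
    have s1 := h.step x ux.symm
    have s2 := h.step x zu.symm
    rw [SimpleGraph.dist_self] at s1
    omega
  have tri : ∀ v, 5 ≤ G.dist w v + G.dist x v := by
    intro v
    have := h.1.dist_triangle (u := w) (v := v) (w := x)
    rw [SimpleGraph.dist_comm (u := v)] at this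
    omega
  have dxy : G.dist x y = 3 := by
    have := tri y
    have := h.step x yz.symm
    omega
  have dx : ∀ v ∈ ℓ, G.dist x v = 2 ∨ G.dist x v = 3 := by
    intro v hv
    have t := tri v
    have hd := dw v hv
    by_cases e2 : v = z
    · subst e2; omega
    have := h.step x (hS.clique ℓ hℓ z zℓ v hv (Ne.symm e2))
    omega
  have cx : #(ℓ.filter fun v => G.dist x v = 2) = c 3 := by
    have hc := h.card_c x y
    rw [dxy] at hc
    rw [← hc]
    congr 1
    ext v
    simp only [mem_filter, mem_univ, true_and]
    constructor
    · rintro ⟨hv, d⟩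
      exact ⟨adjy v hv (by rintro rfl; omega), by omega⟩
    · rintro ⟨hv, d⟩
      refine ⟨inℓ v hv ?_, by omega⟩
      have := tri v
      have := h.step w hv
      omega
  have e1 := h.radial_line_sum hS hτ w hℓ
  have e2 := h.radial_line_sum hS hτ x hℓ
  rw [sum_two_dist ℓ w τ 3 2 (b 2) dw cw] at e1
  rw [sum_two_dist ℓ x τ 2 3 (c 3) dx cx] at e2
  have hcard : #ℓ ≤ a + 2 := by
    have hcom := h.card_common_adj yz
    have sub : ℓ ⊆ insert y (insert z (univ.filter fun v => G.Adj y v ∧ G.Adj z v)) := by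
      intro v hv
      simp only [mem_filter, mem_univ, true_and, mem_insert]
      by_cases hvy : v = y
      · exact Or.inl hvy
      by_cases hvz : v = z
      · exact Or.inr (Or.inl hvz)
      exact Or.inr (Or.inr ⟨adjy v hv hvy, hS.clique ℓ hℓ z zℓ v hv (Ne.symm hvz)⟩)
    have i1 := card_le_card sub
    have i2 := card_insert_le y (insert z (univ.filter fun v => G.Adj y v ∧ G.Adj z v))
    have i3 := card_insert_le z (univ.filter fun v => G.Adj y v ∧ G.Adj z v)
    omega
  have hpos : 0 < #ℓ := card_pos.2 ⟨y, yℓ⟩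
  have hlt' : (#ℓ : ℝ) < c 3 + b 2 := by
    have : #ℓ < c 3 + b 2 := by omega
    exact_mod_cast this
  have τ23 : τ 2 = τ 3 := by
    have : ((c 3 : ℝ) + b 2 - #ℓ) * (τ 2 - τ 3) = 0 := by linear_combination e2 - e1
    rcases mul_eq_zero.1 this with h0 | h0 <;> linarith
  have τ3 : τ 3 = 0 := by
    have hpos' : (0 : ℝ) < #ℓ := by exact_mod_cast hpos
    rw [τ23] at e1
    have : (#ℓ : ℝ) * τ 3 = 0 := by linear_combination e1
    exact (mul_eq_zero.1 this).resolve_left hpos'.ne'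
  have τ2 : τ 2 = 0 := by rw [τ23, τ3]
  have τ1 : τ 1 = 0 := by
    have r := hτ 2 (by omega)
    norm_num [τ2, τ3] at r
    exact r.resolve_left (h.c_pos (by omega) (by omega)).ne'
  have r := hτ 1 (by omega)
  norm_num [τ1, τ2, hc1] at r
  exact τ0 r

end IsDRG
end Quadrangle

/-- a DRG with `D ≥ 3`, `3 ≤ k < 3(a₁+1)`, with a 3-claw but no 4-claws,
has diameter at most 4. -/
theorem statement8 {V : Type*} [Fintype V] (G : SimpleGraph V) (D : ℕ) (b c : ℕ → ℕ)
    (hdrg : IsDRG G D b c) (hD : 3 ≤ D) (hk : 3 ≤ b 0)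
    (hk' : (b 0 : ℤ) < 3 * (((b 0 : ℤ) - b 1 - c 1) + 1))
    (hclaw3 : HasClaw G 3) (hclaw4 : ¬ HasClaw G 4) :
    D ≤ 4 := by
  by_contra hlt
  have hc1 : c 1 = 1 := hdrg.2.2.2.2.1
  have hbc := hdrg.bc_le (i := 1) (by omega)
  by_cases nq : ∀ w y p q, G.dist w y = 2 → G.Adj w p → G.Adj y p → G.Adj w q → G.Adj y q →
      p ≠ q → G.Adj p q
  · exact false_of_no_quadrangle hdrg (by omega) hclaw3 hclaw4 nq
  · push Not at nq
    obtain ⟨w, y, p, q, dwy, wp, yp, wq, yq, pq, npq⟩ := nq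
    exact hdrg.false_of_quadrangle (a := b 0 - b 1 - 1) (by omega) hclaw4 (by omega)
      dwy wp yp wq yq pq npq
end
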